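/- arXiv:1701.07912 — 7 statements merged into one kernel-verified Lean document; each statement's English description precedes it below -/
import Mathlib

section
/- Let P(x) = x^n + a_1 x^{n-1} + ... + a_n and Q(x) = b_1 x^{n-1} + b_2 x^{n-2} + ... + b_n be real polynomials (P monic of degree n, Q of degree at most n-1), and let f := P + iQ as a complex polynomial. Suppose f has n_+ roots with positive imaginary part and n_- roots with negative imaginary part, counted with multiplicity, and no real roots (so n_+ + n_- = n). Set d := n - 2·min(n_+, n_-). Then there exist real numbers μ_1 < ν_1 < μ_2 < ν_2 < ... < ν_{d-1} < μ_d such that each μ_i is a root of P and each ν_i is a root of Q. -/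
open Polynomial

/-!
Write `f x = r(x) exp(i θ(x))` on the real line, with `r` real and `θ` the sum over the nonreal
roots `z` of the continuous angles `arg (x - z)`. As `x` runs from `-∞` to `∞`, such an angle rises
by `π` if `z` lies in the upper half-plane and falls by `π` if `z` lies in the lower one, so `θ`
changes by `(n₊ - n₋) π`. Since `P = r cos θ` and `Q = r sin θ`, every crossing of an odd multiple
of `π / 2` is a root of `P` and every crossing of a multiple of `π` is a root of `Q`. When `θ` rises
overall (otherwise take `-θ`), the last crossings of successive multiples of `π / 2` are strictly
ordered.
-/

section Interlacing

variable {α β : Type*}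

/-- Points `μ₀ < ν₀ < μ₁ < ν₁ < ⋯ < ν_{d-2} < μ_{d-1}` with `μᵢ ∈ S` and `νᵢ ∈ T` exist. The
sequences are indexed by all of `ℕ`, but only their first `d` and `d - 1` terms matter. -/
def HasInterlacing [LT α] (S T : Set α) (d : ℕ) : Prop :=
  ∃ μ ν : ℕ → α,
    (∀ i, i < d → μ i ∈ S) ∧
    (∀ i, i < d - 1 → ν i ∈ T) ∧
    (∀ i, i + 1 < d → μ i < ν i ∧ ν i < μ (i + 1))

lemma HasInterlacing.mono [LT α] {S S' T T' : Set α} {d : ℕ} (h : HasInterlacing S T d)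
    (hS : S ⊆ S') (hT : T ⊆ T') : HasInterlacing S' T' d := by
  obtain ⟨μ, ν, hμ, hν, hlt⟩ := h
  exact ⟨μ, ν, fun i hi => hS (hμ i hi), fun i hi => hT (hν i hi), hlt⟩

open Filter Topology Set

variable [ConditionallyCompleteLinearOrder α] [TopologicalSpace α] [OrderTopology α]
  [DenselyOrdered α] [LinearOrder β] [TopologicalSpace β] [OrderClosedTopology β]

lemma exists_isGreatest_le_and_eq_of_tendsto {g : α → β} (hg : Continuous g) {A B w : β}
    (hA : Tendsto g atBot (𝓝 A)) (hB : Tendsto g atTop (𝓝 B)) (hw : w ∈ Ioo A B) :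
    ∃ x, IsGreatest {y | g y ≤ w} x ∧ g x = w := by
  obtain ⟨a, ha⟩ := (hA.eventually_lt_const hw.1).exists
  obtain ⟨b, hb⟩ := eventually_atTop.mp (hB.eventually_const_lt hw.2)
  have hlt : ∀ y, g y ≤ w → y < b := fun y hy => lt_of_not_ge fun hby => hy.not_gt (hb y hby)
  have hmax : IsGreatest {y | g y ≤ w} (sSup {y | g y ≤ w}) :=
    (isClosed_le hg continuous_const).isGreatest_csSup ⟨a, ha.le⟩ ⟨b, fun y hy => (hlt y hy).le⟩
  obtain ⟨y, hy, hyw⟩ := intermediate_value_Icc (hlt _ hmax.1).le hg.continuousOn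
    ⟨hmax.1, (hb b le_rfl).le⟩
  exact ⟨_, hmax, (hmax.2 hyw.le).antisymm hy.1 ▸ hyw⟩

lemma exists_strictMonoOn_rightInvOn_of_tendsto {g : α → β} (hg : Continuous g) {A B : β}
    (hA : Tendsto g atBot (𝓝 A)) (hB : Tendsto g atTop (𝓝 B)) :
    ∃ x : β → α, StrictMonoOn x (Ioo A B) ∧ RightInvOn x g (Ioo A B) := by
  choose! x hmax hx using fun w (hw : w ∈ Ioo A B) =>
    exists_isGreatest_le_and_eq_of_tendsto hg hA hB hw
  refine ⟨x, fun v hv w hw hvw => lt_of_le_of_ne ?_ fun h => hvw.ne ?_, hx⟩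
  · exact (hmax w hw).2 ((hx v hv).trans_le hvw.le)
  · rw [← hx v hv, h, hx w hw]

end Interlacing

section Angle

open Filter Topology Set
open scoped Real

lemma hasInterlacing_cos_sin_of_tendsto_natCast {θ : ℝ → ℝ} (hθ : Continuous θ) {d : ℕ}
    (hbot : Tendsto θ atBot (𝓝 (-(d * π)))) (htop : Tendsto θ atTop (𝓝 0)) :
    HasInterlacing {x | Real.cos (θ x) = 0} {x | Real.sin (θ x) = 0} d := by
  obtain ⟨x, hmono, hinv⟩ := exists_strictMonoOn_rightInvOn_of_tendsto hθ hbot htop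
  have hodd : ∀ i < d, (i - d + 1 / 2) * π ∈ Ioo (-(d * π)) 0 := fun i hi => by
    have hi' : (i : ℝ) + 1 ≤ d := mod_cast hi
    constructor <;> nlinarith [Real.pi_pos, (i.cast_nonneg : (0 : ℝ) ≤ i)]
  have heven : ∀ i < d - 1, (i - d + 1) * π ∈ Ioo (-(d * π)) 0 := fun i hi => by
    have hi' : (i : ℝ) + 2 ≤ d := mod_cast (by omega : i + 2 ≤ d)
    constructor <;> nlinarith [Real.pi_pos, (i.cast_nonneg : (0 : ℝ) ≤ i)]
  refine ⟨fun i => x ((i - d + 1 / 2) * π), fun i => x ((i - d + 1) * π), fun i hi => ?_,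
    fun i hi => ?_, fun i hi => ⟨?_, ?_⟩⟩
  · rw [mem_ofPred_eq, hinv (hodd i hi), Real.cos_eq_zero_iff]
    exact ⟨i - d, by push_cast; ring⟩
  · rw [mem_ofPred_eq, hinv (heven i hi), Real.sin_eq_zero_iff]
    exact ⟨i - d + 1, by push_cast; ring⟩
  · refine hmono (hodd i (by omega)) (heven i (by omega)) ?_
    nlinarith [Real.pi_pos]
  · refine hmono (heven i (by omega)) (hodd (i + 1) hi) ?_
    push_cast
    nlinarith [Real.pi_pos]

lemma hasInterlacing_cos_sin_of_tendsto {θ : ℝ → ℝ} (hθ : Continuous θ) {k : ℤ}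
    (hbot : Tendsto θ atBot (𝓝 (-(k * π)))) (htop : Tendsto θ atTop (𝓝 0)) :
    HasInterlacing {x | Real.cos (θ x) = 0} {x | Real.sin (θ x) = 0} k.natAbs := by
  obtain ⟨d, rfl | rfl⟩ := k.eq_nat_or_neg
  · simpa using hasInterlacing_cos_sin_of_tendsto_natCast hθ (mod_cast hbot) htop
  · have hbot' : Tendsto (fun x => -θ x) atBot (𝓝 (-(d * π))) := by simpa using hbot.neg
    have htop' : Tendsto (fun x => -θ x) atTop (𝓝 0) := by simpa using htop.neg
    simpa using hasInterlacing_cos_sin_of_tendsto_natCast hθ.neg hbot' htop'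

lemma tendsto_arg_ofReal_add_atTop (w : ℂ) :
    Tendsto (fun x : ℝ => Complex.arg (x + w)) atTop (𝓝 0) := by
  have hone : Tendsto (fun x : ℝ => 1 + w * (x⁻¹ : ℝ)) atTop (𝓝 1) := by
    simpa using ((Complex.continuous_ofReal.tendsto _).comp
      tendsto_inv_atTop_zero).const_mul w |>.const_add 1
  have harg : Tendsto (fun x : ℝ => Complex.arg (1 + w * (x⁻¹ : ℝ))) atTop (𝓝 0) := by
    simpa only [Complex.arg_one, Function.comp_def] using
      (Complex.continuousAt_arg Complex.one_mem_slitPlane).tendsto.comp hone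
  refine harg.congr' ?_
  filter_upwards [eventually_gt_atTop 0] with x hx
  have hx' : (x : ℂ) ≠ 0 := mod_cast hx.ne'
  rw [← Complex.arg_real_mul _ hx]
  congr 1
  push_cast
  field_simp

/-- The angle under which the real point `x` is seen from `z`, as a continuous function of `x`.
For real `z` the direction of `x - z` only changes sign, which is left to the real factor in
`exists_ofReal_sub_eq_mul_exp_rootAngle`, so the angle is taken to be `0`. -/
noncomputable def rootAngle (z : ℂ) (x : ℝ) : ℝ :=
  if z.im = 0 then 0 else Complex.arg (x - z)

lemma continuous_rootAngle (z : ℂ) : Continuous (rootAngle z) := by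
  unfold rootAngle
  split_ifs with hz
  · exact continuous_const
  · refine continuous_iff_continuousAt.mpr fun x => ?_
    have hmem : (x : ℂ) - z ∈ Complex.slitPlane := Or.inr (by simpa using hz)
    exact (Complex.continuousAt_arg hmem).comp (f := fun x : ℝ => (x : ℂ) - z) (by fun_prop)

lemma tendsto_rootAngle_atTop (z : ℂ) : Tendsto (rootAngle z) atTop (𝓝 0) := by
  unfold rootAngle
  split_ifs
  · exact tendsto_const_nhds
  · simpa only [sub_eq_add_neg] using tendsto_arg_ofReal_add_atTop (-z)

lemma arg_ofReal_sub_of_im_ne_zero {z : ℂ} (hz : z.im ≠ 0) (x : ℝ) :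
    Complex.arg (x - z) = Complex.arg ((-x : ℝ) + z) - ((SignType.sign z.im : ℤ) : ℝ) * π := by
  rw [show (x : ℂ) - z = -((-x : ℝ) + z) by push_cast; ring]
  obtain h | h := hz.lt_or_gt
  · rw [Complex.arg_neg_eq_arg_add_pi_of_im_neg (by simpa using h), sign_neg h]
    simp
  · rw [Complex.arg_neg_eq_arg_sub_pi_of_im_pos (by simpa using h), sign_pos h]
    simp

lemma tendsto_rootAngle_atBot (z : ℂ) :
    Tendsto (rootAngle z) atBot (𝓝 (-((SignType.sign z.im : ℤ) * π))) := by
  unfold rootAngle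
  split_ifs with hz
  · simp [hz]
  · simp only [arg_ofReal_sub_of_im_ne_zero hz]
    simpa using ((tendsto_arg_ofReal_add_atTop z).comp tendsto_neg_atBot_atTop).sub_const
      (((SignType.sign z.im : ℤ) : ℝ) * π)

lemma exists_ofReal_sub_eq_mul_exp_rootAngle (z : ℂ) (x : ℝ) :
    ∃ r : ℝ, (x : ℂ) - z = r * Complex.exp (rootAngle z x * Complex.I) := by
  unfold rootAngle
  split_ifs with hz
  · exact ⟨x - z.re, by apply Complex.ext <;> simp [hz]⟩
  · exact ⟨‖(x : ℂ) - z‖, (Complex.norm_mul_exp_arg_mul_I _).symm⟩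

/-- The sum of the angles under which `x` is seen from the points of `s`: an argument, modulo `π`,
of `∏ (x - z)` over `z ∈ s`. -/
noncomputable def totalAngle (s : Multiset ℂ) (x : ℝ) : ℝ :=
  (s.map fun z => rootAngle z x).sum

lemma continuous_totalAngle (s : Multiset ℂ) : Continuous (totalAngle s) :=
  continuous_multiset_sum s fun z _ => continuous_rootAngle z

lemma tendsto_totalAngle_atTop (s : Multiset ℂ) : Tendsto (totalAngle s) atTop (𝓝 0) := by
  simpa using! tendsto_multiset_sum s fun z _ => tendsto_rootAngle_atTop z

lemma sum_map_sign_eq_card_sub_card {ι R : Type*} [Zero R] [LinearOrder R] (s : Multiset ι)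
    (g : ι → R) :
    (s.map fun a => (SignType.sign (g a) : ℤ)).sum
      = (s.filter fun a => 0 < g a).card - (s.filter fun a => g a < 0).card := by
  induction s using Multiset.induction with
  | empty => simp
  | cons a s ih =>
    rw [Multiset.map_cons, Multiset.sum_cons, ih]
    obtain h | h | h := lt_trichotomy (g a) 0
    · simp [h, h.not_gt, sub_add_eq_sub_sub, neg_add_eq_sub, sub_right_comm]
    · simp [h]
    · simp [h, h.not_gt, add_comm (1 : ℤ), sub_add_eq_add_sub]

lemma tendsto_totalAngle_atBot (s : Multiset ℂ) :
    Tendsto (totalAngle s) atBot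
      (𝓝 (-((((s.filter fun z => 0 < z.im).card - (s.filter fun z => z.im < 0).card : ℤ) : ℝ)
        * π))) := by
  rw [← sum_map_sign_eq_card_sub_card, Int.cast_multiset_sum, Multiset.map_map,
    ← Multiset.sum_map_mul_right, ← Multiset.sum_map_neg]
  exact tendsto_multiset_sum s fun z _ => tendsto_rootAngle_atBot z

lemma exists_prod_ofReal_sub_eq_mul_exp_totalAngle (s : Multiset ℂ) (x : ℝ) :
    ∃ r : ℝ, (s.map fun z => (x : ℂ) - z).prod
      = r * Complex.exp (totalAngle s x * Complex.I) := by
  induction s using Multiset.induction with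
  | empty => exact ⟨1, by simp [totalAngle]⟩
  | cons z s ih =>
    obtain ⟨r, hr⟩ := ih
    obtain ⟨q, hq⟩ := exists_ofReal_sub_eq_mul_exp_rootAngle z x
    have hangle : totalAngle (z ::ₘ s) x = rootAngle z x + totalAngle s x := by simp [totalAngle]
    refine ⟨q * r, ?_⟩
    rw [Multiset.map_cons, Multiset.prod_cons, hr, hq, hangle]
    push_cast
    rw [add_mul, Complex.exp_add]
    ring

end Angle

section Polynomial

lemma eval_ofReal_map_add_C_I_mul_map (P Q : ℝ[X]) (x : ℝ) :
    (P.map (algebraMap ℝ ℂ) + C Complex.I * Q.map (algebraMap ℝ ℂ)).eval (x : ℂ)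
      = ⟨P.eval x, Q.eval x⟩ := by
  have heval : ∀ R : ℝ[X], (R.map (algebraMap ℝ ℂ)).eval (x : ℂ) = (R.eval x : ℝ) :=
    fun _ => eval_map_apply (algebraMap ℝ ℂ) x
  rw [eval_add, eval_mul, eval_C, heval, heval]
  apply Complex.ext <;> simp

lemma leadingCoeff_map_add_C_I_mul_map {P Q : ℝ[X]} (hdeg : Q.degree < P.degree) :
    (P.map (algebraMap ℝ ℂ) + C Complex.I * Q.map (algebraMap ℝ ℂ)).leadingCoeff
      = (P.leadingCoeff : ℂ) := by
  rw [leadingCoeff_add_of_degree_lt', leadingCoeff_map, Complex.coe_algebraMap]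
  simpa [degree_C_mul Complex.I_ne_zero] using hdeg

lemma exists_eval_eq_mul_cos_sin_totalAngle {P Q : ℝ[X]} (hdeg : Q.degree < P.degree)
    {f : ℂ[X]} (hf : f = P.map (algebraMap ℝ ℂ) + C Complex.I * Q.map (algebraMap ℝ ℂ)) (x : ℝ) :
    ∃ r : ℝ, P.eval x = r * Real.cos (totalAngle f.roots x) ∧
      Q.eval x = r * Real.sin (totalAngle f.roots x) := by
  obtain ⟨r, hr⟩ := exists_prod_ofReal_sub_eq_mul_exp_totalAngle f.roots x
  have hpolar : (⟨P.eval x, Q.eval x⟩ : ℂ) =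
      (P.leadingCoeff * r : ℝ) * Complex.exp (totalAngle f.roots x * Complex.I) := by
    rw [← eval_ofReal_map_add_C_I_mul_map, ← hf, (IsAlgClosed.splits f).eval_eq_prod_roots, hr,
      hf, leadingCoeff_map_add_C_I_mul_map hdeg]
    push_cast
    ring
  refine ⟨P.leadingCoeff * r, ?_, ?_⟩
  · simpa [Complex.re_ofReal_mul, Complex.exp_ofReal_mul_I_re] using congrArg Complex.re hpolar
  · simpa [Complex.im_ofReal_mul, Complex.exp_ofReal_mul_I_im] using congrArg Complex.im hpolar

end Polynomial

theorem hermite_biehler_extension_strict_general (P Q : ℝ[X]) (hdeg : Q.degree < P.degree)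
    (f : ℂ[X]) (hf : f = P.map (algebraMap ℝ ℂ) + C Complex.I * Q.map (algebraMap ℝ ℂ)) :
    HasInterlacing {x | P.IsRoot x} {x | Q.IsRoot x}
      ((f.roots.filter fun z => 0 < z.im).card
        - (f.roots.filter fun z => z.im < 0).card : ℤ).natAbs := by
  have hzeros := hasInterlacing_cos_sin_of_tendsto (continuous_totalAngle f.roots)
    (tendsto_totalAngle_atBot f.roots) (tendsto_totalAngle_atTop f.roots)
  refine hzeros.mono (fun x hx => ?_) (fun x hx => ?_)
  · obtain ⟨r, hcos, -⟩ := exists_eval_eq_mul_cos_sin_totalAngle hdeg hf x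
    exact hcos.trans (mul_eq_zero_of_right r hx)
  · obtain ⟨r, -, hsin⟩ := exists_eval_eq_mul_cos_sin_totalAngle hdeg hf x
    exact hsin.trans (mul_eq_zero_of_right r hx)

/-- **Extension of the Hermite–Biehler theorem, strict form** (Theorem 3.2, case `n₀ = 0`).
If `f = P + iQ` (with `P` monic real of degree `n`, `Q` real of degree at most `n-1`)
has `n₊` roots with positive imaginary part, `n₋` roots with negative imaginary part
(counted with multiplicity) and no real roots, then with `d := n - 2·min(n₊,n₋)` there
exist real numbers `μ₁ < ν₁ < μ₂ < ⋯ < ν_{d-1} < μ_d` with each `μᵢ` a root of `P` and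
each `νᵢ` a root of `Q`. -/
theorem hermite_biehler_extension_strict
    (n nplus nminus : ℕ) (P Q : Polynomial ℝ)
    (hP : P.Monic) (hPdeg : P.natDegree = n) (hQdeg : Q.degree < (n : ℕ))
    (f : Polynomial ℂ)
    (hf : f = P.map (algebraMap ℝ ℂ) + Polynomial.C Complex.I * Q.map (algebraMap ℝ ℂ))
    (hplus : (f.roots.filter (fun z => 0 < z.im)).card = nplus)
    (hminus : (f.roots.filter (fun z => z.im < 0)).card = nminus)
    (hreal : ∀ z ∈ f.roots, z.im ≠ 0)
    (hsum : nplus + nminus = n) :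
    ∃ μ ν : ℕ → ℝ,
      (∀ i, i < n - 2 * min nplus nminus → P.IsRoot (μ i)) ∧
      (∀ i, i < n - 2 * min nplus nminus - 1 → Q.IsRoot (ν i)) ∧
      (∀ i, i + 1 < n - 2 * min nplus nminus → μ i < ν i ∧ ν i < μ (i + 1)) := by
  have hdeg : Q.degree < P.degree := by rwa [degree_eq_natDegree hP.ne_zero, hPdeg]
  rw [show n - 2 * min nplus nminus = ((nplus : ℤ) - nminus).natAbs by omega, ← hplus, ← hminus]
  exact hermite_biehler_extension_strict_general P Q hdeg f hf
end

section
/- Let P(x) = x^n + a_1 x^{n-1} + ... + a_n and Q(x) = b_1 x^{n-1} + ... + b_n be real polynomials, and let f := P + iQ have n_+ roots with positive imaginary part, n_- roots with negative imaginary part, and n_0 < n real roots, counted with multiplicity; set d := n - 2·min(n_+, n_-). Suppose either (a) n_- > n_+ and P(x)/Q(x) → -∞ as x → +∞, or (b) n_- < n_+ and P(x)/Q(x) → +∞ as x → +∞. Then there exist real numbers μ_1 ≤ ν_1 ≤ μ_2 ≤ ... ≤ ν_{d-1} ≤ μ_d ≤ ν_d such that each μ_i is a root of P and each ν_i (including ν_d)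 is a root of Q, with each value occurring among the μ_i (resp. ν_i) at most its multiplicity as a root of P (resp. Q). If n_0 = 0, then moreover one can take μ_d < ν_d and all inequalities strict. -/
open Polynomial Filter

/-!
Let `f = P + iQ` first have no real roots. As `x` runs over the real line,
`ψ x = ∑ arg (x - z)`, summed over the roots `z` of `f`, is a continuous phase of `f x`. It tends
to `0` at `+∞` and to `(n₋ - n₊) π` at `-∞`, and `P / Q = cot ψ`. If `P / Q → -∞` at `+∞`, then
`ψ` is eventually negative, so when it comes down from `(n₋ - n₊) π` it crosses the level `0` in
addition to all the multiples of `π / 2` above; the odd multiples give roots of `P` and the even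
ones give roots of `Q`. The case `P / Q → +∞` is the same with `-ψ`.

In general, a real root of `f` is a common root of `P` and `Q`. Interlacing is equivalent to a pair
of inequalities between the numbers of roots below each threshold, and these inequalities survive
adding the same points to both families.
-/

open scoped Topology

section Interlacing

variable {α : Type*}

/-- The chain `μ 0 r ν 0 r μ 1 r ⋯ r μ (d - 1) r ν (d - 1)` for a relation `r`, to be taken as
`≤` or `<`. Values of `μ` and `ν` from the index `d` on are irrelevant. -/
def Alternating (r : α → α → Prop) (d : ℕ) (μ ν : ℕ → α) : Prop :=
  (∀ i < d, r (μ i) (ν i)) ∧ ∀ i, i + 1 < d → r (ν i) (μ (i + 1))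

theorem Alternating.strictMonoOn_left [Preorder α] {d : ℕ} {μ ν : ℕ → α}
    (h : Alternating (· < ·) d μ ν) : StrictMonoOn μ (Set.Iio d) :=
  strictMonoOn_of_lt_succ Set.ordConnected_Iio fun i _ hi hi' ↦ (h.1 i hi).trans (h.2 i hi')

theorem Alternating.strictMonoOn_right [Preorder α] {d : ℕ} {μ ν : ℕ → α}
    (h : Alternating (· < ·) d μ ν) : StrictMonoOn ν (Set.Iio d) :=
  strictMonoOn_of_lt_succ Set.ordConnected_Iio fun i _ _ hi' ↦ (h.2 i hi').trans (h.1 (i + 1) hi')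

theorem Alternating.le_of_lt [Preorder α] {d : ℕ} {μ ν : ℕ → α}
    (h : Alternating (· < ·) d μ ν) : Alternating (· ≤ ·) d μ ν :=
  ⟨fun i hi ↦ (h.1 i hi).le, fun i hi ↦ (h.2 i hi).le⟩

variable [LinearOrder α]

/-- Interlacing of finite multisets, the smallest element being taken from `A`, expressed by the
numbers of elements below a threshold. Unlike the chain of inequalities between the sorted
elements, this form is visibly stable under adding a common multiset. -/
structure CountInterlace (A B : Multiset α) : Prop where
  countP_le (t : α) : B.countP (· ≤ t) ≤ A.countP (· ≤ t)
  countP_le_add_one (t : α) : A.countP (· ≤ t) ≤ B.countP (· ≤ t) + 1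

theorem CountInterlace.add_left {A B : Multiset α} (h : CountInterlace A B) (T : Multiset α) :
    CountInterlace (T + A) (T + B) where
  countP_le t := by simpa only [Multiset.countP_add] using Nat.add_le_add_left (h.countP_le t) _
  countP_le_add_one t := by
    simpa only [Multiset.countP_add, add_assoc] using
      Nat.add_le_add_left (h.countP_le_add_one t) _

theorem exists_monotoneOn_map_range_eq [Nonempty α] (A : Multiset α) :
    ∃ μ : ℕ → α, MonotoneOn μ (Set.Iio A.card) ∧ (Multiset.range A.card).map μ = A := by
  inhabit α
  set l := A.sort (· ≤ ·) with hl
  have hlA : (l : Multiset α) = A := A.sort_eq _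
  have hlen : l.length = A.card := by simp [hl]
  have hsorted : l.SortedLE := (A.pairwise_sort _).sortedLE
  have hget (i : ℕ) (hi : i < A.card) : l.getD i default = l[i] := by
    rw [List.getD_eq_getElem]
  refine ⟨fun i ↦ l.getD i default, fun i hi j hj hij ↦ ?_, ?_⟩
  · simp only [hget i hi, hget j hj]
    exact hsorted.getElem_le_getElem_of_le hij
  · rw [← hlA]
    refine congrArg _ (List.ext_getElem (by simp) fun i _ hi ↦ ?_)
    simp [List.getElem?_eq_getElem hi]

theorem lt_countP_map_range_iff {d i : ℕ} {μ : ℕ → α} (hμ : MonotoneOn μ (Set.Iio d)) (hi : i < d)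
    (t : α) : i < ((Multiset.range d).map μ).countP (· ≤ t) ↔ μ i ≤ t := by
  have hcount : ((Multiset.range d).map μ).countP (· ≤ t) =
      ((Finset.range d).filter (μ · ≤ t)).card := Multiset.countP_map ..
  rw [hcount]
  constructor
  · contrapose!
    intro ht
    have hsub : (Finset.range d).filter (μ · ≤ t) ⊆ Finset.range i := fun j hj ↦ by
      rw [Finset.mem_filter, Finset.mem_range] at hj
      rw [Finset.mem_range]
      by_contra! hij
      exact (ht.trans_le (hμ hi hj.1 hij)).not_ge hj.2
    simpa using Finset.card_le_card hsub
  · intro ht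
    have hsub : Finset.range (i + 1) ⊆ (Finset.range d).filter (μ · ≤ t) := fun j hj ↦ by
      have hji : j ≤ i := Finset.mem_range_succ_iff.mp hj
      have hjd : j < d := hji.trans_lt hi
      exact Finset.mem_filter.mpr ⟨Finset.mem_range.mpr hjd, (hμ hjd hi hji).trans ht⟩
    simpa using Finset.card_le_card hsub

theorem countInterlace_map_range_iff {d : ℕ} {μ ν : ℕ → α} (hμ : MonotoneOn μ (Set.Iio d))
    (hν : MonotoneOn ν (Set.Iio d)) :
    CountInterlace ((Multiset.range d).map μ) ((Multiset.range d).map ν) ↔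
      Alternating (· ≤ ·) d μ ν := by
  have hcard (κ : ℕ → α) (t : α) : ((Multiset.range d).map κ).countP (· ≤ t) ≤ d := by
    simpa using Multiset.countP_le_card (· ≤ t) ((Multiset.range d).map κ)
  constructor
  · intro h
    refine ⟨fun i hi ↦ ?_, fun i hi ↦ ?_⟩
    · refine (lt_countP_map_range_iff hμ hi _).mp ?_
      exact ((lt_countP_map_range_iff hν hi _).mpr le_rfl).trans_le (h.countP_le _)
    · refine (lt_countP_map_range_iff hν (by lia) _).mp ?_
      have := (lt_countP_map_range_iff hμ hi _).mpr le_rfl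
      have := h.countP_le_add_one (μ (i + 1))
      lia
  · refine fun h ↦ ⟨fun t ↦ ?_, fun t ↦ ?_⟩
    · by_contra! hlt
      have hd := hlt.trans_le (hcard ν t)
      have hνt := (lt_countP_map_range_iff hν hd t).mp hlt
      exact ((lt_countP_map_range_iff hμ hd t).mpr ((h.1 _ hd).trans hνt)).false
    · by_contra! hlt
      have hd := hlt.trans_le (hcard μ t)
      have hμt := (lt_countP_map_range_iff hμ hd t).mp hlt
      exact ((lt_countP_map_range_iff hν (by lia) t).mpr ((h.2 _ hd).trans hμt)).false

theorem Alternating.exists_map_range_eq_add {d : ℕ} {μ ν : ℕ → α}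
    (h : Alternating (· < ·) d μ ν) (T : Multiset α) :
    ∃ μ' ν' : ℕ → α, Alternating (· ≤ ·) (T.card + d) μ' ν' ∧
      (Multiset.range (T.card + d)).map μ' = T + (Multiset.range d).map μ ∧
      (Multiset.range (T.card + d)).map ν' = T + (Multiset.range d).map ν := by
  have hcount := ((countInterlace_map_range_iff h.strictMonoOn_left.monotoneOn
    h.strictMonoOn_right.monotoneOn).mpr h.le_of_lt).add_left T
  have hcard (κ : ℕ → α) : (T + (Multiset.range d).map κ).card = T.card + d := by simp
  have : Nonempty α := ⟨μ 0⟩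
  obtain ⟨μ', hμ', hμ'_eq⟩ := exists_monotoneOn_map_range_eq (T + (Multiset.range d).map μ)
  obtain ⟨ν', hν', hν'_eq⟩ := exists_monotoneOn_map_range_eq (T + (Multiset.range d).map ν)
  rw [hcard] at hμ' hμ'_eq hν' hν'_eq
  exact ⟨μ', ν', (countInterlace_map_range_iff hμ' hν').mp (by rwa [hμ'_eq, hν'_eq]),
    hμ'_eq, hν'_eq⟩

end Interlacing

section RootChain

variable {R : Type*} [CommRing R]

/-- The points of an alternating chain `μ 0, ν 0, μ 1, …` of length `2 * d` are roots of `P` and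
`Q` in turn. Multiplicities are not recorded: they are automatic when `r` is `<`. -/
def RootChain (r : R → R → Prop) (d : ℕ) (P Q : R[X]) (μ ν : ℕ → R) : Prop :=
  (∀ i < d, P.IsRoot (μ i)) ∧ (∀ i < d, Q.IsRoot (ν i)) ∧ Alternating r d μ ν

variable [IsDomain R] {P : R[X]} {d : ℕ} {κ : ℕ → R}

theorem map_range_le_roots (hP : P ≠ 0) (hinj : Set.InjOn κ (Set.Iio d))
    (hroot : ∀ i < d, P.IsRoot (κ i)) : (Multiset.range d).map κ ≤ P.roots := by
  have hnodup : ((Multiset.range d).map κ).Nodup :=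
    (Multiset.nodup_range d).map_on fun _ hi _ hj ↦
      hinj (Multiset.mem_range.mp hi) (Multiset.mem_range.mp hj)
  rw [Multiset.le_iff_subset hnodup]
  intro x hx
  obtain ⟨i, hi, rfl⟩ := Multiset.mem_map.mp hx
  exact (mem_roots hP).mpr (hroot i (Multiset.mem_range.mp hi))

theorem isRoot_of_map_range_le_roots (h : (Multiset.range d).map κ ≤ P.roots) :
    ∀ i < d, P.IsRoot (κ i) := fun _ hi ↦
  isRoot_of_mem_roots <| Multiset.mem_of_le h <|
    Multiset.mem_map_of_mem κ (Multiset.mem_range.mpr hi)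

theorem card_filter_le_rootMultiplicity [DecidableEq R]
    (h : (Multiset.range d).map κ ≤ P.roots) (x : R) :
    ((Finset.range d).filter (κ · = x)).card ≤ P.rootMultiplicity x := by
  have hcount : ((Multiset.range d).map κ).count x = ((Finset.range d).filter (κ · = x)).card := by
    rw [Multiset.count_map]
    change ((Finset.range d).filter (x = κ ·)).card = _
    exact congrArg Finset.card (Finset.filter_congr fun _ _ ↦ eq_comm)
  rw [← hcount, ← count_roots]
  exact Multiset.count_le_of_le x h

theorem RootChain.exists_mul [LinearOrder R] {p q : R[X]} {μ ν : ℕ → R}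
    (h : RootChain (· < ·) d p q μ ν) (hp : p ≠ 0) (hq : q ≠ 0) (T : Multiset R) :
    ∃ μ' ν' : ℕ → R, Alternating (· ≤ ·) (T.card + d) μ' ν' ∧
      (Multiset.range (T.card + d)).map μ' ≤ ((T.map (X - C ·)).prod * p).roots ∧
      (Multiset.range (T.card + d)).map ν' ≤ ((T.map (X - C ·)).prod * q).roots := by
  obtain ⟨hμ_root, hν_root, hlt⟩ := h
  have hT : (T.map (X - C ·)).prod ≠ 0 := (monic_multisetProd_X_sub_C T).ne_zero
  obtain ⟨μ', ν', halt, hμ', hν'⟩ := hlt.exists_map_range_eq_add T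
  refine ⟨μ', ν', halt, ?_, ?_⟩
  · rw [hμ', roots_mul (mul_ne_zero hT hp), roots_multiset_prod_X_sub_C]
    exact add_le_add_right (map_range_le_roots hp hlt.strictMonoOn_left.injOn hμ_root) T
  · rw [hν', roots_mul (mul_ne_zero hT hq), roots_multiset_prod_X_sub_C]
    exact add_le_add_right (map_range_le_roots hq hlt.strictMonoOn_right.injOn hν_root) T

end RootChain

section DivergentQuotient

theorem tendsto_abs_atTop_of_tendsto_atBot_or_atTop {ι : Type*} {l : Filter ι} {u : ι → ℝ}
    (h : Tendsto u l atBot ∨ Tendsto u l atTop) : Tendsto (fun x ↦ |u x|) l atTop :=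
  h.elim tendsto_abs_atBot_atTop.comp tendsto_abs_atTop_atTop.comp

variable {P Q : ℝ[X]}

theorem right_ne_zero_of_tendsto_abs_div_atTop
    (h : Tendsto (fun x ↦ |P.eval x / Q.eval x|) atTop atTop) : Q ≠ 0 := by
  rintro rfl
  obtain ⟨x, hx⟩ := (h.eventually_gt_atTop 0).exists
  simp at hx

theorem degree_lt_of_tendsto_abs_div_atTop
    (h : Tendsto (fun x ↦ |P.eval x / Q.eval x|) atTop atTop) : Q.degree < P.degree := by
  by_contra! hdeg
  obtain ⟨c, hc⟩ := (isBigO_atTop_of_degree_le P Q hdeg).bound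
  obtain ⟨x, hbound, hlarge, hpos⟩ :=
    (hc.and ((h.eventually_gt_atTop c).and (h.eventually_gt_atTop 0))).exists
  have hQ : 0 < |Q.eval x| := abs_pos.mpr fun hQ ↦ by simp [hQ] at hpos
  rw [abs_div, lt_div_iff₀ hQ] at hlarge
  exact hlarge.not_ge hbound

theorem eval_mul_div_eval_mul_eventuallyEq {R : ℝ[X]} (hR : R ≠ 0) (p q : ℝ[X]) :
    (fun x ↦ (R * p).eval x / (R * q).eval x) =ᶠ[atTop] fun x ↦ p.eval x / q.eval x := by
  filter_upwards [eventually_atTop_not_isRoot R hR] with x hx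
  rw [eval_mul, eval_mul, mul_div_mul_left _ _ hx]

end DivergentQuotient

section Levels

theorem exists_rightInvOn_strictAntiOn {ψ : ℝ → ℝ} {a L X : ℝ} (hψ : Continuous ψ)
    (hbot : Tendsto ψ atBot (𝓝 L)) (hX : ψ X ≤ a) :
    ∃ s : ℝ → ℝ, Set.RightInvOn s ψ (Set.Ico a L) ∧ StrictAntiOn s (Set.Ico a L) := by
  have exists_le {c y : ℝ} (hy : ψ y ≤ c) (hc : c < L) : ∃ x ≤ y, ψ x = c :=
    isPreconnected_Iic.intermediate_value_Ico Set.self_mem_Iic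
      (le_principal_iff.mpr (Iic_mem_atBot y)) hψ.continuousOn hbot ⟨hy, hc⟩
  have bddBelow {c : ℝ} (hc : c < L) : BddBelow (ψ ⁻¹' {c}) := by
    obtain ⟨m, hm⟩ := eventually_atBot.mp (hbot.eventually_const_lt hc)
    exact ⟨m, fun x hx ↦ le_of_not_ge fun hxm ↦ (hm x hxm).ne' hx⟩
  have right_inv : Set.RightInvOn (fun c ↦ sInf (ψ ⁻¹' {c})) ψ (Set.Ico a L) := fun c hc ↦ by
    obtain ⟨x, -, hx⟩ := exists_le (hX.trans hc.1) hc.2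
    exact (isClosed_singleton.preimage hψ).csInf_mem ⟨x, hx⟩ (bddBelow hc.2)
  refine ⟨fun c ↦ sInf (ψ ⁻¹' {c}), right_inv, fun c hc c' hc' hlt ↦ ?_⟩
  obtain ⟨x, hx, hxc'⟩ := exists_le ((right_inv hc).le.trans hlt.le) hc'.2
  refine (csInf_le (bddBelow hc'.2) hxc').trans_lt (hx.lt_of_ne ?_)
  rintro rfl
  exact hlt.ne ((right_inv hc).symm.trans hxc')

theorem exists_neg_of_tendsto_cot_atBot {ι : Type*} {l : Filter ι} [l.NeBot] {ψ : ι → ℝ}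
    (hψ : Tendsto ψ l (𝓝 0)) (hcot : Tendsto (fun x ↦ (ψ x).cot) l atBot) : ∃ x, ψ x < 0 := by
  obtain ⟨x, hx, hneg⟩ :=
    ((hψ.eventually_lt_const Real.pi_div_two_pos).and (hcot.eventually_lt_atBot 0)).exists
  refine ⟨x, lt_of_not_ge fun hnonneg ↦ hneg.not_ge ?_⟩
  rw [Real.cot_eq_cos_div_sin]
  exact div_nonneg (Real.cos_nonneg_of_mem_Icc ⟨by linarith, hx.le⟩)
    (Real.sin_nonneg_of_nonneg_of_le_pi hnonneg (by linarith [Real.pi_pos]))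

theorem exists_alternating_of_tendsto_cot {ψ : ℝ → ℝ} {d : ℕ} (hψ : Continuous ψ)
    (htop : Tendsto ψ atTop (𝓝 0)) (hbot : Tendsto ψ atBot (𝓝 (d * Real.pi)))
    (hcot : Tendsto (fun x ↦ (ψ x).cot) atTop atBot) :
    ∃ μ ν : ℕ → ℝ, (∀ i < d, Real.cos (ψ (μ i)) = 0) ∧ (∀ i < d, Real.sin (ψ (ν i)) = 0) ∧
      Alternating (· < ·) d μ ν := by
  obtain ⟨x, hx⟩ := exists_neg_of_tendsto_cot_atBot htop hcot
  obtain ⟨s, hs, hs_anti⟩ := exists_rightInvOn_strictAntiOn hψ hbot hx.le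
  set sinLevel : ℕ → ℝ := fun i ↦ ((d - i - 1 : ℤ) : ℝ) * Real.pi with h_sinLevel
  set cosLevel : ℕ → ℝ := fun i ↦ sinLevel i + Real.pi / 2 with h_cosLevel
  have hpi := Real.pi_pos
  have sinLevel_succ (i : ℕ) : sinLevel (i + 1) = sinLevel i - Real.pi := by
    simp only [h_sinLevel]; push_cast; ring
  have sinLevel_mem {i : ℕ} (hi : i < d) : sinLevel i ∈ Set.Ico 0 (d * Real.pi) :=
    ⟨mul_nonneg (by exact_mod_cast (by lia : (0 : ℤ) ≤ d - i - 1)) hpi.le,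
      mul_lt_mul_of_pos_right (by exact_mod_cast (by lia : (d - i - 1 : ℤ) < d)) hpi⟩
  have cosLevel_mem {i : ℕ} (hi : i < d) : cosLevel i ∈ Set.Ico 0 (d * Real.pi) := by
    have hle : sinLevel i + Real.pi ≤ d * Real.pi := by
      have hi' : (0 : ℝ) ≤ i * Real.pi := by positivity
      simp only [h_sinLevel]; push_cast; linarith
    have := (sinLevel_mem hi).1
    constructor <;> simp only [h_cosLevel] <;> linarith
  refine ⟨s ∘ cosLevel, s ∘ sinLevel, fun i hi ↦ ?_, fun i hi ↦ ?_, fun i hi ↦ ?_, fun i hi ↦ ?_⟩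
  · rw [Function.comp_apply, hs (cosLevel_mem hi), Real.cos_add_pi_div_two, Real.sin_int_mul_pi,
      neg_zero]
  · rw [Function.comp_apply, hs (sinLevel_mem hi), Real.sin_int_mul_pi]
  · exact hs_anti (sinLevel_mem hi) (cosLevel_mem hi) (lt_add_of_pos_right _ (half_pos hpi))
  · refine hs_anti (cosLevel_mem hi) (sinLevel_mem (by lia)) ?_
    simp only [h_cosLevel, sinLevel_succ]
    linarith

end Levels

section Phase

theorem tendsto_arg_sub_atTop (z : ℂ) :
    Tendsto (fun x : ℝ ↦ ((x : ℂ) - z).arg) atTop (𝓝 0) := by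
  have hone : Tendsto (fun x : ℝ ↦ 1 - (x⁻¹ : ℝ) * z) atTop (𝓝 1) := by
    have hinv := (Complex.continuous_ofReal.tendsto 0).comp tendsto_inv_atTop_zero
    simpa using (hinv.mul_const z).const_sub 1
  have harg := (Complex.continuousAt_arg Complex.one_mem_slitPlane).tendsto.comp hone
  rw [Complex.arg_one] at harg
  refine harg.congr' ?_
  filter_upwards [eventually_gt_atTop 0] with x hx
  have hx' : (x : ℂ) ≠ 0 := mod_cast hx.ne'
  rw [Function.comp_apply, ← Complex.arg_real_mul _ hx]
  congr 1
  push_cast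
  field_simp

theorem tendsto_arg_sub_atBot {z : ℂ} (hz : z.im ≠ 0) :
    Tendsto (fun x : ℝ ↦ ((x : ℂ) - z).arg) atBot
      (𝓝 (if z.im < 0 then Real.pi else -Real.pi)) := by
  have hreflect := (tendsto_arg_sub_atTop (-z)).comp tendsto_neg_atBot_atTop
  have hneg (x : ℝ) : (x : ℂ) - z = -(((-x : ℝ) : ℂ) - -z) := by push_cast; ring
  split_ifs with h
  · refine ((zero_add Real.pi) ▸ hreflect.add_const Real.pi).congr fun x ↦ ?_
    rw [hneg, Complex.arg_neg_eq_arg_add_pi_of_im_neg (by simpa using h), Function.comp_apply]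
  · have hpos : 0 < z.im := (not_lt.mp h).lt_of_ne' hz
    refine ((zero_sub Real.pi) ▸ hreflect.sub_const Real.pi).congr fun x ↦ ?_
    rw [hneg, Complex.arg_neg_eq_arg_sub_pi_of_im_pos (by simpa using hpos), Function.comp_apply]

/-- The number `n₊` of roots in the open upper half-plane, with multiplicity. -/
noncomputable def numUpperRoots (f : ℂ[X]) : ℕ := (f.roots.filter (0 < ·.im)).card

/-- The number `n₋` of roots in the open lower half-plane, with multiplicity. -/
noncomputable def numLowerRoots (f : ℂ[X]) : ℕ := (f.roots.filter (·.im < 0)).card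

/-- The number `n₀` of real roots, with multiplicity. -/
noncomputable def numRealRoots (f : ℂ[X]) : ℕ := (f.roots.filter (·.im = 0)).card

theorem numUpperRoots_add_numLowerRoots_add_numRealRoots (f : ℂ[X]) :
    numUpperRoots f + numLowerRoots f + numRealRoots f = f.natDegree := by
  simp only [← IsAlgClosed.card_roots_eq_natDegree, numUpperRoots, numLowerRoots, numRealRoots,
    ← Multiset.countP_eq_card_filter]
  induction f.roots using Multiset.induction_on with
  | empty => simp
  | cons z S ih =>
    simp only [Multiset.countP_cons, Multiset.card_cons]
    rcases lt_trichotomy z.im 0 with h | h | h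
    · simp only [h, h.ne, h.not_gt, if_true, if_false]
      lia
    · simp only [h, lt_irrefl, if_true, if_false]
      lia
    · simp only [h, h.ne', h.not_gt, if_true, if_false]
      lia

/-- A continuous branch, along the real line, of the argument of `f` divided by its leading
coefficient; it is only continuous when `f` has no real roots, since `Complex.arg` jumps at the
negative reals. -/
noncomputable def phase (f : ℂ[X]) (x : ℝ) : ℝ := (f.roots.map fun z ↦ ((x : ℂ) - z).arg).sum

theorem eval_ofReal_eq_leadingCoeff_mul_exp_phase (f : ℂ[X]) (x : ℝ) :
    f.eval (x : ℂ) = f.leadingCoeff *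
      (‖(f.roots.map ((x : ℂ) - ·)).prod‖ * Complex.exp (phase f x * Complex.I)) := by
  rw [(IsAlgClosed.splits f).eval_eq_prod_roots, phase]
  congr 1
  induction f.roots using Multiset.induction_on with
  | empty => simp
  | cons z S ih =>
    simp only [Multiset.map_cons, Multiset.prod_cons, Multiset.sum_cons, norm_mul]
    push_cast
    rw [add_mul, Complex.exp_add, mul_mul_mul_comm, Complex.norm_mul_exp_arg_mul_I, ← ih]

theorem tendsto_phase_atTop (f : ℂ[X]) : Tendsto (phase f) atTop (𝓝 0) := by
  unfold phase
  simpa using tendsto_multiset_sum f.roots fun z _ ↦ tendsto_arg_sub_atTop z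

theorem sum_map_ite_im_neg {S : Multiset ℂ} (hS : ∀ z ∈ S, z.im ≠ 0) (a : ℝ) :
    (S.map fun z ↦ if z.im < 0 then a else -a).sum =
      (S.countP (·.im < 0) - S.countP (0 < ·.im)) * a := by
  induction S using Multiset.induction_on with
  | empty => simp
  | cons z S ih =>
    obtain ⟨hz, hS⟩ := Multiset.forall_mem_cons.mp hS
    simp only [Multiset.map_cons, Multiset.sum_cons, Multiset.countP_cons, ih hS]
    rcases hz.lt_or_gt with h | h
    · simp only [h, h.not_gt, if_true, if_false]
      push_cast
      ring
    · simp only [h, h.not_gt, if_true, if_false]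
      push_cast
      ring

variable {f : ℂ[X]}

theorem continuous_phase (hf : ∀ z ∈ f.roots, z.im ≠ 0) : Continuous (phase f) :=
  continuous_multiset_sum _ fun z hz ↦ continuous_iff_continuousAt.mpr fun x ↦
    (Complex.continuousAt_arg (.inr (by simpa using hf z hz))).comp (f := fun x : ℝ ↦ (x : ℂ) - z)
      (by fun_prop)

theorem tendsto_phase_atBot (hf : ∀ z ∈ f.roots, z.im ≠ 0) :
    Tendsto (phase f) atBot (𝓝 ((numLowerRoots f - numUpperRoots f) * Real.pi)) := by
  rw [numLowerRoots, numUpperRoots, ← Multiset.countP_eq_card_filter,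
    ← Multiset.countP_eq_card_filter, ← sum_map_ite_im_neg hf]
  exact tendsto_multiset_sum f.roots fun z hz ↦ tendsto_arg_sub_atBot (hf z hz)

end Phase

section OfRealImag

/-- The complex polynomial `P + iQ` with real part `P` and imaginary part `Q` on the real line. -/
noncomputable def ofRealImag (P Q : ℝ[X]) : ℂ[X] :=
  P.map (algebraMap ℝ ℂ) + C Complex.I * Q.map (algebraMap ℝ ℂ)

theorem coeff_ofRealImag (P Q : ℝ[X]) (k : ℕ) :
    (ofRealImag P Q).coeff k = ⟨P.coeff k, Q.coeff k⟩ := by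
  apply Complex.ext <;> simp [ofRealImag]

theorem eval_ofReal_ofRealImag (P Q : ℝ[X]) (x : ℝ) :
    (ofRealImag P Q).eval (x : ℂ) = ⟨P.eval x, Q.eval x⟩ := by
  have eval_map (A : ℝ[X]) : (A.map (algebraMap ℝ ℂ)).eval (x : ℂ) = A.eval x := by
    rw [eval_map_algebraMap]
    exact (ofReal_eval A x).symm
  rw [ofRealImag, eval_add, eval_mul, eval_C, eval_map, eval_map]
  apply Complex.ext <;> simp

theorem map_mul_ofRealImag (R P Q : ℝ[X]) :
    R.map (algebraMap ℝ ℂ) * ofRealImag P Q = ofRealImag (R * P) (R * Q) := by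
  simp only [ofRealImag, Polynomial.map_mul]
  ring

theorem ofRealImag_inj {P Q P' Q' : ℝ[X]} :
    ofRealImag P Q = ofRealImag P' Q' ↔ P = P' ∧ Q = Q' := by
  simp only [Polynomial.ext_iff, coeff_ofRealImag, Complex.mk.injEq, forall_and]

theorem exists_eq_ofRealImag (f : ℂ[X]) : ∃ P Q : ℝ[X], f = ofRealImag P Q := by
  induction f using Polynomial.induction_on' with
  | add f g hf hg =>
    obtain ⟨P, Q, rfl⟩ := hf
    obtain ⟨P', Q', rfl⟩ := hg
    refine ⟨P + P', Q + Q', ?_⟩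
    simp only [ofRealImag, Polynomial.map_add]
    ring
  | monomial k a =>
    refine ⟨monomial k a.re, monomial k a.im, Polynomial.ext fun j ↦ ?_⟩
    rw [coeff_ofRealImag]
    simp only [coeff_monomial]
    split_ifs <;> rfl

variable {P Q : ℝ[X]}

theorem degree_C_I_mul_map_lt (h : Q.degree < P.degree) :
    (C Complex.I * Q.map (algebraMap ℝ ℂ)).degree < (P.map (algebraMap ℝ ℂ)).degree := by
  rwa [degree_C_mul Complex.I_ne_zero, degree_map, degree_map]

theorem natDegree_ofRealImag (h : Q.degree < P.degree) :
    (ofRealImag P Q).natDegree = P.natDegree := by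
  rw [ofRealImag, natDegree_add_eq_left_of_degree_lt (degree_C_I_mul_map_lt h), natDegree_map]

theorem leadingCoeff_ofRealImag (h : Q.degree < P.degree) :
    (ofRealImag P Q).leadingCoeff = P.leadingCoeff := by
  rw [ofRealImag, leadingCoeff_add_of_degree_lt' (degree_C_I_mul_map_lt h), leadingCoeff_map,
    Complex.coe_algebraMap]

theorem ofRealImag_ne_zero (h : Q.degree < P.degree) : ofRealImag P Q ≠ 0 := by
  rw [← leadingCoeff_ne_zero, leadingCoeff_ofRealImag h, Complex.ofReal_ne_zero,
    leadingCoeff_ne_zero]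
  exact ne_zero_of_degree_gt h

theorem not_isRoot_ofReal {f : ℂ[X]} (hf0 : f ≠ 0) (hf : ∀ z ∈ f.roots, z.im ≠ 0) (x : ℝ) :
    ¬ f.IsRoot x := fun hx ↦ hf x ((mem_roots hf0).mpr hx) (Complex.ofReal_im x)

theorem exists_eval_eq_mul_cos_phase_and_mul_sin_phase (hdeg : Q.degree < P.degree) {x : ℝ}
    (hx : ¬ (ofRealImag P Q).IsRoot x) :
    ∃ r : ℝ, r ≠ 0 ∧ P.eval x = r * Real.cos (phase (ofRealImag P Q) x) ∧
      Q.eval x = r * Real.sin (phase (ofRealImag P Q) x) := by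
  set f := ofRealImag P Q
  have hpolar : f.eval (x : ℂ) = (P.leadingCoeff * ‖(f.roots.map ((x : ℂ) - ·)).prod‖ : ℝ) *
      Complex.exp (phase f x * Complex.I) := by
    rw [eval_ofReal_eq_leadingCoeff_mul_exp_phase, leadingCoeff_ofRealImag hdeg]
    push_cast
    ring
  refine ⟨P.leadingCoeff * ‖(f.roots.map ((x : ℂ) - ·)).prod‖, fun hr ↦ hx ?_, ?_, ?_⟩
  · rw [IsRoot.def, hpolar, hr, Complex.ofReal_zero, zero_mul]
  all_goals rw [eval_ofReal_ofRealImag] at hpolar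
  · simpa [Complex.exp_ofReal_mul_I_re] using congrArg Complex.re hpolar
  · simpa [Complex.exp_ofReal_mul_I_im] using congrArg Complex.im hpolar

theorem exists_common_real_factor (h : ofRealImag P Q ≠ 0) :
    ∃ (T : Multiset ℝ) (p q : ℝ[X]),
      P = (T.map (X - C ·)).prod * p ∧ Q = (T.map (X - C ·)).prod * q ∧
      T.card = numRealRoots (ofRealImag P Q) ∧
      (ofRealImag p q).roots = (ofRealImag P Q).roots.filter (·.im ≠ 0) := by
  obtain ⟨T, hT⟩ : ∃ T : Multiset ℝ, T.map (↑) = (ofRealImag P Q).roots.filter (·.im = 0) :=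
    CanLift.prf _ fun z hz ↦ (Multiset.mem_filter.mp hz).2
  have hmap : ((T.map (X - C ·)).prod).map (algebraMap ℝ ℂ) =
      (((ofRealImag P Q).roots.filter (·.im = 0)).map (X - C ·)).prod := by
    rw [← hT, Polynomial.map_multiset_prod, Multiset.map_map, Multiset.map_map]
    simp
  obtain ⟨g, hg⟩ : ((T.map (X - C ·)).prod).map (algebraMap ℝ ℂ) ∣ ofRealImag P Q := by
    rw [hmap, Multiset.prod_X_sub_C_dvd_iff_le_roots h]
    exact Multiset.filter_le _ _
  obtain ⟨p, q, rfl⟩ := exists_eq_ofRealImag g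
  obtain ⟨hP, hQ⟩ := ofRealImag_inj.mp (hg.trans (map_mul_ofRealImag _ p q))
  refine ⟨T, p, q, hP, hQ, ?_, ?_⟩
  · rw [numRealRoots, ← hT, Multiset.card_map]
  · have hroots : (ofRealImag P Q).roots =
        (ofRealImag P Q).roots.filter (·.im = 0) + (ofRealImag p q).roots := by
      conv_lhs => rw [hg, roots_mul (hg ▸ h), hmap, roots_multiset_prod_X_sub_C]
    exact (add_left_cancel ((Multiset.filter_add_not (fun z : ℂ ↦ z.im = 0) _).trans hroots)).symm

end OfRealImag

section HermiteBiehler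

theorem exists_rootChain_of_no_real_roots {p q : ℝ[X]} {d : ℕ}
    (hreal : ∀ z ∈ (ofRealImag p q).roots, z.im ≠ 0)
    (hlim : (numUpperRoots (ofRealImag p q) + d = numLowerRoots (ofRealImag p q) ∧
        Tendsto (fun x ↦ p.eval x / q.eval x) atTop atBot) ∨
      (numLowerRoots (ofRealImag p q) + d = numUpperRoots (ofRealImag p q) ∧
        Tendsto (fun x ↦ p.eval x / q.eval x) atTop atTop)) :
    ∃ μ ν : ℕ → ℝ, RootChain (· < ·) d p q μ ν := by
  have hdeg : q.degree < p.degree := degree_lt_of_tendsto_abs_div_atTop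
    (tendsto_abs_atTop_of_tendsto_atBot_or_atTop (hlim.imp And.right And.right))
  set f := ofRealImag p q
  choose r hr hp hq using fun x ↦
    exists_eval_eq_mul_cos_phase_and_mul_sin_phase hdeg
      (not_isRoot_ofReal (ofRealImag_ne_zero hdeg) hreal x)
  have hcot (x : ℝ) : p.eval x / q.eval x = (phase f x).cot := by
    rw [hp, hq, mul_div_mul_left _ _ (hr x), Real.cot_eq_cos_div_sin]
  have p_root {x : ℝ} (hx : Real.cos (phase f x) = 0) : p.IsRoot x := by
    rw [IsRoot.def, hp, hx, mul_zero]
  have q_root {x : ℝ} (hx : Real.sin (phase f x) = 0) : q.IsRoot x := by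
    rw [IsRoot.def, hq, hx, mul_zero]
  have hcont := continuous_phase hreal
  have htop := tendsto_phase_atTop f
  have hbot := tendsto_phase_atBot hreal
  rcases hlim with ⟨hd, h⟩ | ⟨hd, h⟩
  · rw [← hd, Nat.cast_add, add_sub_cancel_left] at hbot
    obtain ⟨μ, ν, hμ, hν, halt⟩ :=
      exists_alternating_of_tendsto_cot hcont htop hbot (h.congr hcot)
    exact ⟨μ, ν, fun i hi ↦ p_root (hμ i hi), fun i hi ↦ q_root (hν i hi), halt⟩
  · have hbot' : Tendsto (fun x ↦ -phase f x) atBot (𝓝 (d * Real.pi)) := by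
      rw [← hd, Nat.cast_add, sub_add_cancel_left, neg_mul] at hbot
      simpa using hbot.neg
    have hcot' : Tendsto (fun x ↦ (-phase f x).cot) atTop atBot :=
      (tendsto_neg_atTop_atBot.comp h).congr fun x ↦ by
        rw [Function.comp_apply, hcot, Real.cot_eq_cos_div_sin, Real.cot_eq_cos_div_sin,
          Real.cos_neg, Real.sin_neg, div_neg]
    obtain ⟨μ, ν, hμ, hν, halt⟩ :=
      exists_alternating_of_tendsto_cot (ψ := fun x ↦ -phase f x) hcont.neg
        (by simpa only [neg_zero] using htop.neg) hbot' hcot'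
    exact ⟨μ, ν, fun i hi ↦ p_root (by simpa using hμ i hi),
      fun i hi ↦ q_root (by simpa using hν i hi), halt⟩

theorem numUpperRoots_eq_of_roots_eq_filter {f g : ℂ[X]}
    (h : g.roots = f.roots.filter (·.im ≠ 0)) : numUpperRoots g = numUpperRoots f := by
  rw [numUpperRoots, numUpperRoots, h, Multiset.filter_filter]
  exact congrArg _ (Multiset.filter_congr fun _ _ ↦ and_iff_left_of_imp fun hz ↦ hz.ne')

theorem numLowerRoots_eq_of_roots_eq_filter {f g : ℂ[X]}
    (h : g.roots = f.roots.filter (·.im ≠ 0)) : numLowerRoots g = numLowerRoots f := by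
  rw [numLowerRoots, numLowerRoots, h, Multiset.filter_filter]
  exact congrArg _ (Multiset.filter_congr fun _ _ ↦ and_iff_left_of_imp fun hz ↦ hz.ne)

theorem exists_factor_rootChain {P Q : ℝ[X]}
    (hlim : (numUpperRoots (ofRealImag P Q) < numLowerRoots (ofRealImag P Q) ∧
        Tendsto (fun x ↦ P.eval x / Q.eval x) atTop atBot) ∨
      (numLowerRoots (ofRealImag P Q) < numUpperRoots (ofRealImag P Q) ∧
        Tendsto (fun x ↦ P.eval x / Q.eval x) atTop atTop)) :
    ∃ (T : Multiset ℝ) (p q : ℝ[X]) (d : ℕ) (μ ν : ℕ → ℝ),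
      P = (T.map (X - C ·)).prod * p ∧ Q = (T.map (X - C ·)).prod * q ∧
      T.card = numRealRoots (ofRealImag P Q) ∧
      P.natDegree - 2 * min (numUpperRoots (ofRealImag P Q)) (numLowerRoots (ofRealImag P Q)) =
        T.card + d ∧
      RootChain (· < ·) d p q μ ν := by
  have hdeg : Q.degree < P.degree := degree_lt_of_tendsto_abs_div_atTop
    (tendsto_abs_atTop_of_tendsto_atBot_or_atTop (hlim.imp And.right And.right))
  have hcard := numUpperRoots_add_numLowerRoots_add_numRealRoots (ofRealImag P Q)
  obtain ⟨T, p, q, hP, hQ, hT, hroots⟩ := exists_common_real_factor (ofRealImag_ne_zero hdeg)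
  have hquot : (fun x ↦ P.eval x / Q.eval x) =ᶠ[atTop] fun x ↦ p.eval x / q.eval x :=
    hP ▸ hQ ▸ eval_mul_div_eval_mul_eventuallyEq (monic_multisetProd_X_sub_C T).ne_zero p q
  have hreal : ∀ z ∈ (ofRealImag p q).roots, z.im ≠ 0 := by
    rw [hroots]
    exact fun z hz ↦ (Multiset.mem_filter.mp hz).2
  rw [natDegree_ofRealImag hdeg, ← hT, ← numUpperRoots_eq_of_roots_eq_filter hroots,
    ← numLowerRoots_eq_of_roots_eq_filter hroots] at hcard
  rw [← numUpperRoots_eq_of_roots_eq_filter hroots,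
    ← numLowerRoots_eq_of_roots_eq_filter hroots] at hlim ⊢
  rcases hlim with ⟨hlt, h⟩ | ⟨hlt, h⟩
  · obtain ⟨d, hd⟩ := Nat.exists_eq_add_of_le hlt.le
    obtain ⟨μ, ν, hchain⟩ :=
      exists_rootChain_of_no_real_roots hreal (.inl ⟨hd.symm, h.congr' hquot⟩)
    exact ⟨T, p, q, d, μ, ν, hP, hQ, hT, by lia, hchain⟩
  · obtain ⟨d, hd⟩ := Nat.exists_eq_add_of_le hlt.le
    obtain ⟨μ, ν, hchain⟩ :=
      exists_rootChain_of_no_real_roots hreal (.inr ⟨hd.symm, h.congr' hquot⟩)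
    exact ⟨T, p, q, d, μ, ν, hP, hQ, hT, by lia, hchain⟩

theorem extra_root_at_top_general {n nplus nminus nzero : ℕ} {P Q : ℝ[X]} (hn : P.natDegree = n)
    (hplus : numUpperRoots (ofRealImag P Q) = nplus)
    (hminus : numLowerRoots (ofRealImag P Q) = nminus)
    (hzero : numRealRoots (ofRealImag P Q) = nzero)
    (hlim : (nplus < nminus ∧ Tendsto (fun x ↦ P.eval x / Q.eval x) atTop atBot) ∨
      (nminus < nplus ∧ Tendsto (fun x ↦ P.eval x / Q.eval x) atTop atTop)) :
    (∃ μ ν : ℕ → ℝ, RootChain (· ≤ ·) (n - 2 * min nplus nminus) P Q μ ν ∧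
      (∀ x, ((Finset.range (n - 2 * min nplus nminus)).filter (μ · = x)).card ≤
        P.rootMultiplicity x) ∧
      ∀ x, ((Finset.range (n - 2 * min nplus nminus)).filter (ν · = x)).card ≤
        Q.rootMultiplicity x) ∧
    (nzero = 0 → ∃ μ ν : ℕ → ℝ, RootChain (· < ·) (n - 2 * min nplus nminus) P Q μ ν) := by
  subst hn hplus hminus hzero
  have habs := tendsto_abs_atTop_of_tendsto_atBot_or_atTop (hlim.imp And.right And.right)
  have hP0 : P ≠ 0 := ne_zero_of_degree_gt (degree_lt_of_tendsto_abs_div_atTop habs)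
  have hQ0 : Q ≠ 0 := right_ne_zero_of_tendsto_abs_div_atTop habs
  obtain ⟨T, p, q, d, μ, ν, hP, hQ, hT, hd, hchain⟩ := exists_factor_rootChain hlim
  rw [hd]
  refine ⟨?_, fun h0 ↦ ⟨μ, ν, ?_⟩⟩
  · obtain ⟨μ', ν', halt, hμ', hν'⟩ :=
      hchain.exists_mul (right_ne_zero_of_mul (hP ▸ hP0)) (right_ne_zero_of_mul (hQ ▸ hQ0)) T
    rw [← hP] at hμ'
    rw [← hQ] at hν'
    exact ⟨μ', ν', ⟨isRoot_of_map_range_le_roots hμ', isRoot_of_map_range_le_roots hν', halt⟩,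
      card_filter_le_rootMultiplicity hμ', card_filter_le_rootMultiplicity hν'⟩
  · obtain rfl : T = 0 := Multiset.card_eq_zero.mp (hT.trans h0)
    simpa [hP, hQ] using hchain

end HermiteBiehler

/-- **Observation 3.6(ii)**.  Under the hypotheses of the extended Hermite–Biehler theorem
for `f = P + iQ`, if `n₋ > n₊` and `P(x)/Q(x) → -∞` as `x → +∞`, or `n₋ < n₊` and
`P(x)/Q(x) → +∞` as `x → +∞`, then there is an additional real root `ν_d ≥ μ_d` of `Q`,
giving a chain `μ₁ ≤ ν₁ ≤ μ₂ ≤ ⋯ ≤ ν_{d-1} ≤ μ_d ≤ ν_d`; if `n₀ = 0` all inequalities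
can be taken strict. -/
theorem extra_root_at_top
    (n nplus nminus nzero : ℕ) (P Q : Polynomial ℝ)
    (hP : P.Monic) (hPdeg : P.natDegree = n) (hQdeg : Q.degree < (n : ℕ))
    (f : Polynomial ℂ)
    (hf : f = P.map (algebraMap ℝ ℂ) + Polynomial.C Complex.I * Q.map (algebraMap ℝ ℂ))
    (hplus : (f.roots.filter (fun z => 0 < z.im)).card = nplus)
    (hminus : (f.roots.filter (fun z => z.im < 0)).card = nminus)
    (hzero : (f.roots.filter (fun z => z.im = 0)).card = nzero)
    (hsum : nplus + nminus + nzero = n)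
    (hn0 : nzero < n)
    (hlim : (nplus < nminus ∧
        Tendsto (fun x : ℝ => P.eval x / Q.eval x) atTop atBot) ∨
      (nminus < nplus ∧
        Tendsto (fun x : ℝ => P.eval x / Q.eval x) atTop atTop)) :
    (∃ μ ν : ℕ → ℝ,
      (∀ i, i < n - 2 * min nplus nminus → P.IsRoot (μ i)) ∧
      (∀ i, i < n - 2 * min nplus nminus → Q.IsRoot (ν i)) ∧
      (∀ i, i < n - 2 * min nplus nminus → μ i ≤ ν i) ∧
      (∀ i, i + 1 < n - 2 * min nplus nminus → ν i ≤ μ (i + 1)) ∧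
      (∀ x : ℝ,
        ((Finset.range (n - 2 * min nplus nminus)).filter (fun i => μ i = x)).card ≤
          P.rootMultiplicity x) ∧
      (∀ x : ℝ,
        ((Finset.range (n - 2 * min nplus nminus)).filter (fun i => ν i = x)).card ≤
          Q.rootMultiplicity x)) ∧
    (nzero = 0 →
      ∃ μ ν : ℕ → ℝ,
        (∀ i, i < n - 2 * min nplus nminus → P.IsRoot (μ i)) ∧
        (∀ i, i < n - 2 * min nplus nminus → Q.IsRoot (ν i)) ∧
        (∀ i, i < n - 2 * min nplus nminus → μ i < ν i) ∧
        (∀ i, i + 1 < n - 2 * min nplus nminus → ν i < μ (i + 1))) := by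
  subst hf
  simpa only [RootChain, Alternating, and_assoc] using
    extra_root_at_top_general hPdeg hplus hminus hzero hlim
end

section
/- Let g(x) = ∏_{j=1}^n (x - x_j) = x^n + b_1 x^{n-1} + b_2 x^{n-2} + ... + b_n be a real polynomial, where x_1, ..., x_n are complex numbers with Re(x_j) ≤ 0 for all j, and set b_0 := 1. Let 1 ≤ k < l ≤ n-1 with k even and l odd. Then b_k b_l = b_{k-1} b_{l+1} if and only if either (i) zero is a root of g of multiplicity at least n - l + 1, or (ii) Re(x_j) = 0 for all j. -/
open Polynomial

/-!
Write `a_i` for the coefficient of `X ^ i` in `g`. After cancelling the power of `X` dividing `g`,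
the polynomial is a product of the real minimal polynomials of its nonzero roots: factors `X + a`
with `a > 0` and `X ^ 2 + p X + q` with `p ≥ 0`, `q > 0`. Multiplying by such a factor changes
`a_i a_j - a_{i+1} a_{j-1}` into a combination with nonnegative weights of the same expressions and
of the expressions `a_i a_j - a_{i+2} a_{j-2}` with `i`, `j` of equal parity, which the former
control. Strictness for `i` of the parity of the degree therefore survives multiplication, once the
product is started with a factor having a root off the imaginary axis. If there is no such root,
then `z ↦ -z` is complex conjugation on the roots, so `g` is even or odd.
-/

section IntCoeff

variable {R : Type*} [Semiring R]

/-- The coefficient of `X ^ i` in `f` for an integer exponent `i`, so that shifting the index below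
zero gives `0` rather than the constant coefficient. -/
def intCoeff (f : R[X]) : ℤ → R
  | .ofNat n => f.coeff n
  | .negSucc _ => 0

theorem intCoeff_natCast (f : R[X]) (n : ℕ) : intCoeff f n = f.coeff n := rfl

theorem intCoeff_of_neg (f : R[X]) {i : ℤ} (hi : i < 0) : intCoeff f i = 0 := by
  obtain ⟨n, rfl⟩ := Int.eq_negSucc_of_lt_zero hi
  rfl

theorem intCoeff_of_natDegree_lt {f : R[X]} {i : ℤ} (hi : f.natDegree < i) : intCoeff f i = 0 := by
  lift i to ℕ using by lia
  exact coeff_eq_zero_of_natDegree_lt (by lia)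

theorem intCoeff_X_pow_mul (f : R[X]) (m : ℕ) (i : ℤ) :
    intCoeff (X ^ m * f) i = intCoeff f (i - m) := by
  rcases lt_or_ge i 0 with hi | hi
  · rw [intCoeff_of_neg _ hi, intCoeff_of_neg _ (by lia)]
  lift i to ℕ using hi
  rw [intCoeff_natCast, coeff_X_pow_mul']
  split_ifs with hmi
  · rw [← Nat.cast_sub hmi, intCoeff_natCast]
  · rw [intCoeff_of_neg _ (by lia)]

theorem intCoeff_X_mul (f : R[X]) (i : ℤ) : intCoeff (X * f) i = intCoeff f (i - 1) := by
  simpa using intCoeff_X_pow_mul f 1 i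

theorem intCoeff_add (f g : R[X]) (i : ℤ) : intCoeff (f + g) i = intCoeff f i + intCoeff g i := by
  cases i <;> simp [intCoeff]

theorem intCoeff_C_mul (a : R) (f : R[X]) (i : ℤ) : intCoeff (C a * f) i = a * intCoeff f i := by
  cases i <;> simp [intCoeff]

theorem intCoeff_X_add_C_mul (a : R) (f : R[X]) (i : ℤ) :
    intCoeff ((X + C a) * f) i = intCoeff f (i - 1) + a * intCoeff f i := by
  rw [add_mul, intCoeff_add, intCoeff_C_mul, intCoeff_X_mul]

theorem intCoeff_quadratic_mul (p q : R) (f : R[X]) (i : ℤ) :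
    intCoeff ((X ^ 2 + C p * X + C q) * f) i =
      intCoeff f (i - 2) + p * intCoeff f (i - 1) + q * intCoeff f i := by
  rw [add_mul, add_mul, mul_assoc, intCoeff_add, intCoeff_add, intCoeff_C_mul, intCoeff_C_mul,
    intCoeff_X_mul, intCoeff_X_pow_mul, Nat.cast_ofNat]

end IntCoeff

theorem intCoeff_eq_zero_of_lt_rootMultiplicity {R : Type*} [CommRing R] {g : R[X]} {i : ℤ}
    (hi : i < g.rootMultiplicity 0) : intCoeff g i = 0 := by
  obtain ⟨f, hf⟩ := pow_rootMultiplicity_dvd g 0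
  rw [C_0, sub_zero] at hf
  rw [hf, intCoeff_X_pow_mul, intCoeff_of_neg _ (by lia)]

section NewtonMinor

variable {R : Type*}

/-- The `2 × 2` Toeplitz minor `a_i a_j - a_{i+s} a_{j-s}` of the coefficients `a_i` of `f`; the
Newton-like inequalities compare the two products for `s = 1`. -/
def newtonMinor [Ring R] (f : R[X]) (s i j : ℤ) : R :=
  intCoeff f i * intCoeff f j - intCoeff f (i + s) * intCoeff f (j - s)

theorem newtonMinor_of_index_lt [Ring R] {f : R[X]} {s i j : ℤ} (hj : j < s) :
    newtonMinor f s i j = intCoeff f i * intCoeff f j := by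
  rw [newtonMinor, intCoeff_of_neg f (by lia : j - s < 0), mul_zero, sub_zero]

theorem newtonMinor_of_natDegree_lt [Ring R] {f : R[X]} {s i j : ℤ} (hi : f.natDegree < i + s) :
    newtonMinor f s i j = intCoeff f i * intCoeff f j := by
  rw [newtonMinor, intCoeff_of_natDegree_lt hi, zero_mul, sub_zero]

theorem newtonMinor_X_pow_mul [Ring R] (f : R[X]) (m : ℕ) (s i j : ℤ) :
    newtonMinor (X ^ m * f) s i j = newtonMinor f s (i - m) (j - m) := by
  simp only [newtonMinor, intCoeff_X_pow_mul, sub_add_eq_add_sub, sub_right_comm]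

theorem newtonMinor_X_add_C_mul [CommRing R] (a : R) (f : R[X]) (i j : ℤ) :
    newtonMinor ((X + C a) * f) 1 i j =
      newtonMinor f 1 (i - 1) (j - 1) + a * newtonMinor f 2 (i - 1) j +
        a ^ 2 * newtonMinor f 1 i j := by
  simp only [newtonMinor, intCoeff_X_add_C_mul]
  ring_nf

theorem newtonMinor_quadratic_mul [CommRing R] (p q : R) (f : R[X]) (i j : ℤ) :
    newtonMinor ((X ^ 2 + C p * X + C q) * f) 1 i j =
      newtonMinor f 1 (i - 2) (j - 2) + p * newtonMinor f 2 (i - 2) (j - 1) +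
        p * q * newtonMinor f 2 (i - 1) j + p ^ 2 * newtonMinor f 1 (i - 1) (j - 1) +
        q * newtonMinor f 1 (i - 2) j + q * newtonMinor f 1 i (j - 2) +
        q ^ 2 * newtonMinor f 1 i j := by
  simp only [newtonMinor, intCoeff_quadratic_mul]
  ring_nf

end NewtonMinor

section StrictNewtonLike

variable {R : Type*} [CommRing R] [LinearOrder R]

/-- Positivity of all coefficients up to the degree, together with the Newton-like inequalities
`a_{i+1} a_{j-1} ≤ a_i a_j` for `j < i` of different parity, strict when `i` has the parity of the
degree. -/
structure StrictNewtonLike (f : R[X]) : Prop where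
  intCoeff_pos : ∀ ⦃i : ℤ⦄, 0 ≤ i → i ≤ f.natDegree → 0 < intCoeff f i
  minor_nonneg : ∀ ⦃i j : ℤ⦄, j < i → Odd (i - j) → 0 ≤ newtonMinor f 1 i j
  minor_pos : ∀ ⦃i j : ℤ⦄, 0 ≤ j → j < i → i ≤ f.natDegree → Odd (i - j) →
    Even (f.natDegree - i) → 0 < newtonMinor f 1 i j

namespace StrictNewtonLike

variable {f : R[X]} {p q a : R} {i j : ℤ}

theorem ne_zero (hf : StrictNewtonLike f) : f ≠ 0 := by
  rintro rfl
  simpa [intCoeff] using hf.intCoeff_pos le_rfl (Nat.cast_nonneg _)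

theorem intCoeff_nonneg (hf : StrictNewtonLike f) (i : ℤ) : 0 ≤ intCoeff f i := by
  rcases lt_or_ge i 0 with hneg | hnonneg
  · exact (intCoeff_of_neg f hneg).ge
  rcases lt_or_ge (f.natDegree : ℤ) i with hlt | hle
  · exact (intCoeff_of_natDegree_lt hlt).ge
  · exact (hf.intCoeff_pos hnonneg hle).le

theorem minor_nonneg_of_le_add_one (hf : StrictNewtonLike f) (hji : j ≤ i + 1)
    (hodd : Odd (i - j)) : 0 ≤ newtonMinor f 1 i j := by
  rcases lt_or_ge i j with hij | hij
  · obtain rfl : j = i + 1 := by lia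
    simp [newtonMinor, mul_comm]
  · exact hf.minor_nonneg (by grind) hodd

variable [IsStrictOrderedRing R]

theorem one : StrictNewtonLike (1 : R[X]) where
  intCoeff_pos i h0 hi := by
    obtain rfl : i = 0 := by
      rw [natDegree_one] at hi
      lia
    simp [intCoeff]
  minor_nonneg i j _ hodd := by
    have hzero : ∀ k : ℤ, k ≠ 0 → intCoeff (1 : R[X]) k = 0 := by
      rintro (k | k) hk
      · exact coeff_one.trans (if_neg (by lia))
      · rfl
    by_cases hi : i = 0 <;> by_cases hi' : i + 1 = 0 <;>
      grind [newtonMinor]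
  minor_pos i j h0 hji hi := by
    rw [natDegree_one] at hi
    lia

/-- Multiply the Newton-like inequalities at `(i, j - 1)` and `(i + 1, j)` and cancel the common
positive factor `a_{i+1} a_{j-1}`. -/
theorem minor_two_nonneg (hf : StrictNewtonLike f) (hji : j ≤ i) (heven : Even (i - j)) :
    0 ≤ newtonMinor f 2 i j := by
  have hnonneg := mul_nonneg (hf.intCoeff_nonneg i) (hf.intCoeff_nonneg j)
  rcases lt_or_ge j 2 with hj | hj
  · rwa [newtonMinor_of_index_lt hj]
  rcases lt_or_ge (f.natDegree : ℤ) (i + 2) with hi | hi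
  · rwa [newtonMinor_of_natDegree_lt hi]
  have hlow : intCoeff f (i + 1) * intCoeff f (j - 2) ≤ intCoeff f i * intCoeff f (j - 1) := by
    have := sub_nonneg.1 (hf.minor_nonneg (by lia : j - 1 < i) (by grind))
    rwa [sub_sub, one_add_one_eq_two] at this
  have hhigh : intCoeff f (i + 2) * intCoeff f (j - 1) ≤ intCoeff f (i + 1) * intCoeff f j := by
    have := sub_nonneg.1 (hf.minor_nonneg (by lia : j < i + 1) (by grind))
    rwa [add_assoc, one_add_one_eq_two] at this
  have hpos : 0 < intCoeff f (i + 1) * intCoeff f (j - 1) :=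
    mul_pos (hf.intCoeff_pos (by lia) (by lia)) (hf.intCoeff_pos (by lia) (by lia))
  refine sub_nonneg.2 (le_of_mul_le_mul_left ?_ hpos)
  calc intCoeff f (i + 1) * intCoeff f (j - 1) * (intCoeff f (i + 2) * intCoeff f (j - 2))
      = intCoeff f (i + 1) * intCoeff f (j - 2) * (intCoeff f (i + 2) * intCoeff f (j - 1)) := by
        ring
    _ ≤ intCoeff f i * intCoeff f (j - 1) * (intCoeff f (i + 1) * intCoeff f j) :=
        mul_le_mul hlow hhigh (mul_nonneg (hf.intCoeff_nonneg _) (hf.intCoeff_nonneg _))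
          (mul_nonneg (hf.intCoeff_nonneg _) (hf.intCoeff_nonneg _))
    _ = intCoeff f (i + 1) * intCoeff f (j - 1) * (intCoeff f i * intCoeff f j) := by ring

theorem X_add_C_mul (hf : StrictNewtonLike f) (ha : 0 < a) : StrictNewtonLike ((X + C a) * f) := by
  have : Nontrivial R := nontrivial_of_ne _ _ ha.ne
  have hdeg : (((X + C a) * f).natDegree : ℤ) = f.natDegree + 1 := by
    rw [(monic_X_add_C a).natDegree_mul' hf.ne_zero, natDegree_X_add_C, add_comm, Nat.cast_succ]
  refine ⟨fun i h0 hi ↦ ?_, fun i j hji hodd ↦ ?_, fun i j hj hji hi hodd heven ↦ ?_⟩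
  · rw [hdeg] at hi
    rw [intCoeff_X_add_C_mul]
    rcases h0.eq_or_lt with rfl | h0
    · exact add_pos_of_nonneg_of_pos (hf.intCoeff_nonneg _)
        (mul_pos ha (hf.intCoeff_pos le_rfl (by lia)))
    · exact add_pos_of_pos_of_nonneg (hf.intCoeff_pos (by lia) (by lia))
        (mul_nonneg ha.le (hf.intCoeff_nonneg _))
  · rw [newtonMinor_X_add_C_mul]
    have h₁ := hf.minor_nonneg (by lia : j - 1 < i - 1) (by grind)
    have h₂ := hf.minor_two_nonneg (by lia : j ≤ i - 1) (by grind)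
    have h₃ := hf.minor_nonneg hji hodd
    positivity
  · rw [hdeg] at hi heven
    rw [newtonMinor_X_add_C_mul]
    have h₁ := hf.minor_nonneg (by lia : j - 1 < i - 1) (by grind)
    have h₂ := hf.minor_two_nonneg (by lia : j ≤ i - 1) (by grind)
    have h₃ := hf.minor_nonneg hji hodd
    rcases hj.eq_or_lt with rfl | hj
    · have h₂ : 0 < newtonMinor f 2 (i - 1) 0 := by
        rw [newtonMinor_of_index_lt two_pos]
        exact mul_pos (hf.intCoeff_pos (by lia) (by lia)) (hf.intCoeff_pos le_rfl (by lia))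
      positivity
    · have h₁ := hf.minor_pos (by lia : 0 ≤ j - 1) (by lia : j - 1 < i - 1) (by lia) (by grind)
        (by grind)
      positivity

theorem intCoeff_quadratic_mul_pos (hf : StrictNewtonLike f) (hp : 0 ≤ p) (hq : 0 < q)
    (hpf : 0 < p ∨ 0 < f.natDegree) (h0 : 0 ≤ i) (hi : i ≤ f.natDegree + 2) :
    0 < intCoeff ((X ^ 2 + C p * X + C q) * f) i := by
  rw [intCoeff_quadratic_mul]
  have h₀ := hf.intCoeff_nonneg i
  have h₁ := hf.intCoeff_nonneg (i - 1)
  have h₂ := hf.intCoeff_nonneg (i - 2)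
  rcases le_or_gt i f.natDegree with hle | hlt
  · have h₀ := hf.intCoeff_pos h0 hle
    positivity
  rcases le_or_gt 2 i with h2 | h2
  · have h₂ := hf.intCoeff_pos (by lia : 0 ≤ i - 2) (by lia)
    positivity
  · have hp : 0 < p := hpf.resolve_right (by lia)
    have h₁ := hf.intCoeff_pos (by lia : 0 ≤ i - 1) (by lia)
    positivity

theorem sq_mul_minor_le_minor_quadratic_mul (hf : StrictNewtonLike f) (hp : 0 ≤ p) (hq : 0 ≤ q)
    (hji : j < i) (hodd : Odd (i - j)) :
    q ^ 2 * newtonMinor f 1 i j ≤ newtonMinor ((X ^ 2 + C p * X + C q) * f) 1 i j := by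
  rw [newtonMinor_quadratic_mul]
  have h₁ := hf.minor_nonneg (by lia : j - 2 < i - 2) (by grind)
  have h₂ := hf.minor_two_nonneg (by lia : j - 1 ≤ i - 2) (by grind)
  have h₃ := hf.minor_two_nonneg (by lia : j ≤ i - 1) (by grind)
  have h₄ := hf.minor_nonneg (by lia : j - 1 < i - 1) (by grind)
  have h₅ := hf.minor_nonneg_of_le_add_one (by grind : j ≤ i - 2 + 1) (by grind)
  have h₆ := hf.minor_nonneg (by lia : j - 2 < i) (by grind)
  exact le_add_of_nonneg_left (by positivity)

theorem quadratic_mul (hf : StrictNewtonLike f) (hp : 0 ≤ p) (hq : 0 < q)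
    (hpf : 0 < p ∨ 0 < f.natDegree) : StrictNewtonLike ((X ^ 2 + C p * X + C q) * f) := by
  have : Nontrivial R := nontrivial_of_ne _ _ hq.ne
  have hdeg : (((X ^ 2 + C p * X + C q) * f).natDegree : ℤ) = f.natDegree + 2 := by
    have hmonic : (X ^ 2 + C p * X + C q).Monic := by monicity!
    have hdeg₂ : (X ^ 2 + C p * X + C q).natDegree = 2 := by compute_degree!
    rw [hmonic.natDegree_mul' hf.ne_zero, hdeg₂, add_comm, Nat.cast_add, Nat.cast_ofNat]
  have hpos : ∀ ⦃i : ℤ⦄, 0 ≤ i → i ≤ ((X ^ 2 + C p * X + C q) * f).natDegree →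
      0 < intCoeff ((X ^ 2 + C p * X + C q) * f) i :=
    fun i h0 hi ↦ hf.intCoeff_quadratic_mul_pos hp hq hpf h0 (hdeg ▸ hi)
  refine ⟨hpos, fun i j hji hodd ↦ ?_, fun i j hj hji hi hodd heven ↦ ?_⟩
  · exact (mul_nonneg (sq_nonneg q) (hf.minor_nonneg hji hodd)).trans
      (hf.sq_mul_minor_le_minor_quadratic_mul hp hq.le hji hodd)
  · rcases lt_or_ge (((X ^ 2 + C p * X + C q) * f).natDegree : ℤ) (i + 1) with htop | htop
    · rw [newtonMinor_of_natDegree_lt htop]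
      exact mul_pos (hpos (by lia) hi) (hpos hj (by lia))
    · rw [hdeg] at htop heven
      exact (mul_pos (pow_pos hq 2) (hf.minor_pos hj hji (by grind) hodd (by grind))).trans_le
        (hf.sq_mul_minor_le_minor_quadratic_mul hp hq.le hji hodd)

end StrictNewtonLike

end StrictNewtonLike

theorem monic_induction_minpoly {K L : Type*} [Field K] [Field L] [Algebra K L]
    [Algebra.IsIntegral K L] [IsAlgClosed L] {P : K[X] → Prop} {f : K[X]} (hf : f.Monic)
    (one : P 1) (mul : ∀ z : L, aeval z f = 0 → ∀ r : K[X], r.Monic → P r → P (minpoly K z * r)) :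
    P f := by
  induction hn : f.natDegree using Nat.strong_induction_on generalizing f with
  | _ n ih =>
  subst hn
  rcases Nat.eq_zero_or_pos f.natDegree with hdeg | hdeg
  · rwa [hf.natDegree_eq_zero.1 hdeg]
  obtain ⟨z, hz⟩ := IsAlgClosed.exists_aeval_eq_zero L f (natDegree_pos_iff_degree_pos.1 hdeg).ne'
  obtain ⟨r, rfl⟩ := minpoly.dvd K z hz
  have hzi : IsIntegral K z := Algebra.IsIntegral.isIntegral z
  have hr : r.Monic := (minpoly.monic hzi).of_mul_monic_left hf
  refine mul z hz r hr (ih r.natDegree ?_ hr (fun w hw ↦ mul w ?_) rfl)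
  · have := minpoly.natDegree_pos hzi
    rw [(minpoly.monic hzi).natDegree_mul hr]
    lia
  · rw [aeval_mul, hw, mul_zero]

section RealPolynomials

theorem minpoly_eq_X_add_C {z : ℂ} (hz : z.im = 0) : minpoly ℝ z = X + C (-z.re) := by
  have hzre : algebraMap ℝ ℂ z.re = z := Complex.ext rfl hz.symm
  rw [C_neg, ← sub_eq_add_neg, ← minpoly.eq_X_sub_C ℂ z.re, hzre]

theorem minpoly_eq_quadratic {z : ℂ} (hz : z.im ≠ 0) :
    minpoly ℝ z = X ^ 2 + C (-(2 * z.re)) * X + C (‖z‖ ^ 2) := by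
  have hroot : aeval z (X ^ 2 + C (-(2 * z.re)) * X + C (‖z‖ ^ 2)) = 0 := by
    have hnorm : (‖z‖ : ℂ) ^ 2 = z * starRingEnd ℂ z := (Complex.mul_conj' z).symm
    have htrace : (2 * z.re : ℂ) = z + starRingEnd ℂ z := by
      rw [Complex.add_conj, Complex.ofReal_mul, Complex.ofReal_ofNat]
    simp only [map_add, map_mul, map_pow, map_neg, aeval_X, aeval_C, Complex.coe_algebraMap,
      Complex.ofReal_ofNat, hnorm, htrace]
    ring
  have hdvd := quadratic_dvd_of_aeval_eq_zero_im_ne_zero _ (minpoly.aeval ℝ z) hz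
  rw [sub_eq_add_neg, ← neg_mul, ← C_neg] at hdvd
  exact eq_of_monic_of_associated (minpoly.monic (Algebra.IsIntegral.isIntegral z))
    (by monicity!) (associated_of_dvd_dvd (minpoly.dvd ℝ z hroot) hdvd)

theorem neg_one_pow_mul_comp_neg_X_eq_self {g : ℝ[X]} (hg : g.Monic)
    (hre : ∀ z : ℂ, aeval z g = 0 → z.re = 0) : (-1) ^ g.natDegree * g.comp (-X) = g := by
  refine monic_induction_minpoly (L := ℂ) (P := fun r ↦ (-1) ^ r.natDegree * r.comp (-X) = r) hg
    (by simp) fun z hz r hr ihr ↦ ?_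
  have hconj : Complex.conjAe z = -z := Complex.ext (by simp [hre z hz]) (by simp)
  have hmin : (-1) ^ (minpoly ℝ z).natDegree * (minpoly ℝ z).comp (-X) = minpoly ℝ z := by
    rw [← minpoly.neg, ← hconj, minpoly.algEquiv_eq]
  rw [(minpoly.monic (Algebra.IsIntegral.isIntegral z)).natDegree_mul hr, mul_comp, pow_add,
    mul_mul_mul_comm, hmin, ihr]

theorem intCoeff_eq_zero_of_forall_root_re_eq_zero {g : ℝ[X]} (hg : g.Monic)
    (hre : ∀ z : ℂ, aeval z g = 0 → z.re = 0) {i : ℤ} (hi : Odd (g.natDegree - i)) :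
    intCoeff g i = 0 := by
  rcases lt_or_ge i 0 with hneg | hnonneg
  · exact intCoeff_of_neg g hneg
  lift i to ℕ using hnonneg
  have hsymm : g.coeff i = (-1) ^ (g.natDegree + i) * g.coeff i := by
    conv_lhs => rw [← neg_one_pow_mul_comp_neg_X_eq_self hg hre]
    have hsign : (-1 : ℝ[X]) = C (-1) := by rw [C_neg, C_1]
    rw [neg_eq_neg_one_mul (X : ℝ[X]), hsign, ← C_pow, coeff_C_mul, comp_C_mul_X_coeff]
    ring
  rw [(by grind : Odd (g.natDegree + i)).neg_one_pow] at hsymm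
  rw [intCoeff_natCast]
  linarith

theorem StrictNewtonLike.minpoly_mul {f : ℝ[X]} (hf : StrictNewtonLike f) {z : ℂ} (hz : z ≠ 0)
    (hre : z.re ≤ 0) (hzf : z.re ≠ 0 ∨ 0 < f.natDegree) : StrictNewtonLike (minpoly ℝ z * f) := by
  by_cases him : z.im = 0
  · rw [minpoly_eq_X_add_C him]
    have hre' : z.re ≠ 0 := fun h ↦ hz (Complex.ext h him)
    exact hf.X_add_C_mul (neg_pos.2 (hre.lt_of_ne hre'))
  · rw [minpoly_eq_quadratic him]
    exact hf.quadratic_mul (by linarith) (by positivity)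
      (hzf.imp_left fun h ↦ by linarith [hre.lt_of_ne h])

theorem strictNewtonLike_of_forall_root_re_nonpos {f : ℝ[X]} (hf : f.Monic) (h0 : f.coeff 0 ≠ 0)
    (hre : ∀ z : ℂ, aeval z f = 0 → z.re ≤ 0) (hex : ∃ z : ℂ, aeval z f = 0 ∧ z.re ≠ 0) :
    StrictNewtonLike f := by
  have hne : ∀ z : ℂ, aeval z f = 0 → z ≠ 0 := by
    rintro z hz rfl
    exact h0 (by simpa [← coeff_zero_eq_aeval_zero'] using hz)
  obtain ⟨z, hz, hzre⟩ := hex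
  obtain ⟨r, rfl⟩ := minpoly.dvd ℝ z hz
  have hzi : IsIntegral ℝ z := Algebra.IsIntegral.isIntegral z
  have hr : r.Monic := (minpoly.monic hzi).of_mul_monic_left hf
  refine monic_induction_minpoly (L := ℂ) (P := fun s ↦ StrictNewtonLike (minpoly ℝ z * s)) hr
    (StrictNewtonLike.one.minpoly_mul (hne z hz) (hre z hz) (.inl hzre)) fun w hw s hs ihs ↦ ?_
  have hwf : aeval w (minpoly ℝ z * r) = 0 := by rw [aeval_mul, hw, mul_zero]
  rw [mul_left_comm]
  refine ihs.minpoly_mul (hne w hwf) (hre w hwf) (.inr ?_)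
  rw [(minpoly.monic hzi).natDegree_mul hs]
  exact Nat.add_pos_left (minpoly.natDegree_pos hzi) _

theorem newtonMinor_pos_of_forall_root_re_nonpos {g : ℝ[X]} (hg : g.Monic)
    (hre : ∀ z : ℂ, aeval z g = 0 → z.re ≤ 0) (hex : ∃ z : ℂ, aeval z g = 0 ∧ z.re ≠ 0) {i j : ℤ}
    (hj : g.rootMultiplicity 0 ≤ j) (hji : j < i) (hi : i ≤ g.natDegree) (hodd : Odd (i - j))
    (heven : Even (g.natDegree - i)) : 0 < newtonMinor g 1 i j := by
  obtain ⟨f, hgf, hndvd⟩ := exists_eq_pow_rootMultiplicity_mul_and_not_dvd g hg.ne_zero 0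
  generalize g.rootMultiplicity 0 = m at hgf hj
  rw [C_0, sub_zero] at hgf hndvd
  subst hgf
  have hf : f.Monic := (monic_X_pow m).of_mul_monic_left hg
  rw [(monic_X_pow m).natDegree_mul hf, natDegree_X_pow, Nat.cast_add] at hi heven
  have hsnl : StrictNewtonLike f := by
    refine strictNewtonLike_of_forall_root_re_nonpos hf (mt X_dvd_iff.2 hndvd)
      (fun z hz ↦ hre z (by rw [aeval_mul, hz, mul_zero])) ?_
    obtain ⟨z, hz, hzre⟩ := hex
    have hz0 : z ≠ 0 := by
      rintro rfl
      exact hzre rfl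
    refine ⟨z, ?_, hzre⟩
    simpa [hz0] using hz
  rw [newtonMinor_X_pow_mul]
  exact hsnl.minor_pos (by lia) (by lia) (by lia) (by grind) (by grind)

theorem newtonMinor_eq_zero_iff {g : ℝ[X]} (hg : g.Monic)
    (hre : ∀ z : ℂ, aeval z g = 0 → z.re ≤ 0) {i j : ℤ} (hji : j < i) (hi : i ≤ g.natDegree)
    (hodd : Odd (i - j)) (heven : Even (g.natDegree - i)) :
    newtonMinor g 1 i j = 0 ↔
      j < g.rootMultiplicity 0 ∨ ∀ z : ℂ, aeval z g = 0 → z.re = 0 := by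
  refine ⟨fun h ↦ ?_, ?_⟩
  · by_contra! ⟨hj, hex⟩
    exact (newtonMinor_pos_of_forall_root_re_nonpos hg hre hex hj hji hi hodd heven).ne' h
  · rintro (hj | him)
    · rw [newtonMinor, intCoeff_eq_zero_of_lt_rootMultiplicity hj,
        intCoeff_eq_zero_of_lt_rootMultiplicity (by lia : j - 1 < _), mul_zero, mul_zero, sub_zero]
    · rw [newtonMinor, intCoeff_eq_zero_of_forall_root_re_eq_zero hg him (i := j) (by grind),
        intCoeff_eq_zero_of_forall_root_re_eq_zero hg him (i := i + 1) (by grind), mul_zero,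
        zero_mul, sub_zero]

end RealPolynomials

/-- **Observation 4.5, case `k` even, `l` odd**.  Let
`g(x) = ∏_{j=1}^n (x - xⱼ) = xⁿ + b₁xⁿ⁻¹ + ⋯ + bₙ` be a real polynomial where
`x₁, …, xₙ` are complex numbers with `Re(xⱼ) ≤ 0` for all `j` (and `b₀ = 1`).  Let
`1 ≤ k < l ≤ n - 1` with `k` even and `l` odd.  Then `b_k·b_l = b_{k-1}·b_{l+1}` if and
only if either zero is a root of `g` of multiplicity at least `n - l + 1`, or
`Re(xⱼ) = 0` for all `j`.  (Here `b_i` is the coefficient of `x^{n-i}` in `g`.) -/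
theorem newton_like_equality_even_odd
    (n k l : ℕ) (g : Polynomial ℝ) (x : ℕ → ℂ)
    (hdeg : g.natDegree = n)
    (hroots : g.map (algebraMap ℝ ℂ) =
      ∏ j ∈ Finset.Icc 1 n, (Polynomial.X - Polynomial.C (x j)))
    (hx : ∀ j ∈ Finset.Icc 1 n, (x j).re ≤ 0)
    (hk : 1 ≤ k) (hkl : k < l) (hl : l ≤ n - 1)
    (hke : k % 2 = 0) (hlo : l % 2 = 1) :
    g.coeff (n - k) * g.coeff (n - l) = g.coeff (n - (k - 1)) * g.coeff (n - (l + 1)) ↔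
      (n - l + 1 ≤ g.rootMultiplicity 0 ∨ ∀ j ∈ Finset.Icc 1 n, (x j).re = 0) := by
  have hg : g.Monic := by
    refine monic_of_injective (algebraMap ℝ ℂ).injective ?_
    rw [hroots]
    exact monic_prod_X_sub_C x _
  have hroot (P : ℂ → Prop) :
      (∀ z : ℂ, aeval z g = 0 → P z) ↔ ∀ j ∈ Finset.Icc 1 n, P (x j) := by
    simp only [← eval_map_algebraMap, hroots, eval_prod, Finset.prod_eq_zero_iff, eval_sub, eval_X,
      eval_C, sub_eq_zero]
    grind
  have key := newtonMinor_eq_zero_iff hg ((hroot _).2 hx) (i := (n - k : ℕ)) (j := (n - l : ℕ))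
    (by lia) (by lia) (by grind) (by grind)
  have hi : ((n - k : ℕ) : ℤ) + 1 = (n - (k - 1) : ℕ) := by lia
  have hj : ((n - l : ℕ) : ℤ) - 1 = (n - (l + 1) : ℕ) := by lia
  rwa [newtonMinor, hi, hj, intCoeff_natCast, intCoeff_natCast, intCoeff_natCast, intCoeff_natCast,
    sub_eq_zero, Nat.cast_lt, ← Nat.succ_le_iff, hroot] at key
end

section
/- Let f(x) = x^{2m} + a_1 x^{2m-1} + a_2 x^{2m-2} + ... + a_{2m} be a real polynomial of even degree 2m which has at most one root (counted with multiplicity) with positive real part and at least one root with nonzero real part. Then the polynomial y^m - a_2 y^{m-1} + a_4 y^{m-2} - ... + (-1)^m a_{2m} has at least m - 1 nonnegative real roots, counted with multiplicity. -/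
open Polynomial

/-!
Write `f(x) = E(x²) + x O(x²)`. The polynomial of the theorem is `±E(-y)`, so it suffices that `E`
is real-rooted with at most one positive root, that is, that no two of its roots form a pair
`(z, conj z)` with `z` nonreal or a pair of positive reals. The kernel
`(E(s) G(r) - E(r) G(s)) / (s - r)`, continued to `r = s`, vanishes at every pair of roots of `E`
(counted with multiplicity), so it is enough to find a `G` for which it is positive at all pairs
of these two kinds.

If `f` has a root with positive real part, it is a real number `a > 0`. By parity there is a
further real root `-b ≤ 0`, and `f = (x² + (b - a)x - ab) v`, where `v` is a product of quadratics
`x² + px + q` with `p, q ≥ 0`. Positivity of the kernels attached to the even and odd parts of such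
a `v` is checked on one quadratic factor and is preserved under products; the indefinite quadratic
then only requires choosing `G` to be the even part of `v`, or `x` times it, according to the sign
of `b - a`. If `f` has no such root, then `f` is itself such a product `v`, and `E` vanishes
nowhere on these pairs.
-/

open ComplexConjugate
open scoped ComplexOrder

section EvenOddPart

variable {R : Type*} [CommSemiring R]

/-- The polynomial `E` in the decomposition `f(x) = E(x²) + x O(x²)`. -/
noncomputable def evenPart (f : R[X]) : R[X] := contract 2 f

/-- The polynomial `O` in the decomposition `f(x) = E(x²) + x O(x²)`. -/
noncomputable def oddPart (f : R[X]) : R[X] := contract 2 f.divX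

theorem coeff_evenPart (f : R[X]) (n : ℕ) : (evenPart f).coeff n = f.coeff (2 * n) := by
  rw [evenPart, coeff_contract two_ne_zero, mul_comm]

theorem coeff_oddPart (f : R[X]) (n : ℕ) : (oddPart f).coeff n = f.coeff (2 * n + 1) := by
  rw [oddPart, coeff_contract two_ne_zero, mul_comm, coeff_divX]

theorem expand_evenPart_add_X_mul_expand_oddPart (f : R[X]) :
    expand R 2 (evenPart f) + X * expand R 2 (oddPart f) = f := by
  ext n
  obtain ⟨k, rfl | rfl⟩ := n.even_or_odd'
  · rcases k with - | k
    · simp [coeff_expand, coeff_evenPart]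
    · rw [coeff_add, show 2 * (k + 1) = 2 * k + 1 + 1 by ring, coeff_X_mul]
      simp [coeff_expand, coeff_evenPart, show 2 * k + 1 + 1 = 2 * (k + 1) by ring]
  · simp [coeff_expand, coeff_oddPart]

theorem evenPart_X_mul (f : R[X]) : evenPart (X * f) = X * oddPart f := by
  ext (_ | n)
  · simp [coeff_evenPart]
  · rw [coeff_evenPart, coeff_X_mul, coeff_oddPart, Nat.mul_succ, coeff_X_mul]

theorem oddPart_X_mul (f : R[X]) : oddPart (X * f) = evenPart f := by
  ext n
  rw [coeff_oddPart, coeff_X_mul, coeff_evenPart]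

theorem evenPart_mul (f g : R[X]) :
    evenPart (f * g) = evenPart f * evenPart g + X * (oddPart f * oddPart g) := by
  calc evenPart (f * g)
      = evenPart (f * expand R 2 (evenPart g) + X * f * expand R 2 (oddPart g)) := by
        conv_lhs => rw [← expand_evenPart_add_X_mul_expand_oddPart g]
        congr 1
        ring
    _ = evenPart f * evenPart g + evenPart (X * f) * oddPart g := by
        simp only [evenPart, contract_add two_ne_zero, contract_mul_expand two_ne_zero]
    _ = evenPart f * evenPart g + X * (oddPart f * oddPart g) := by
        rw [evenPart_X_mul, mul_assoc]

theorem oddPart_mul (f g : R[X]) :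
    oddPart (f * g) = evenPart f * oddPart g + oddPart f * evenPart g := by
  have h : X * oddPart (f * g) = X * (evenPart f * oddPart g + oddPart f * evenPart g) := by
    rw [← evenPart_X_mul, ← mul_assoc, evenPart_mul, evenPart_X_mul, oddPart_X_mul]
    ring
  ext n
  simpa using congr_arg (coeff · (n + 1)) h

theorem natDegree_evenPart {f : R[X]} {m : ℕ} (hf : f ≠ 0) (hdeg : f.natDegree = 2 * m) :
    (evenPart f).natDegree = m := by
  refine natDegree_eq_of_le_of_coeff_ne_zero
    (natDegree_le_iff_coeff_eq_zero.2 fun k hk ↦ ?_) ?_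
  · rw [coeff_evenPart, coeff_eq_zero_of_natDegree_lt (by omega)]
  · rwa [coeff_evenPart, ← hdeg, coeff_natDegree, leadingCoeff_ne_zero]

theorem evenPart_one : evenPart (1 : R[X]) = 1 := by
  ext (_ | n) <;> simp [coeff_evenPart, coeff_one]

theorem oddPart_one : oddPart (1 : R[X]) = 0 := by
  ext n
  simp [coeff_oddPart, coeff_one]

theorem evenPart_quadratic (p q : R) : evenPart (X ^ 2 + C p * X + C q) = X + C q := by
  ext (_ | _ | n) <;> simp [coeff_evenPart, coeff_X, coeff_C, coeff_X_pow, Nat.mul_succ]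

theorem oddPart_quadratic (p q : R) : oddPart (X ^ 2 + C p * X + C q) = C p := by
  ext (_ | n) <;> simp [coeff_oddPart, coeff_C, coeff_X_pow, Nat.mul_succ]

end EvenOddPart

theorem eq_C_mul_evenPart_comp_neg_X {R : Type*} [CommRing R] {f h : R[X]} {m : ℕ}
    (hdeg : f.natDegree = 2 * m)
    (hh : ∀ k : ℕ, h.coeff k = if k ≤ m then (-1 : R) ^ (m - k) * f.coeff (2 * k) else 0) :
    h = C ((-1) ^ m) * (evenPart f).comp (-X) := by
  ext k
  rw [hh, coeff_C_mul, show (-X : R[X]) = C (-1) * X by simp, comp_C_mul_X_coeff, coeff_evenPart]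
  split_ifs with hk
  · obtain ⟨j, rfl⟩ := Nat.exists_eq_add_of_le hk
    have hsq : (-1 : R) ^ k * (-1) ^ k = 1 := by rw [← mul_pow]; simp
    rw [Nat.add_sub_cancel_left, pow_add]
    linear_combination -(-1) ^ j * f.coeff (2 * k) * hsq
  · rw [coeff_eq_zero_of_natDegree_lt (by omega), zero_mul, mul_zero]

section Bezoutian

variable {R A : Type*} [CommRing R] [CommRing A] [Algebra R A]

/-- The divided difference `p[r, s] = (p(s) - p(r)) / (s - r)`, defined by polynomial division so
that it makes sense, and equals `p'(r)`, when `s = r`. -/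
noncomputable def dividedDiff (p : R[X]) (r s : A) : A :=
  (p.map (algebraMap R A) /ₘ (X - C r)).eval s

/-- The Bezoutian kernel `(p(s) q(r) - p(r) q(s)) / (s - r)`, continued to `s = r` as the
Wronskian `p'q - pq'`. -/
noncomputable def bezoutian (p q : R[X]) (r s : A) : A :=
  dividedDiff p r s * aeval r q - aeval r p * dividedDiff q r s

theorem X_sub_C_mul_divByMonic_add (p : R[X]) (r : A) :
    (X - C r) * (p.map (algebraMap R A) /ₘ (X - C r)) + C (aeval r p) =
      p.map (algebraMap R A) := by
  rw [← eval_map_algebraMap, ← modByMonic_X_sub_C_eq_C_eval, add_comm]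
  exact modByMonic_add_div _ _

theorem dividedDiff_eq_eval {p : R[X]} {r s c : A} {g : A[X]}
    (h : p.map (algebraMap R A) = (X - C r) * g + C c) : dividedDiff p r s = g.eval s := by
  nontriviality A
  rw [dividedDiff, (div_modByMonic_unique g (C c) (monic_X_sub_C r)
    ⟨by rw [h, add_comm], degree_C_le.trans_lt (by rw [degree_X_sub_C]; exact zero_lt_one)⟩).1]

theorem aeval_eq_add_sub_mul_dividedDiff (p : R[X]) (r s : A) :
    aeval s p = aeval r p + (s - r) * dividedDiff p r s := by
  have h := congr_arg (eval s) (X_sub_C_mul_divByMonic_add p r)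
  rw [eval_map_algebraMap] at h
  simp only [← h, dividedDiff, eval_add, eval_mul, eval_sub, eval_X, eval_C]
  ring

theorem dividedDiff_add (p q : R[X]) (r s : A) :
    dividedDiff (p + q) r s = dividedDiff p r s + dividedDiff q r s := by
  have h : (p + q).map (algebraMap R A) =
      (X - C r) * (p.map (algebraMap R A) /ₘ (X - C r) + q.map (algebraMap R A) /ₘ (X - C r)) +
      C (aeval r p + aeval r q) := by
    rw [Polynomial.map_add, C_add]
    linear_combination -X_sub_C_mul_divByMonic_add p r - X_sub_C_mul_divByMonic_add q r
  rw [dividedDiff_eq_eval h, eval_add, dividedDiff, dividedDiff]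

theorem dividedDiff_mul (p q : R[X]) (r s : A) :
    dividedDiff (p * q) r s =
      dividedDiff p r s * aeval r q + aeval s p * dividedDiff q r s := by
  have h : (p * q).map (algebraMap R A) =
      (X - C r) * ((p.map (algebraMap R A) /ₘ (X - C r)) * C (aeval r q) +
        p.map (algebraMap R A) * (q.map (algebraMap R A) /ₘ (X - C r))) +
      C (aeval r p * aeval r q) := by
    rw [Polynomial.map_mul, C_mul]
    linear_combination -C (aeval r q) * X_sub_C_mul_divByMonic_add p r -
      p.map (algebraMap R A) * X_sub_C_mul_divByMonic_add q r
  rw [dividedDiff_eq_eval h]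
  simp only [dividedDiff, eval_add, eval_mul, eval_C, eval_map_algebraMap]

theorem dividedDiff_C (c : R) (r s : A) : dividedDiff (C c) r s = 0 := by
  rw [dividedDiff_eq_eval (g := 0) (c := algebraMap R A c) (by simp), eval_zero]

theorem dividedDiff_X (r s : A) : dividedDiff (X : R[X]) r s = 1 := by
  rw [dividedDiff_eq_eval (g := 1) (c := r) (by simp), eval_one]

theorem sub_mul_bezoutian (p q : R[X]) (r s : A) :
    (s - r) * bezoutian p q r s = aeval s p * aeval r q - aeval r p * aeval s q := by
  rw [aeval_eq_add_sub_mul_dividedDiff p r s, aeval_eq_add_sub_mul_dividedDiff q r s, bezoutian]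
  ring

theorem bezoutian_eq_zero_of_dvd {p : R[X]} {r s : A}
    (h : (X - C r) * (X - C s) ∣ p.map (algebraMap R A)) (q : R[X]) :
    bezoutian p q r s = 0 := by
  obtain ⟨g, hg⟩ := h
  have hr : aeval r p = 0 := by rw [← eval_map_algebraMap, hg]; simp
  have hd : dividedDiff p r s = ((X - C s) * g).eval s :=
    dividedDiff_eq_eval (c := 0) (by rw [hg]; simp [mul_assoc])
  rw [bezoutian, hr, hd]
  simp

theorem bezoutian_zero_right (p : R[X]) (r s : A) : bezoutian p 0 r s = 0 := by
  simp [bezoutian, dividedDiff]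

theorem bezoutian_mul_parts (e o e' o' : R[X]) (r s : A) :
    bezoutian (e * e' + X * (o * o')) (e * o' + o * e') r s =
      aeval r e * aeval s e * bezoutian e' o' r s + aeval r e' * aeval s e' * bezoutian e o r s +
      aeval r o * aeval s o * bezoutian (X * o') e' r s +
      aeval r o' * aeval s o' * bezoutian (X * o) e r s := by
  simp only [bezoutian, dividedDiff_add, dividedDiff_mul, dividedDiff_X, map_add, map_mul, aeval_X,
    aeval_eq_add_sub_mul_dividedDiff _ r s]
  ring

theorem bezoutian_X_mul_parts (e o e' o' : R[X]) (r s : A) :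
    bezoutian (X * (e * o' + o * e')) (e * e' + X * (o * o')) r s =
      aeval r e * aeval s e * bezoutian (X * o') e' r s +
      aeval r e' * aeval s e' * bezoutian (X * o) e r s +
      r * s * (aeval r o * aeval s o * bezoutian e' o' r s +
        aeval r o' * aeval s o' * bezoutian e o r s) := by
  simp only [bezoutian, dividedDiff_add, dividedDiff_mul, dividedDiff_X, map_add, map_mul, aeval_X,
    aeval_eq_add_sub_mul_dividedDiff _ r s]
  ring

end Bezoutian

section HermiteBiehler

/-- The pairs `(r, s)` at which the positivity of a kernel is tested. A real polynomial has only
real roots, at most one of them positive, unless two of its complex roots form such a pair. -/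
inductive IsTestPair : ℂ → ℂ → Prop
  | nonreal {z : ℂ} (hz : z.im ≠ 0) : IsTestPair z (conj z)
  | positive {x y : ℝ} (hx : 0 < x) (hy : 0 < y) : IsTestPair x y

/-- A pair `(E, O)` whose two Bezoutian kernels are positive in the sense required of the even and
odd parts of a polynomial without roots in the open right half-plane. -/
structure IsHermiteBiehlerPair (E O : ℝ[X]) : Prop where
  even_pos : ∀ y : ℝ, 0 < y → 0 < E.eval y
  odd_nonneg : ∀ y : ℝ, 0 < y → 0 ≤ O.eval y
  even_ne_zero : ∀ z : ℂ, z.im ≠ 0 → aeval z E ≠ 0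
  bezoutian_X_mul_nonneg : ∀ r s, IsTestPair r s → 0 ≤ bezoutian (X * O) E r s
  eq_zero_or_bezoutian_pos : O = 0 ∨ ∀ r s, IsTestPair r s → 0 < bezoutian E O r s

theorem aeval_complex_ofReal (p : ℝ[X]) (x : ℝ) : aeval (x : ℂ) p = p.eval x :=
  aeval_algebraMap_apply_eq_algebraMap_eval x p

variable {p : ℝ[X]} {r s : ℂ}

theorem IsTestPair.mul_pos (h : IsTestPair r s) : 0 < r * s := by
  cases h with
  | @nonreal z hz =>
    rw [Complex.mul_conj, Complex.zero_lt_real, Complex.normSq_pos]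
    rintro rfl
    exact hz Complex.zero_im
  | positive hx hy => exact_mod_cast _root_.mul_pos hx hy

theorem IsTestPair.aeval_mul_aeval_nonneg (h : IsTestPair r s)
    (hp : ∀ y : ℝ, 0 < y → 0 ≤ p.eval y) : 0 ≤ aeval r p * aeval s p := by
  cases h with
  | nonreal =>
    rw [aeval_conj, Complex.mul_conj, Complex.zero_le_real]
    exact Complex.normSq_nonneg _
  | positive hx hy =>
    rw [aeval_complex_ofReal, aeval_complex_ofReal]
    exact_mod_cast mul_nonneg (hp _ hx) (hp _ hy)

namespace IsHermiteBiehlerPair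

variable {E O E' O' : ℝ[X]}

theorem aeval_even_mul_pos (h : IsHermiteBiehlerPair E O) (hrs : IsTestPair r s) :
    0 < aeval r E * aeval s E := by
  cases hrs with
  | nonreal hz =>
    rw [aeval_conj, Complex.mul_conj, Complex.zero_lt_real, Complex.normSq_pos]
    exact h.even_ne_zero _ hz
  | positive hx hy =>
    rw [aeval_complex_ofReal, aeval_complex_ofReal]
    exact_mod_cast mul_pos (h.even_pos _ hx) (h.even_pos _ hy)

theorem bezoutian_nonneg (h : IsHermiteBiehlerPair E O) (hrs : IsTestPair r s) :
    0 ≤ bezoutian E O r s := by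
  rcases h.eq_zero_or_bezoutian_pos with rfl | hpos
  · rw [bezoutian_zero_right]
  · exact (hpos r s hrs).le

theorem one : IsHermiteBiehlerPair 1 0 where
  even_pos := by simp
  odd_nonneg := by simp
  even_ne_zero := by simp
  bezoutian_X_mul_nonneg := by simp [bezoutian, dividedDiff]
  eq_zero_or_bezoutian_pos := Or.inl rfl

theorem quadratic {p q : ℝ} (hp : 0 ≤ p) (hq : 0 ≤ q) :
    IsHermiteBiehlerPair (X + C q) (C p) where
  even_pos y hy := by simpa using add_pos_of_pos_of_nonneg hy hq
  odd_nonneg := by simp [hp]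
  even_ne_zero z hz h0 := hz (by simpa using congr_arg Complex.im h0)
  bezoutian_X_mul_nonneg r s _ := by
    have h : bezoutian (X * C p) (X + C q) r s = (p * q : ℝ) := by
      simp only [bezoutian, dividedDiff_add, dividedDiff_mul, dividedDiff_X, dividedDiff_C,
        map_add, map_mul, aeval_X, aeval_C, Complex.coe_algebraMap, Complex.ofReal_mul]
      ring
    rw [h]
    exact_mod_cast mul_nonneg hp hq
  eq_zero_or_bezoutian_pos := by
    rcases hp.eq_or_lt with rfl | hp
    · exact Or.inl C_0
    · refine Or.inr fun r s _ ↦ ?_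
      simpa [bezoutian, dividedDiff_add, dividedDiff_X, dividedDiff_C] using hp

theorem bezoutian_parts_pos (h : IsHermiteBiehlerPair E O) (h' : IsHermiteBiehlerPair E' O')
    (hO : ¬(O = 0 ∧ O' = 0)) (hrs : IsTestPair r s) :
    0 < bezoutian (E * E' + X * (O * O')) (E * O' + O * E') r s := by
  have hE := h.aeval_even_mul_pos hrs
  have hE' := h'.aeval_even_mul_pos hrs
  have hodd := mul_nonneg (hrs.aeval_mul_aeval_nonneg h.odd_nonneg)
    (h'.bezoutian_X_mul_nonneg r s hrs)
  have hodd' := mul_nonneg (hrs.aeval_mul_aeval_nonneg h'.odd_nonneg)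
    (h.bezoutian_X_mul_nonneg r s hrs)
  rw [bezoutian_mul_parts]
  refine add_pos_of_pos_of_nonneg (add_pos_of_pos_of_nonneg ?_ hodd) hodd'
  rcases h.eq_zero_or_bezoutian_pos with hO0 | hB
  · have hB' := h'.eq_zero_or_bezoutian_pos.resolve_left fun hO0' ↦ hO ⟨hO0, hO0'⟩
    exact add_pos_of_pos_of_nonneg (mul_pos hE (hB' r s hrs))
      (mul_nonneg hE'.le (h.bezoutian_nonneg hrs))
  · exact add_pos_of_nonneg_of_pos (mul_nonneg hE.le (h'.bezoutian_nonneg hrs))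
      (mul_pos hE' (hB r s hrs))

theorem even_parts_ne_zero (h : IsHermiteBiehlerPair E O) (h' : IsHermiteBiehlerPair E' O')
    {z : ℂ} (hz : z.im ≠ 0) : aeval z (E * E' + X * (O * O')) ≠ 0 := by
  by_cases hO : O = 0 ∧ O' = 0
  · simpa [hO.1] using ⟨h.even_ne_zero z hz, h'.even_ne_zero z hz⟩
  · intro h0
    have hB := sub_mul_bezoutian (E * E' + X * (O * O')) (E * O' + O * E') z (conj z)
    rw [aeval_conj, h0, map_zero, zero_mul, zero_mul, sub_zero, mul_eq_zero, sub_eq_zero,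
      Complex.conj_eq_iff_im] at hB
    exact hB.elim hz (h.bezoutian_parts_pos h' hO (.nonreal hz)).ne'

theorem mul (h : IsHermiteBiehlerPair E O) (h' : IsHermiteBiehlerPair E' O') :
    IsHermiteBiehlerPair (E * E' + X * (O * O')) (E * O' + O * E') where
  even_pos y hy := by
    have := h.even_pos y hy
    have := h'.even_pos y hy
    have := h.odd_nonneg y hy
    have := h'.odd_nonneg y hy
    simp only [eval_add, eval_mul, eval_X]
    positivity
  odd_nonneg y hy := by
    have := h.even_pos y hy
    have := h'.even_pos y hy
    have := h.odd_nonneg y hy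
    have := h'.odd_nonneg y hy
    simp only [eval_add, eval_mul]
    positivity
  even_ne_zero _ hz := h.even_parts_ne_zero h' hz
  bezoutian_X_mul_nonneg r s hrs := by
    have hE := h.aeval_even_mul_pos hrs
    have hE' := h'.aeval_even_mul_pos hrs
    have hO := hrs.aeval_mul_aeval_nonneg h.odd_nonneg
    have hO' := hrs.aeval_mul_aeval_nonneg h'.odd_nonneg
    have hB := h.bezoutian_nonneg hrs
    have hB' := h'.bezoutian_nonneg hrs
    have hQ := h.bezoutian_X_mul_nonneg r s hrs
    have hQ' := h'.bezoutian_X_mul_nonneg r s hrs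
    have hrs0 := hrs.mul_pos
    rw [bezoutian_X_mul_parts]
    positivity
  eq_zero_or_bezoutian_pos := by
    by_cases hO : O = 0 ∧ O' = 0
    · exact Or.inl (by rw [hO.1, hO.2, mul_zero, zero_mul, add_zero])
    · exact Or.inr fun r s hrs ↦ h.bezoutian_parts_pos h' hO hrs

theorem exists_bezoutian_pos (h : IsHermiteBiehlerPair E O) {c : ℝ} (hc : 0 ≤ c) (d : ℝ) :
    ∃ G : ℝ[X], ∀ r s, IsTestPair r s →
      0 < bezoutian ((X - C c) * E + X * (C d * O)) G r s := by
  by_cases hd : O = 0 ∨ 0 ≤ d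
  · refine ⟨E, fun r s hrs ↦ ?_⟩
    have hB : bezoutian ((X - C c) * E + X * (C d * O)) E r s =
        aeval r E * aeval s E + d * bezoutian (X * O) E r s := by
      simp only [bezoutian, sub_eq_add_neg, ← C_neg, dividedDiff_add, dividedDiff_mul,
        dividedDiff_X, dividedDiff_C, map_add, map_mul, aeval_X, aeval_C, Complex.coe_algebraMap,
        aeval_eq_add_sub_mul_dividedDiff _ r s]
      ring
    rw [hB]
    refine add_pos_of_pos_of_nonneg (h.aeval_even_mul_pos hrs) ?_
    rcases hd with rfl | hd
    · simp [bezoutian, dividedDiff]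
    · exact mul_nonneg (by exact_mod_cast hd) (h.bezoutian_X_mul_nonneg r s hrs)
  · -- Against `E` the nonnegative kernel of `(X * O, E)` now enters with the wrong sign `d < 0`.
    push Not at hd
    refine ⟨X * E, fun r s hrs ↦ ?_⟩
    have hB : bezoutian ((X - C c) * E + X * (C d * O)) (X * E) r s =
        c * (aeval r E * aeval s E) + (-d : ℝ) * (r * s * bezoutian E O r s) := by
      simp only [bezoutian, sub_eq_add_neg, ← C_neg, dividedDiff_add, dividedDiff_mul,
        dividedDiff_X, dividedDiff_C, map_add, map_mul, aeval_X, aeval_C, Complex.coe_algebraMap,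
        aeval_eq_add_sub_mul_dividedDiff _ r s, Complex.ofReal_neg]
      ring
    rw [hB]
    exact add_pos_of_nonneg_of_pos
      (mul_nonneg (by exact_mod_cast hc) (h.aeval_even_mul_pos hrs).le)
      (mul_pos (by exact_mod_cast neg_pos.2 hd.2)
        (mul_pos hrs.mul_pos (h.eq_zero_or_bezoutian_pos.resolve_left hd.1 r s hrs)))

end IsHermiteBiehlerPair

end HermiteBiehler

theorem card_nonneg_roots_comp_neg_X_add {R : Type*} [CommRing R] [LinearOrder R]
    [IsStrictOrderedRing R] (p : R[X]) :
    ((p.comp (-X)).roots.filter (fun y ↦ 0 ≤ y)).card + (p.roots.filter (fun y ↦ 0 < y)).card =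
      p.roots.card := by
  have h : ((p.comp (-X)).roots.filter (fun y ↦ 0 ≤ y)).card =
      (p.roots.filter (fun y ↦ ¬0 < y)).card := by
    rw [roots_comp_neg_X, Multiset.filter_map, Multiset.card_map]
    simp
  rw [h, add_comm, ← Multiset.card_add, Multiset.filter_add_not]

section RealRoots

/-- No test pair consists of two roots of `F`, counted with multiplicity. -/
def HasNoTestPair (F : ℝ[X]) : Prop :=
  ∀ r s : ℂ, IsTestPair r s → ¬(X - C r) * (X - C s) ∣ F.map (algebraMap ℝ ℂ)

namespace HasNoTestPair

variable {F : ℝ[X]}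

theorem of_aeval_ne_zero (h : ∀ r s : ℂ, IsTestPair r s → aeval r F ≠ 0) : HasNoTestPair F := by
  refine fun r s hrs hdvd ↦ h r s hrs ?_
  rw [← eval_map_algebraMap]
  exact dvd_iff_isRoot.1 ((dvd_mul_right _ _).trans hdvd)

theorem of_bezoutian_pos {G : ℝ[X]} (h : ∀ r s : ℂ, IsTestPair r s → 0 < bezoutian F G r s) :
    HasNoTestPair F :=
  fun r s hrs hdvd ↦ (h r s hrs).ne' (bezoutian_eq_zero_of_dvd hdvd G)

theorem splits (hF : HasNoTestPair F) : F.Splits := by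
  refine Splits.of_splits_map (algebraMap ℝ ℂ) (IsAlgClosed.splits _) fun z hz ↦ ?_
  have hz0 : aeval z F = 0 := by
    rw [← eval_map_algebraMap]
    exact isRoot_of_mem_roots hz
  have hreal : z.im = 0 := by
    by_contra him
    refine hF z (conj z) (.nonreal him) ?_
    rw [mul_comm]
    exact F.mul_star_dvd_of_aeval_eq_zero_im_ne_zero hz0 him
  exact ⟨z.re, Complex.ext (by simp) (by simp [hreal])⟩

theorem card_pos_roots_le_one (hF : HasNoTestPair F) :
    (F.roots.filter (fun y ↦ 0 < y)).card ≤ 1 := by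
  by_contra! hcard
  obtain ⟨x, hx⟩ := Multiset.card_pos_iff_exists_mem.1 (zero_lt_one.trans hcard)
  obtain ⟨t, ht⟩ := Multiset.exists_cons_of_mem hx
  rw [ht, Multiset.card_cons, lt_add_iff_pos_left] at hcard
  obtain ⟨y, hy⟩ := Multiset.card_pos_iff_exists_mem.1 hcard
  have hle : {x, y} ≤ F.roots.filter (fun y ↦ 0 < y) := by
    rw [ht]
    exact Multiset.cons_le_cons x (Multiset.singleton_le.2 hy)
  obtain ⟨hroots, hpos⟩ := Multiset.le_filter.1 hle
  have hF0 : F ≠ 0 := ne_zero_of_mem_roots (Multiset.mem_of_le hroots (Multiset.mem_cons_self x _))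
  have hdvd : (X - C x) * (X - C y) ∣ F := by
    simpa using (Multiset.prod_X_sub_C_dvd_iff_le_roots hF0 {x, y}).2 hroots
  refine hF x y (.positive (hpos x (by simp)) (hpos y (by simp))) ?_
  simpa using Polynomial.map_dvd (algebraMap ℝ ℂ) hdvd

end HasNoTestPair

end RealRoots

section Semistable

/-- A real polynomial without roots in the open right half-plane (a Hurwitz polynomial, except that
roots on the imaginary axis are allowed). -/
def IsSemistable (u : ℝ[X]) : Prop :=
  ∀ z : ℂ, aeval z u = 0 → z.re ≤ 0

/-- The products of quadratics `x² + px + q` with `p, q ≥ 0`, which are exactly the monic semistable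
polynomials of even degree. -/
noncomputable def semistableQuadratics : Submonoid ℝ[X] :=
  Submonoid.closure {u | ∃ p q : ℝ, 0 ≤ p ∧ 0 ≤ q ∧ u = X ^ 2 + C p * X + C q}

theorem isHermiteBiehlerPair_of_mem_semistableQuadratics {u : ℝ[X]}
    (hu : u ∈ semistableQuadratics) : IsHermiteBiehlerPair (evenPart u) (oddPart u) := by
  induction hu using Submonoid.closure_induction with
  | mem u hu =>
    obtain ⟨p, q, hp, hq, rfl⟩ := hu
    rw [evenPart_quadratic, oddPart_quadratic]
    exact .quadratic hp hq
  | one =>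
    rw [evenPart_one, oddPart_one]
    exact .one
  | mul u v _ _ hu hv =>
    rw [evenPart_mul, oddPart_mul]
    exact hu.mul hv

theorem quadratic_mul_mem_semistableQuadratics {p q : ℝ} (hp : 0 ≤ p) (hq : 0 ≤ q) {v : ℝ[X]}
    (hv : v ∈ semistableQuadratics) : (X ^ 2 + C p * X + C q) * v ∈ semistableQuadratics :=
  mul_mem (Submonoid.subset_closure ⟨p, q, hp, hq, rfl⟩) hv

variable {u v : ℝ[X]}

theorem IsSemistable.of_mul_left (h : IsSemistable (u * v)) : IsSemistable v :=
  fun z hz ↦ h z (by rw [map_mul, hz, mul_zero])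

theorem IsSemistable.exists_factor (hs : IsSemistable u) (hu : u.degree ≠ 0) :
    ∃ v : ℝ[X], (∃ b : ℝ, 0 ≤ b ∧ u = (X + C b) * v) ∨
      ∃ p q : ℝ, 0 ≤ p ∧ 0 ≤ q ∧ u = (X ^ 2 + C p * X + C q) * v := by
  obtain ⟨z, hz⟩ := IsAlgClosed.exists_aeval_eq_zero ℂ u hu
  have hre := hs z hz
  by_cases him : z.im = 0
  · obtain ⟨x, rfl⟩ : ∃ x : ℝ, (x : ℂ) = z := ⟨z.re, Complex.ext (by simp) (by simp [him])⟩
    rw [aeval_complex_ofReal, Complex.ofReal_eq_zero] at hz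
    obtain ⟨v, hv⟩ := dvd_iff_isRoot.2 hz
    refine ⟨v, Or.inl ⟨-x, neg_nonneg.2 hre, ?_⟩⟩
    rw [hv, C_neg, sub_eq_add_neg]
  · obtain ⟨v, hv⟩ := u.quadratic_dvd_of_aeval_eq_zero_im_ne_zero hz him
    refine ⟨v, Or.inr ⟨-(2 * z.re), ‖z‖ ^ 2, by linarith, sq_nonneg _, ?_⟩⟩
    rw [hv, C_neg, neg_mul, sub_eq_add_neg]

theorem IsSemistable.factorization (hs : IsSemistable u) (hu : u.Monic) :
    (Even u.natDegree ∧ u ∈ semistableQuadratics) ∨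
      (Odd u.natDegree ∧ ∃ b : ℝ, 0 ≤ b ∧ ∃ v ∈ semistableQuadratics, u = (X + C b) * v) := by
  induction hn : u.natDegree using Nat.strong_induction_on generalizing u with
  | _ n ih =>
  subst hn
  by_cases hdeg : u.degree = 0
  · rw [eq_one_of_monic_natDegree_zero hu (natDegree_eq_zero_iff_degree_le_zero.2 hdeg.le)]
    exact Or.inl ⟨by simp, one_mem _⟩
  obtain ⟨v, ⟨b, hb, rfl⟩ | ⟨p, q, hp, hq, rfl⟩⟩ := hs.exists_factor hdeg
  · have hv := (monic_X_add_C b).of_mul_monic_left hu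
    have hd := (monic_X_add_C b).natDegree_mul hv
    rw [natDegree_X_add_C] at hd
    rw [hd]
    rcases ih _ (by omega) hs.of_mul_left hv rfl with ⟨hev, hmem⟩ | ⟨hodd, c, hc, w, hw, rfl⟩
    · exact Or.inr ⟨hev.one_add, b, hb, v, hmem, rfl⟩
    · refine Or.inl ⟨hodd.one_add, ?_⟩
      convert quadratic_mul_mem_semistableQuadratics (add_nonneg hb hc) (mul_nonneg hb hc) hw
        using 1
      simp only [C_add, C_mul]
      ring
  · have hmonic : (X ^ 2 + C p * X + C q).Monic := by monicity!
    have htwo : (X ^ 2 + C p * X + C q).natDegree = 2 := by compute_degree!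
    have hv := hmonic.of_mul_monic_left hu
    have hd := hmonic.natDegree_mul hv
    rw [htwo] at hd
    rw [hd]
    rcases ih _ (by omega) hs.of_mul_left hv rfl with ⟨hev, hmem⟩ | ⟨hodd, c, hc, w, hw, rfl⟩
    · exact Or.inl ⟨even_two.add hev, quadratic_mul_mem_semistableQuadratics hp hq hmem⟩
    · exact Or.inr ⟨even_two.add_odd hodd, c, hc, _,
        quadratic_mul_mem_semistableQuadratics hp hq hw, by ring⟩

end Semistable

section EvenPartRoots

variable {f : ℝ[X]}

theorem exists_eq_X_sub_C_mul_semistable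
    (hplus : ((f.map (algebraMap ℝ ℂ)).roots.filter (fun z ↦ 0 < z.re)).card ≤ 1)
    (hf : f ≠ 0) (hs : ¬IsSemistable f) :
    ∃ (a : ℝ) (u : ℝ[X]), 0 < a ∧ IsSemistable u ∧ f = (X - C a) * u := by
  have mem_roots_iff (z : ℂ) : z ∈ (f.map (algebraMap ℝ ℂ)).roots ↔ aeval z f = 0 := by
    rw [← aroots_def, mem_aroots, and_iff_right hf]
  simp only [IsSemistable, not_forall, not_le] at hs
  obtain ⟨z, hz, hre⟩ := hs
  have hmem : z ∈ (f.map (algebraMap ℝ ℂ)).roots.filter (fun z ↦ 0 < z.re) :=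
    Multiset.mem_filter.2 ⟨(mem_roots_iff z).2 hz, hre⟩
  have hcard := hplus.antisymm (Multiset.card_pos_iff_exists_mem.2 ⟨z, hmem⟩)
  obtain ⟨w, hw⟩ := Multiset.card_eq_one.1 hcard
  rw [hw, Multiset.mem_singleton] at hmem
  subst hmem
  have hreal : conj z = z := by
    rw [← Multiset.mem_singleton, ← hw, Multiset.mem_filter, mem_roots_iff, aeval_conj, hz]
    simpa
  obtain ⟨a, rfl⟩ := Complex.conj_eq_iff_real.1 hreal
  rw [aeval_complex_ofReal, Complex.ofReal_eq_zero] at hz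
  obtain ⟨u, rfl⟩ := dvd_iff_isRoot.2 hz
  refine ⟨a, u, hre, fun v hv ↦ ?_, rfl⟩
  by_contra! hvre
  have hroots : (((X - C a) * u).map (algebraMap ℝ ℂ)).roots =
      (a : ℂ) ::ₘ (u.map (algebraMap ℝ ℂ)).roots := by
    rw [← aroots_def, aroots_mul hf, aroots_X_sub_C]
    rfl
  rw [hroots, Multiset.filter_cons_of_pos (p := fun z : ℂ ↦ 0 < z.re) _ hre,
    Multiset.card_cons] at hplus
  have hv' : v ∈ (u.map (algebraMap ℝ ℂ)).roots.filter (fun z ↦ 0 < z.re) :=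
    Multiset.mem_filter.2 ⟨mem_aroots.2 ⟨right_ne_zero_of_mul hf, hv⟩, hvre⟩
  have := Multiset.card_pos_iff_exists_mem.2 ⟨v, hv'⟩
  omega

theorem hasNoTestPair_evenPart (hf : f.Monic) (heven : Even f.natDegree)
    (hplus : ((f.map (algebraMap ℝ ℂ)).roots.filter (fun z ↦ 0 < z.re)).card ≤ 1) :
    HasNoTestPair (evenPart f) := by
  by_cases hs : IsSemistable f
  · obtain ⟨-, hmem⟩ := (hs.factorization hf).resolve_right
      fun h ↦ Nat.not_even_iff_odd.2 h.1 heven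
    have hHB := isHermiteBiehlerPair_of_mem_semistableQuadratics hmem
    exact .of_aeval_ne_zero fun r s hrs ↦ left_ne_zero_of_mul (hHB.aeval_even_mul_pos hrs).ne'
  · obtain ⟨a, u, ha, hu, rfl⟩ := exists_eq_X_sub_C_mul_semistable hplus hf.ne_zero hs
    have hum := (monic_X_sub_C a).of_mul_monic_left hf
    rw [(monic_X_sub_C a).natDegree_mul hum, natDegree_X_sub_C, Nat.even_add] at heven
    obtain ⟨-, b, hb, v, hv, rfl⟩ := (hu.factorization hum).resolve_left
      fun h ↦ Nat.not_even_one (heven.2 h.1)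
    have hfactor : (X - C a) * ((X + C b) * v) =
        (X ^ 2 + C (b - a) * X + C (-(a * b))) * v := by
      simp only [C_sub, C_neg, C_mul]
      ring
    rw [hfactor, evenPart_mul, evenPart_quadratic, oddPart_quadratic, C_neg, ← sub_eq_add_neg]
    obtain ⟨G, hG⟩ := (isHermiteBiehlerPair_of_mem_semistableQuadratics hv).exists_bezoutian_pos
      (mul_nonneg ha.le hb) (b - a)
    exact .of_bezoutian_pos hG

end EvenPartRoots

theorem even_part_has_nonneg_roots_general
    (m : ℕ) (f : Polynomial ℝ) (hf : f.Monic) (hdeg : f.natDegree = 2 * m)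
    (hplus : ((f.map (algebraMap ℝ ℂ)).roots.filter (fun z => 0 < z.re)).card ≤ 1)
    (h : Polynomial ℝ)
    (hh : ∀ k : ℕ, h.coeff k =
      if k ≤ m then (-1 : ℝ) ^ (m - k) * f.coeff (2 * k) else 0) :
    m - 1 ≤ (h.roots.filter (fun y => 0 ≤ y)).card := by
  have hF : HasNoTestPair (evenPart f) :=
    hasNoTestPair_evenPart hf (hdeg ▸ even_two_mul m) hplus
  have hcard : (evenPart f).roots.card = m := by
    rw [splits_iff_card_roots.1 hF.splits, natDegree_evenPart hf.ne_zero hdeg]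
  have hpos := hF.card_pos_roots_le_one
  have hsum := card_nonneg_roots_comp_neg_X_add (evenPart f)
  rw [eq_C_mul_evenPart_comp_neg_X hdeg hh,
    roots_C_mul _ (pow_ne_zero m (neg_ne_zero.2 one_ne_zero))]
  omega

/-- (From the proof of Theorem 4.1.)  Let `f(x) = x^{2m} + a₁x^{2m-1} + ⋯ + a_{2m}` be a
monic real polynomial of even degree `2m` which has at most one root (with multiplicity)
with positive real part and at least one root with nonzero real part.  Then the
polynomial `yᵐ - a₂yᵐ⁻¹ + a₄yᵐ⁻² - ⋯ + (-1)ᵐa_{2m}` (whose coefficient of `y^{m-j}` is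
`(-1)ʲ·a_{2j}`) has at least `m - 1` nonnegative real roots, counted with
multiplicity. -/
theorem even_part_has_nonneg_roots
    (m : ℕ) (f : Polynomial ℝ) (hf : f.Monic) (hdeg : f.natDegree = 2 * m)
    (hplus : ((f.map (algebraMap ℝ ℂ)).roots.filter (fun z => 0 < z.re)).card ≤ 1)
    (hnzero : ∃ z ∈ (f.map (algebraMap ℝ ℂ)).roots, z.re ≠ 0)
    (h : Polynomial ℝ)
    (hh : ∀ k : ℕ, h.coeff k =
      if k ≤ m then (-1 : ℝ) ^ (m - k) * f.coeff (2 * k) else 0) :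
    m - 1 ≤ (h.roots.filter (fun y => 0 ≤ y)).card :=
  even_part_has_nonneg_roots_general m f hf hdeg hplus h hh
end

section
/- Let f(x) = a_0 x^n + a_1 x^{n-1} + ... + a_n be a real polynomial of degree n ≥ 1 with a_0 > 0, and write f(x) = p(x²) + x·q(x²), where p(x²) and x·q(x²) are the parts of f made up of the even and odd powers of x respectively. If f is Hurwitz stable (every complex root of f has negative real part), then: every root of the polynomial p(-x²) is real and simple, every root of q(-x²) is real and simple, a_1 > 0, and the distinct nonnegative real roots x_{e1} < x_{e2} < ... of p(-x²) and the distinct nonnegative real roots x_{o1} < x_{o2} < ... of q(-x²) satisfy 0 < x_{e1} < x_{o1} < x_{e2} < x_{o2} < ... (i.e., they strictly alternate, beginning with the smallest root of p(-x²)). -/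
open Polynomial

/-!
For a Hurwitz stable `f`, the polynomial `F(x) = f(ix) = p(-x²) + i x q(-x²)` has all its roots in
the open upper half-plane. Write `g = p(-x²)` and `h = x q(-x²)`; both are real.

If `Im z < 0`, every root of `F` is closer to `z̄` than to `z`, so `|F(z̄)| < |F(z)|`. But
`g(z) = 0` and `h(z) = 0` each force `|F(z̄)| = |F(z)|`, so `g` and `h` have only real roots.

For real `x`, the Wronskian `g h' - g' h` is `|F(x)|²` times the imaginary part of
`F'(x) / F(x) = ∑ 1 / (x - r)`, a sum of numbers with positive imaginary part. As the Wronskian has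
no zeros, the real roots are simple, and Rolle's theorem for `h / g` and `g / h` interlaces the
roots of `g` with those of `h`, the smallest nonnegative root of `h` being `0`.
-/

open scoped ComplexConjugate

section Interlacing

variable {α : Type*} [LinearOrder α]

/-- `B` separates `A` if an element of `B` lies strictly between any two elements of `A`. -/
def Separates (B A : Set α) : Prop :=
  ∀ ⦃a⦄, a ∈ A → ∀ ⦃b⦄, b ∈ A → a < b → ∃ c ∈ B, a < c ∧ c < b

/-- The finite sets `A = {x₀ < x₁ < ⋯}` and `B = {y₀ < y₁ < ⋯}` strictly alternate, beginning
with `A`: `x₀ < y₀ < x₁ < y₁ < ⋯`. The elements of `A` are the values of `x : ℕ → α` at the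
indices below `m`, and those of `B` the values of `y : ℕ → α` at the indices below `n`; the other
values of `x` and `y` are irrelevant. -/
def StrictlyAlternate (A B : Set α) : Prop :=
  ∃ (m n : ℕ) (x y : ℕ → α),
    StrictMonoOn x (Set.Iio m) ∧ StrictMonoOn y (Set.Iio n) ∧
    A = x '' Set.Iio m ∧ B = y '' Set.Iio n ∧
    n ≤ m ∧ m ≤ n + 1 ∧
    (∀ i, i < n → x i < y i) ∧ ∀ i, i + 1 < m → y i < x (i + 1)

lemma Separates.inter_Ici {A B : Set α} {c : α} (h : Separates B A) :
    Separates (Set.Ici c ∩ B) (Set.Ici c ∩ A) := by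
  rintro a ⟨hca, haA⟩ b ⟨-, hbA⟩ hab
  obtain ⟨d, hdB, had, hdb⟩ := h haA hbA hab
  exact ⟨d, ⟨le_trans hca had.le, hdB⟩, had, hdb⟩

lemma exists_strictMonoOn_image_Iio_card_eq [Nonempty α] (s : Finset α) :
    ∃ x : ℕ → α, StrictMonoOn x (Set.Iio s.card) ∧ s = x '' Set.Iio s.card := by
  let e := s.orderEmbOfFin rfl
  let x : ℕ → α := Function.extend Fin.val e fun _ ↦ Classical.arbitrary α
  have hx (i : Fin s.card) : x i = e i := Fin.val_injective.extend_apply _ _ i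
  refine ⟨x, fun i hi j hj hij ↦ ?_, ?_⟩
  · rw [hx ⟨i, hi⟩, hx ⟨j, hj⟩]
    exact e.strictMono hij
  · rw [← Fin.range_val, ← Set.range_comp, ← s.range_orderEmbOfFin rfl]
    exact congrArg Set.range (funext hx).symm

lemma lt_and_lt_of_exists_between {x y : ℕ → α} {m n : ℕ} (hx : MonotoneOn x (Set.Iio m))
    (hzero : 0 < n → ∃ j < m, x j < y 0)
    (hsucc : ∀ i, i + 1 < n → ∃ j < m, y i < x j ∧ x j < y (i + 1)) :
    ∀ i < n, i < m ∧ x i < y i := by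
  intro i hi
  induction i with
  | zero =>
    obtain ⟨j, hjm, hj⟩ := hzero hi
    have hm : 0 < m := by omega
    exact ⟨hm, (hx hm hjm j.zero_le).trans_lt hj⟩
  | succ i ih =>
    obtain ⟨him, hxy⟩ := ih (by omega)
    obtain ⟨j, hjm, hyj, hjy⟩ := hsucc i hi
    have hij : i < j := hx.reflect_lt him hjm (hxy.trans hyj)
    have hm : i + 1 < m := by omega
    exact ⟨hm, (hx hm hjm hij).trans_lt hjy⟩

lemma StrictlyAlternate.of_separates [Nonempty α] {A B : Set α} (hA : A.Finite) (hB : B.Finite)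
    (hBA : Separates B A) (hAB : Separates A B) (hmin : ∀ b ∈ B, ∃ a ∈ A, a < b) :
    StrictlyAlternate A B := by
  obtain ⟨x, hx, hAx⟩ := exists_strictMonoOn_image_Iio_card_eq hA.toFinset
  obtain ⟨y, hy, hBy⟩ := exists_strictMonoOn_image_Iio_card_eq hB.toFinset
  generalize hA.toFinset.card = m at hx hAx
  generalize hB.toFinset.card = n at hy hBy
  rw [hA.coe_toFinset] at hAx
  rw [hB.coe_toFinset] at hBy
  subst hAx hBy
  simp only [Separates, Set.forall_mem_image, Set.exists_mem_image, Set.mem_Iio]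
    at hBA hAB hmin
  have hxy : ∀ i < n, i < m ∧ x i < y i :=
    lt_and_lt_of_exists_between hx.monotoneOn (hmin (x := 0)) fun i hi ↦
      hAB (by omega) hi (hy (by grind) hi i.lt_succ_self)
  have hyx : ∀ i < m - 1, i < n ∧ y i < x (i + 1) := by
    have hgap (i : ℕ) (hi : i + 1 < m) : ∃ j < n, x i < y j ∧ y j < x (i + 1) :=
      hBA (by omega) hi (hx (by grind) hi i.lt_succ_self)
    refine lt_and_lt_of_exists_between hy.monotoneOn (fun hm ↦ ?_) fun i hi ↦
      hgap (i + 1) (by omega)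
    obtain ⟨j, hj, -, hjx⟩ := hgap 0 (by omega)
    exact ⟨j, hj, hjx⟩
  refine ⟨m, n, x, y, hx, hy, rfl, rfl, ?_, ?_, fun i hi ↦ (hxy i hi).2,
    fun i hi ↦ (hyx i (by omega)).2⟩
  · by_contra! hmn
    exact (hxy m hmn).1.false
  · by_contra! hnm
    exact (hyx n (by omega)).1.false

end Interlacing

section Wronskian

lemma rootMultiplicity_eq_one_of_wronskian_ne_zero {R : Type*} [CommRing R] {g h : R[X]} {x : R}
    (hW : (wronskian g h).eval x ≠ 0) (hx : g.IsRoot x) : g.rootMultiplicity x = 1 := by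
  have hg : g ≠ 0 := by
    rintro rfl
    simp at hW
  refine le_antisymm (not_lt.1 fun hlt ↦ hW ?_) ((rootMultiplicity_pos hg).2 hx)
  have hx' := ((one_lt_rootMultiplicity_iff_isRoot hg).1 hlt).2
  simp [wronskian, hx.eq_zero, hx'.eq_zero]

variable {g h : ℝ[X]}

lemma exists_isRoot_of_wronskian_ne_zero {a b : ℝ} (hab : a < b) (ha : h.IsRoot a)
    (hb : h.IsRoot b) (hW : ∀ x ∈ Set.Icc a b, (wronskian g h).eval x ≠ 0) :
    ∃ c ∈ Set.Ioo a b, g.IsRoot c := by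
  by_contra! hg
  have hg_Icc : ∀ x ∈ Set.Icc a b, g.eval x ≠ 0 := by
    intro x hx hgx
    rcases Set.eq_endpoints_or_mem_Ioo_of_mem_Icc hx with rfl | rfl | hx'
    · exact hW x hx (by simp [wronskian, hgx, ha.eq_zero])
    · exact hW x hx (by simp [wronskian, hgx, hb.eq_zero])
    · exact hg x hx' hgx
  obtain ⟨c, hc, hderiv⟩ := exists_deriv_eq_zero (f := fun x ↦ h.eval x / g.eval x) hab
    (h.continuousOn.div g.continuousOn hg_Icc) (by simp [ha.eq_zero, hb.eq_zero])
  have hc' := Set.Ioo_subset_Icc_self hc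
  rw [((h.hasDerivAt c).fun_div (g.hasDerivAt c) (hg_Icc c hc')).deriv, div_eq_zero_iff,
    or_iff_left (pow_ne_zero 2 (hg_Icc c hc'))] at hderiv
  refine hW c hc' ?_
  simp only [wronskian, eval_sub, eval_mul]
  linear_combination hderiv

lemma separates_roots_of_wronskian_ne_zero (hW : ∀ x, (wronskian g h).eval x ≠ 0) :
    Separates {x | g.IsRoot x} {x | h.IsRoot x} := by
  intro a ha b hb hab
  obtain ⟨c, ⟨hac, hcb⟩, hc⟩ := exists_isRoot_of_wronskian_ne_zero hab ha hb fun x _ ↦ hW x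
  exact ⟨c, hc, hac, hcb⟩

lemma strictlyAlternate_nonneg_roots_of_wronskian_ne_zero
    (hW : ∀ x, (wronskian g (X * h)).eval x ≠ 0) :
    StrictlyAlternate {x | 0 ≤ x ∧ g.IsRoot x} {x | 0 ≤ x ∧ h.IsRoot x} := by
  have hW_swap (x : ℝ) : (wronskian (X * h) g).eval x ≠ 0 := by
    simpa [← wronskian_neg_eq g] using hW x
  have hg : g ≠ 0 := by
    rintro rfl
    simp at hW
  have hh : h ≠ 0 := by
    rintro rfl
    simp at hW
  have h_sep := (separates_roots_of_wronskian_ne_zero hW).inter_Ici (c := 0)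
  have g_sep := (separates_roots_of_wronskian_ne_zero hW_swap).inter_Ici (c := 0)
  have isRoot_X_mul {x : ℝ} (hx : h.IsRoot x) : (X * h).IsRoot x := by simp [hx.eq_zero]
  refine .of_separates ((finite_setOfPred_isRoot hg).subset fun x hx ↦ hx.2)
    ((finite_setOfPred_isRoot hh).subset fun x hx ↦ hx.2) ?_ ?_ ?_
  · rintro a ha b hb hab
    obtain ⟨c, ⟨hc0, hc⟩, hac, hcb⟩ := g_sep ha hb hab
    have hc_ne : c ≠ 0 := (ha.1.trans_lt hac).ne'
    exact ⟨c, ⟨hc0, by simpa [hc_ne] using hc⟩, hac, hcb⟩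
  · rintro a ⟨ha0, ha⟩ b ⟨hb0, hb⟩ hab
    exact h_sep ⟨ha0, isRoot_X_mul ha⟩ ⟨hb0, isRoot_X_mul hb⟩ hab
  · rintro b ⟨hb0, hb⟩
    have hb_ne : 0 ≠ b := by
      rintro rfl
      exact hW 0 (by simp [wronskian, hb.eq_zero])
    obtain ⟨c, hc, -, hcb⟩ :=
      h_sep ⟨Set.self_mem_Ici, by simp⟩ ⟨hb0, isRoot_X_mul hb⟩ (hb0.lt_of_ne hb_ne)
    exact ⟨c, hc, hcb⟩

end Wronskian

/-- A real polynomial whose complex roots are all real and simple. The zero polynomial qualifies,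
as its multiset of roots is empty. -/
def HasSimpleRealRoots (g : ℝ[X]) : Prop :=
  ∀ z ∈ g.aroots ℂ, z.im = 0 ∧ (g.aroots ℂ).count z = 1

namespace HasSimpleRealRoots

variable {g h : ℝ[X]}

lemma of_dvd (hh : HasSimpleRealRoots h) (hh0 : h ≠ 0) (hgh : g ∣ h) : HasSimpleRealRoots g := by
  have hle : g.aroots ℂ ≤ h.aroots ℂ :=
    roots.le_of_dvd (map_ne_zero hh0) (map_dvd (mapRingHom (algebraMap ℝ ℂ)) hgh)
  intro z hz
  obtain ⟨him, hcount⟩ := hh z (Multiset.mem_of_le hle hz)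
  exact ⟨him, le_antisymm (hcount ▸ Multiset.count_le_of_le z hle)
    (Multiset.one_le_count_iff_mem.2 hz)⟩

lemma of_wronskian_ne_zero (hreal : ∀ z ∈ g.aroots ℂ, z.im = 0)
    (hW : ∀ x, (wronskian g h).eval x ≠ 0) : HasSimpleRealRoots g := by
  intro z hz
  refine ⟨hreal z hz, ?_⟩
  obtain ⟨x, rfl⟩ : ∃ x : ℝ, (x : ℂ) = z := ⟨z.re, Complex.ext rfl (hreal z hz).symm⟩
  have hx : g.IsRoot x :=
    Complex.ofReal_eq_zero.1 ((aeval_ofReal g x).symm.trans (mem_aroots.1 hz).2)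
  rw [count_roots, ← Complex.coe_algebraMap, ← eq_rootMultiplicity_map (algebraMap ℝ ℂ).injective]
  exact rootMultiplicity_eq_one_of_wronskian_ne_zero (hW x) hx

end HasSimpleRealRoots

lemma map_multiset_sum_pos {M N : Type*} [AddCommMonoid M] [AddCommMonoid N] [PartialOrder N]
    [IsOrderedCancelAddMonoid N] (φ : M →+ N) {s : Multiset M} (hs : s ≠ 0)
    (hpos : ∀ r ∈ s, 0 < φ r) : 0 < φ s.sum := by
  simpa [map_multiset_sum] using Multiset.sum_lt_sum_of_nonempty (f := fun _ ↦ 0) hs hpos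

lemma norm_conj_sub_lt_norm_sub {z r : ℂ} (hz : z.im < 0) (hr : 0 < r.im) :
    ‖conj z - r‖ < ‖z - r‖ := by
  rw [← sq_lt_sq₀ (norm_nonneg _) (norm_nonneg _), ← Complex.normSq_eq_norm_sq,
    ← Complex.normSq_eq_norm_sq, Complex.normSq_apply, Complex.normSq_apply]
  simp only [Complex.sub_re, Complex.sub_im, Complex.conj_re, Complex.conj_im]
  nlinarith

lemma norm_eval_eq_norm_leadingCoeff_mul_prod_roots {K : Type*} [NormedField K] {F : K[X]}
    (hF : F.Splits) (z : K) :
    ‖F.eval z‖ = ‖F.leadingCoeff‖ * (F.roots.map fun r ↦ ‖z - r‖).prod := by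
  have hprod : ‖(F.roots.map (z - ·)).prod‖ = (F.roots.map fun r ↦ ‖z - r‖).prod :=
    (map_multiset_prod (normHom : K →*₀ ℝ) _).trans (congrArg _ (Multiset.map_map ..))
  rw [hF.eval_eq_prod_roots, norm_mul, hprod]

/-- A polynomial of the Hermite–Biehler class: all its roots lie in the open upper half-plane. The
zero polynomial qualifies, as its multiset of roots is empty. -/
def IsHermiteBiehler (F : ℂ[X]) : Prop :=
  ∀ z ∈ F.roots, 0 < z.im

/-- The complex polynomial `g + i h`, whose real and imaginary parts on the real line are `g` and
`h`. -/
noncomputable def ofReIm (g h : ℝ[X]) : ℂ[X] :=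
  g.map (algebraMap ℝ ℂ) + C Complex.I * h.map (algebraMap ℝ ℂ)

@[simp]
lemma eval_ofReIm (g h : ℝ[X]) (z : ℂ) :
    (ofReIm g h).eval z = aeval z g + Complex.I * aeval z h := by
  simp [ofReIm]

lemma eval_ofReIm_ofReal (g h : ℝ[X]) (x : ℝ) :
    (ofReIm g h).eval (x : ℂ) = ⟨g.eval x, h.eval x⟩ := by
  have haeval (k : ℝ[X]) : aeval (x : ℂ) k = (k.eval x : ℝ) := aeval_ofReal k x
  rw [eval_ofReIm, haeval, haeval, mul_comm, ← Complex.mk_eq_add_mul_I]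

lemma derivative_ofReIm (g h : ℝ[X]) :
    derivative (ofReIm g h) = ofReIm (derivative g) (derivative h) := by
  simp [ofReIm, derivative_map]

namespace IsHermiteBiehler

variable {F : ℂ[X]} {g h : ℝ[X]}

lemma norm_eval_conj_lt (hF : IsHermiteBiehler F) (hdeg : F.natDegree ≠ 0) {z : ℂ}
    (hz : z.im < 0) : ‖F.eval (conj z)‖ < ‖F.eval z‖ := by
  have hF0 : F ≠ 0 := ne_zero_of_natDegree_gt (Nat.pos_of_ne_zero hdeg)
  have hsplits : F.Splits := IsAlgClosed.splits F
  by_cases hconj : F.eval (conj z) = 0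
  · rw [hconj, norm_zero, norm_pos_iff]
    exact fun hFz ↦ hz.not_gt (hF z ((mem_roots hF0).2 hFz))
  · rw [norm_eval_eq_norm_leadingCoeff_mul_prod_roots hsplits,
      norm_eval_eq_norm_leadingCoeff_mul_prod_roots hsplits]
    refine mul_lt_mul_of_pos_left (Multiset.prod_map_lt_prod_map
      (hsplits.roots_ne_zero hdeg) _ _ (fun r hr ↦ ?_) fun r hr ↦ ?_) (by simpa using hF0)
    · rw [norm_pos_iff, sub_ne_zero]
      rintro rfl
      exact hconj ((mem_roots hF0).1 hr)
    · exact norm_conj_sub_lt_norm_sub hz (hF r hr)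

lemma im_eq_zero_of_norm_eval_conj_eq (hF : IsHermiteBiehler F) (hdeg : F.natDegree ≠ 0) {z : ℂ}
    (hz : ‖F.eval (conj z)‖ = ‖F.eval z‖) : z.im = 0 := by
  rcases lt_trichotomy z.im 0 with hneg | hzero | hpos
  · exact absurd hz (hF.norm_eval_conj_lt hdeg hneg).ne
  · exact hzero
  · have hlt := hF.norm_eval_conj_lt hdeg (z := conj z) (by simpa using hpos)
    rw [Complex.conj_conj] at hlt
    exact absurd hz hlt.ne'

lemma eval_ofReal_ne_zero (hF : IsHermiteBiehler F) (hF0 : F ≠ 0) (x : ℝ) :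
    F.eval (x : ℂ) ≠ 0 := by
  intro hx
  simpa using hF x ((mem_roots hF0).2 hx)

lemma im_eval_derivative_div_eval_pos (hF : IsHermiteBiehler F) (hdeg : F.natDegree ≠ 0) (x : ℝ) :
    0 < (F.derivative.eval (x : ℂ) / F.eval (x : ℂ)).im := by
  have hF0 : F ≠ 0 := ne_zero_of_natDegree_gt (Nat.pos_of_ne_zero hdeg)
  have hsplits : F.Splits := IsAlgClosed.splits F
  have hx := hF.eval_ofReal_ne_zero hF0 x
  rw [hsplits.eval_derivative_div_eval_of_ne_zero hx]
  refine map_multiset_sum_pos Complex.imAddGroupHom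
    (by simpa using hsplits.roots_ne_zero hdeg) fun w hw ↦ ?_
  obtain ⟨r, hr, rfl⟩ := Multiset.mem_map.1 hw
  have hxr : (x : ℂ) - r ≠ 0 := by
    rw [sub_ne_zero]
    rintro rfl
    exact hx ((mem_roots hF0).1 hr)
  have hr_im := hF r hr
  simpa [Complex.inv_im] using div_pos hr_im (Complex.normSq_pos.2 hxr)

section RealAndImaginaryParts

variable (hF : IsHermiteBiehler (ofReIm g h)) (hdeg : (ofReIm g h).natDegree ≠ 0)
include hF hdeg

lemma im_eq_zero_of_mem_aroots_left : ∀ z ∈ g.aroots ℂ, z.im = 0 := by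
  intro z hz
  apply hF.im_eq_zero_of_norm_eval_conj_eq hdeg
  simp [aeval_conj, (mem_aroots.1 hz).2]

lemma im_eq_zero_of_mem_aroots_right : ∀ z ∈ h.aroots ℂ, z.im = 0 := by
  intro z hz
  apply hF.im_eq_zero_of_norm_eval_conj_eq hdeg
  simp [aeval_conj, (mem_aroots.1 hz).2]

lemma wronskian_pos (x : ℝ) : 0 < (wronskian g h).eval x := by
  have hF0 : ofReIm g h ≠ 0 := ne_zero_of_natDegree_gt (Nat.pos_of_ne_zero hdeg)
  have hpos := hF.im_eval_derivative_div_eval_pos hdeg x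
  rw [Complex.div_im, ← sub_div,
    div_pos_iff_of_pos_right (Complex.normSq_pos.2 (hF.eval_ofReal_ne_zero hF0 x)),
    derivative_ofReIm, eval_ofReIm_ofReal, eval_ofReIm_ofReal] at hpos
  simp only [wronskian, eval_sub, eval_mul]
  linarith

lemma hasSimpleRealRoots_left : HasSimpleRealRoots g :=
  .of_wronskian_ne_zero (hF.im_eq_zero_of_mem_aroots_left hdeg) fun x ↦
    (hF.wronskian_pos hdeg x).ne'

lemma hasSimpleRealRoots_right : HasSimpleRealRoots h :=
  .of_wronskian_ne_zero (h := g) (hF.im_eq_zero_of_mem_aroots_right hdeg) fun x ↦ by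
    simpa [← wronskian_neg_eq g] using (hF.wronskian_pos hdeg x).ne'

end RealAndImaginaryParts

end IsHermiteBiehler

/-- Hurwitz stability: all roots lie in the open left half-plane. The zero polynomial qualifies,
as its multiset of roots is empty. -/
def IsHurwitzStable (f : ℂ[X]) : Prop :=
  ∀ z ∈ f.roots, z.re < 0

namespace IsHurwitzStable

lemma isHermiteBiehler_comp {f : ℂ[X]} (hf : IsHurwitzStable f) :
    IsHermiteBiehler (f.comp (C Complex.I * X)) := by
  intro z hz
  have hroot : f.IsRoot (Complex.I * z) := by
    simpa [IsRoot, eval_comp] using isRoot_of_mem_roots hz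
  have hf0 : f ≠ 0 := by
    rintro rfl
    simp at hz
  simpa using hf _ ((mem_roots hf0).2 hroot)

lemma nextCoeff_pos {f : ℝ[X]} (hf : IsHurwitzStable (f.map (algebraMap ℝ ℂ)))
    (hdeg : f.natDegree ≠ 0) (hlead : 0 < f.leadingCoeff) : 0 < f.nextCoeff := by
  have hsplits : (f.map (algebraMap ℝ ℂ)).Splits := IsAlgClosed.splits _
  have hsum : 0 < -(f.map (algebraMap ℝ ℂ)).roots.sum.re :=
    map_multiset_sum_pos (-Complex.reAddGroupHom) (hsplits.roots_ne_zero (by simpa using hdeg))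
      fun r hr ↦ by simpa using hf r hr
  have hnext := congrArg Complex.re hsplits.nextCoeff_eq_neg_sum_roots_mul_leadingCoeff
  rw [nextCoeff_map (algebraMap ℝ ℂ).injective, leadingCoeff_map] at hnext
  calc 0 < f.leadingCoeff * -(f.map (algebraMap ℝ ℂ)).roots.sum.re := mul_pos hlead hsum
    _ = f.nextCoeff := by simpa using hnext.symm

end IsHurwitzStable

lemma map_comp_I_mul_X_eq_ofReIm (p q : ℝ[X]) :
    ((p.comp (X ^ 2) + X * q.comp (X ^ 2)).map (algebraMap ℝ ℂ)).comp (C Complex.I * X) =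
      ofReIm (p.comp (-X ^ 2)) (X * q.comp (-X ^ 2)) := by
  have hsq : (C Complex.I * X : ℂ[X]) ^ 2 = -X ^ 2 := by
    rw [mul_pow, ← C_pow, Complex.I_sq, C_neg, C_1, neg_one_mul]
  simp only [ofReIm, Polynomial.map_add, Polynomial.map_mul, Polynomial.map_comp,
    Polynomial.map_pow, Polynomial.map_neg, map_X, add_comp, mul_comp, comp_assoc, X_comp,
    X_pow_comp, hsq]
  ring

/-- **Hermite–Biehler Theorem** (necessity).  Let `f(x) = a₀xⁿ + a₁xⁿ⁻¹ + ⋯ + aₙ` be a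
real polynomial of degree `n ≥ 1` with `a₀ > 0`, written as `f(x) = p(x²) + x·q(x²)`.
If `f` is Hurwitz stable, then every (complex) root of `p(-x²)` and of `q(-x²)` is real
and simple, `a₁ > 0`, and the distinct nonnegative real roots
`x_{e1} < x_{e2} < ⋯` of `p(-x²)` and `x_{o1} < x_{o2} < ⋯` of `q(-x²)` satisfy
`0 < x_{e1} < x_{o1} < x_{e2} < x_{o2} < ⋯`. -/
theorem hermite_biehler_necessity
    (f p q pe qe : Polynomial ℝ)
    (hn : 1 ≤ f.natDegree)
    (hlead : 0 < f.leadingCoeff)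
    (hpq : f = p.comp (Polynomial.X ^ 2) + Polynomial.X * q.comp (Polynomial.X ^ 2))
    (hpe : pe = p.comp (-(Polynomial.X ^ 2)))
    (hqe : qe = q.comp (-(Polynomial.X ^ 2)))
    (hstable : ∀ z ∈ (f.map (algebraMap ℝ ℂ)).roots, z.re < 0) :
    (∀ z ∈ (pe.map (algebraMap ℝ ℂ)).roots,
      z.im = 0 ∧ (pe.map (algebraMap ℝ ℂ)).roots.count z = 1) ∧
    (∀ z ∈ (qe.map (algebraMap ℝ ℂ)).roots,
      z.im = 0 ∧ (qe.map (algebraMap ℝ ℂ)).roots.count z = 1) ∧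
    0 < f.coeff (f.natDegree - 1) ∧
    ∃ (se so : ℕ) (xe xo : ℕ → ℝ),
      StrictMonoOn xe (Set.Iio se) ∧ StrictMonoOn xo (Set.Iio so) ∧
      {x : ℝ | 0 ≤ x ∧ pe.IsRoot x} = xe '' (Set.Iio se) ∧
      {x : ℝ | 0 ≤ x ∧ qe.IsRoot x} = xo '' (Set.Iio so) ∧
      so ≤ se ∧ se ≤ so + 1 ∧
      (∀ i, i < se → 0 < xe i) ∧
      (∀ i, i < so → xe i < xo i) ∧
      (∀ i, i + 1 < se → xo i < xe (i + 1)) := by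
  have hdeg : f.natDegree ≠ 0 := by omega
  have hrotate : (f.map (algebraMap ℝ ℂ)).comp (C Complex.I * X) = ofReIm pe (X * qe) := by
    rw [hpq, hpe, hqe, map_comp_I_mul_X_eq_ofReIm]
  have hF : IsHermiteBiehler (ofReIm pe (X * qe)) :=
    hrotate ▸ IsHurwitzStable.isHermiteBiehler_comp hstable
  have hFdeg : (ofReIm pe (X * qe)).natDegree ≠ 0 := by
    simpa [← hrotate, natDegree_comp] using hdeg
  have hW (x : ℝ) : (wronskian pe (X * qe)).eval x ≠ 0 := (hF.wronskian_pos hFdeg x).ne'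
  have hXqe : X * qe ≠ 0 := fun h ↦ hW 0 (by simp [h])
  have hpe_zero : ¬ pe.IsRoot 0 := fun h ↦ hW 0 (by simp [wronskian, h.eq_zero])
  refine ⟨hF.hasSimpleRealRoots_left hFdeg,
    (hF.hasSimpleRealRoots_right hFdeg).of_dvd hXqe (dvd_mul_left qe X),
    nextCoeff_of_natDegree_pos hn ▸ IsHurwitzStable.nextCoeff_pos hstable hdeg hlead, ?_⟩
  obtain ⟨se, so, xe, xo, hxe, hxo, hpe_roots, hqe_roots, hle, hle_succ, hlt, hlt_succ⟩ :=
    strictlyAlternate_nonneg_roots_of_wronskian_ne_zero hW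
  refine ⟨se, so, xe, xo, hxe, hxo, hpe_roots, hqe_roots, hle, hle_succ, fun i hi ↦ ?_,
    hlt, hlt_succ⟩
  have hi_root : 0 ≤ xe i ∧ pe.IsRoot (xe i) := hpe_roots.symm.subset ⟨i, hi, rfl⟩
  exact hi_root.1.lt_of_ne fun h ↦ hpe_zero (h ▸ hi_root.2)
end

section
/- Let f be a real polynomial of degree n with a simple positive real root r, and suppose every other root of f lies in the wedge S_{√3} := {-α + iβ : α > 0, |β| ≤ √3·α}. Then the sequence of coefficients a_0, a_1, ..., a_n of f (where f(x) = a_0 x^n + a_1 x^{n-1} + ... + a_n, a_0 ≠ 0) has precisely one sign change. -/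
/-!
Write `f = (X - r) * g`. The roots of `g` pair up into real factors `X + a` and `X² + b X + c`, and
the wedge condition makes `a, b, c ≥ 0` and `c ≤ b²`, i.e. it gives each factor a log-concave
coefficient sequence. Log-concavity without internal zeros means that the Toeplitz matrix of the
sequence is `TP₂`; multiplying polynomials multiplies these matrices, and products of `TP₂` matrices
are `TP₂`, so `g` is log-concave up to sign. Hence the ratios `gₖ₋₁ / gₖ` increase weakly with `k`,
and the coefficients `gₖ₋₁ - r gₖ` of `f` change sign exactly once.
-/

open Polynomial

/-- The number of sign changes of the finite real sequence `c 0, c 1, …, c m`: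
the number of pairs `i < j ≤ m` with `c i * c j < 0` and `c l = 0` for all `i < l < j`. -/
noncomputable def signChanges (m : ℕ) (c : ℕ → ℝ) : ℕ :=
  {p : ℕ × ℕ | p.1 < p.2 ∧ p.2 ≤ m ∧ c p.1 * c p.2 < 0 ∧
    ∀ l, p.1 < l → l < p.2 → c l = 0}.ncard

/-- A matrix is totally positive of order two (`TP₂`) if all its minors of size one and two are
nonnegative. The condition on `2 × 2` minors is written without subtraction. -/
structure IsTP2 {ι κ R : Type*} [LT ι] [LT κ] [Zero R] [Mul R] [LE R] (A : Matrix ι κ R) :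
    Prop where
  nonneg : ∀ i j, 0 ≤ A i j
  minor : ∀ ⦃i i' j j'⦄, i < i' → j < j' → A i j' * A i' j ≤ A i j * A i' j'

/-- The lower triangular Toeplitz matrix `(aᵢ₋ⱼ)` of the coefficient sequence of a polynomial: the
matrix of multiplication by `p` in the monomial basis. It is `TP₂` exactly when the coefficients
form a nonnegative log-concave sequence without internal zeros. -/
noncomputable def toeplitz {R : Type*} [Semiring R] (p : R[X]) : Matrix ℕ ℕ R :=
  .of fun i j => (X ^ j * p).coeff i

/-- The wedge `S_{√3}` together with its apex `0`: a root at `0` contributes the factor `X`, which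
preserves log-concavity as well. -/
def closedWedge : Set ℂ := {z | |z.im| ≤ √3 * -z.re}

lemma IsTP2.submatrix {ι κ ι' κ' R : Type*} [Preorder ι] [Preorder κ] [Preorder ι'] [Preorder κ']
    [Zero R] [Mul R] [LE R] {A : Matrix ι κ R} (hA : IsTP2 A) {f : ι' → ι} {g : κ' → κ}
    (hf : StrictMono f) (hg : StrictMono g) : IsTP2 (A.submatrix f g) where
  nonneg _ _ := hA.nonneg _ _
  minor _ _ _ _ hi hj := hA.minor (hf hi) (hg hj)

-- This is the four functions theorem on the chain `κ`, its hypothesis being the `TP₂` inequality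
-- of `B` when `k ≤ l` and of `A` when `l ≤ k`.
lemma IsTP2.mul {ι κ ν R : Type*} [LT ι] [LinearOrder κ] [Fintype κ] [LT ν]
    [CommRing R] [LinearOrder R] [IsStrictOrderedRing R] {A : Matrix ι κ R} {B : Matrix κ ν R}
    (hA : IsTP2 A) (hB : IsTP2 B) : IsTP2 (A * B) where
  nonneg i j := Finset.sum_nonneg fun k _ => mul_nonneg (hA.nonneg i k) (hB.nonneg k j)
  minor i i' j j' hi hj := by
    simp only [Matrix.mul_apply]
    have nonneg (i : ι) (j : ν) : 0 ≤ fun k => A i k * B k j :=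
      fun k => mul_nonneg (hA.nonneg i k) (hB.nonneg k j)
    refine four_functions_theorem_univ _ _ _ _ (nonneg i j') (nonneg i' j) (nonneg i j)
      (nonneg i' j') fun k l => ?_
    rcases lt_trichotomy k l with hkl | rfl | hlk
    · rw [inf_eq_left.2 hkl.le, sup_eq_right.2 hkl.le, mul_mul_mul_comm,
        mul_mul_mul_comm _ _ (A i' l)]
      exact mul_le_mul_of_nonneg_left (hB.minor hkl hj) (mul_nonneg (hA.nonneg _ _) (hA.nonneg _ _))
    · rw [inf_idem, sup_idem]
      exact le_of_eq (by ring)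
    · rw [inf_eq_right.2 hlk.le, sup_eq_left.2 hlk.le, mul_mul_mul_comm,
        mul_mul_mul_comm _ _ (A i' k), mul_comm (B k j')]
      exact mul_le_mul_of_nonneg_right (hA.minor hi hlk)
        (mul_nonneg (hB.nonneg _ _) (hB.nonneg _ _))

section Toeplitz

lemma toeplitz_apply {R : Type*} [Semiring R] (p : R[X]) (i j : ℕ) :
    toeplitz p i j = if j ≤ i then p.coeff (i - j) else 0 := by
  simp only [toeplitz, Matrix.of_apply, coeff_X_pow_mul']

lemma toeplitz_zero_right {R : Type*} [Semiring R] (p : R[X]) (i : ℕ) :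
    toeplitz p i 0 = p.coeff i := by
  simp [toeplitz]

lemma IsTP2.coeff_nonneg {R : Type*} [Semiring R] [LE R] {p : R[X]} (hp : IsTP2 (toeplitz p))
    (k : ℕ) : 0 ≤ p.coeff k :=
  toeplitz_zero_right p k ▸ hp.nonneg k 0

lemma toeplitz_mul_apply {R : Type*} [CommSemiring R] (p q : R[X]) {N i : ℕ} (hi : i < N) (j : ℕ) :
    toeplitz (p * q) i j = ∑ k : Fin N, toeplitz p i k * toeplitz q k j := by
  rw [Fin.sum_univ_eq_sum_range fun k => toeplitz p i k * toeplitz q k j]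
  calc toeplitz (p * q) i j
      = ((X ^ j * q) * p).coeff i := by rw [toeplitz, Matrix.of_apply, mul_comm p, mul_assoc]
    _ = ∑ k ∈ Finset.range (i + 1), (X ^ j * q).coeff k * p.coeff (i - k) := by
        rw [coeff_mul, Finset.Nat.sum_antidiagonal_eq_sum_range_succ_mk]
    _ = ∑ k ∈ Finset.range (i + 1), toeplitz p i k * toeplitz q k j := by
        refine Finset.sum_congr rfl fun k hk => ?_
        rw [toeplitz_apply p, if_pos (Finset.mem_range_succ_iff.1 hk), mul_comm, toeplitz,
          Matrix.of_apply]
    _ = ∑ k ∈ Finset.range N, toeplitz p i k * toeplitz q k j := by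
        refine Finset.sum_subset (Finset.range_mono hi) fun k _ hk => ?_
        rw [toeplitz_apply p, if_neg (by simpa using hk), zero_mul]

variable {R : Type*} [CommRing R] [LinearOrder R] [IsStrictOrderedRing R]

lemma IsTP2.toeplitz_mul {p q : R[X]} (hp : IsTP2 (toeplitz p)) (hq : IsTP2 (toeplitz q)) :
    IsTP2 (toeplitz (p * q)) := by
  have truncated (N : ℕ) :
      IsTP2 ((toeplitz p).submatrix id ((↑) : Fin N → ℕ) * (toeplitz q).submatrix (↑) id) :=
    (hp.submatrix strictMono_id Fin.val_strictMono).mul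
      (hq.submatrix Fin.val_strictMono strictMono_id)
  refine ⟨fun i j => ?_, fun i i' j j' hi hj => ?_⟩
  · rw [toeplitz_mul_apply p q i.lt_succ_self]
    exact (truncated _).nonneg i j
  · have hi' : i < i' + 1 := hi.trans i'.lt_succ_self
    simp only [toeplitz_mul_apply p q hi', toeplitz_mul_apply p q i'.lt_succ_self]
    exact (truncated _).minor hi hj

lemma isTP2_toeplitz_quadratic {a b c : R} (ha : 0 ≤ a) (hb : 0 ≤ b) (hc : 0 ≤ c)
    (hconcave : a * c ≤ b ^ 2) : IsTP2 (toeplitz (C a * X ^ 2 + C b * X + C c)) := by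
  set p := C a * X ^ 2 + C b * X + C c with hp
  have coeff_eq_zero {k : ℕ} (hk : 2 < k) : p.coeff k = 0 :=
    coeff_eq_zero_of_natDegree_lt (natDegree_quadratic_le.trans_lt hk)
  have coeff_zero : p.coeff 0 = c := by simp [hp]
  have coeff_one : p.coeff 1 = b := by simp [hp]
  have coeff_two : p.coeff 2 = a := by simp [hp]
  have entry_nonneg (i j : ℕ) : 0 ≤ toeplitz p i j := by
    rw [toeplitz_apply]
    split_ifs
    · rcases i - j with _ | _ | _ | k
      exacts [coeff_zero ▸ hc, coeff_one ▸ hb, coeff_two ▸ ha, (coeff_eq_zero (by omega)).ge]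
    · exact le_rfl
  refine ⟨entry_nonneg, fun i i' j j' hi hj => ?_⟩
  by_cases hband : j' ≤ i ∧ i' ≤ j + 2
  · obtain ⟨rfl, rfl, rfl⟩ : i = j + 1 ∧ i' = j + 2 ∧ j' = j + 1 := by omega
    simpa [toeplitz_apply, coeff_zero, coeff_one, coeff_two, mul_comm c, ← sq] using hconcave
  · suffices toeplitz p i j' * toeplitz p i' j = 0 from
      this ▸ mul_nonneg (entry_nonneg _ _) (entry_nonneg _ _)
    rcases not_and_or.1 hband with h | h
    · rw [toeplitz_apply, if_neg h, zero_mul]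
    · rw [toeplitz_apply p i' j, coeff_eq_zero (by omega), ite_self, mul_zero]

end Toeplitz

lemma norm_le_of_mem_closedWedge {z : ℂ} (hz : z ∈ closedWedge) : ‖z‖ ≤ -(2 * z.re) := by
  have him : |z.im| ≤ √3 * -z.re := hz
  have hre : 0 ≤ -z.re := nonneg_of_mul_nonneg_right ((abs_nonneg _).trans him) (by positivity)
  have him_sq : z.im ^ 2 ≤ 3 * z.re ^ 2 := by
    calc z.im ^ 2 ≤ (√3 * -z.re) ^ 2 := sq_le_sq' (abs_le.1 him).1 (abs_le.1 him).2
      _ = 3 * z.re ^ 2 := by rw [mul_pow, Real.sq_sqrt (by norm_num), neg_sq]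
  refine le_of_sq_le_sq ?_ (by linarith)
  rw [Complex.sq_norm, Complex.normSq_apply]
  linarith

lemma eq_linear_or_quadratic_of_irreducible {p : ℝ[X]} (hp : Irreducible p) (hmonic : p.Monic)
    {z : ℂ} (hz : aeval z p = 0) :
    p = X - C z.re ∨ p = X ^ 2 - C (2 * z.re) * X + C (‖z‖ ^ 2) := by
  by_cases him : z.im = 0
  · left
    have hroot : p.IsRoot z.re := by
      rw [← Complex.conj_eq_iff_im, Complex.conj_eq_iff_re] at him
      rwa [← him, ← Complex.coe_algebraMap, aeval_algebraMap_apply, map_eq_zero] at hz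
    exact (eq_of_monic_of_associated (monic_X_sub_C _) hmonic
      ((irreducible_X_sub_C _).associated_of_dvd hp (dvd_iff_isRoot.2 hroot))).symm
  · right
    have hdeg : (X ^ 2 - C (2 * z.re) * X + C (‖z‖ ^ 2)).natDegree = 2 := by compute_degree!
    exact eq_of_monic_of_dvd_of_natDegree_le (by monicity!) hmonic
      (quadratic_dvd_of_aeval_eq_zero_im_ne_zero p hz him) (hp.natDegree_le_two.trans_eq hdeg.symm)

lemma isTP2_toeplitz_of_irreducible_of_roots_mem_closedWedge {p : ℝ[X]}
    (hp : Irreducible p) (hmonic : p.Monic)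
    (hroots : ∀ z : ℂ, aeval z p = 0 → z ∈ closedWedge) : IsTP2 (toeplitz p) := by
  obtain ⟨z, hz⟩ : ∃ z : ℂ, aeval z p = 0 :=
    IsAlgClosed.exists_aeval_eq_zero _ p (degree_pos_of_irreducible hp).ne'
  have hnorm : ‖z‖ ≤ -(2 * z.re) := norm_le_of_mem_closedWedge (hroots z hz)
  have hre : 0 ≤ -(2 * z.re) := (norm_nonneg z).trans hnorm
  rcases eq_linear_or_quadratic_of_irreducible hp hmonic hz with rfl | rfl
  · have hTP : IsTP2 (toeplitz (C 0 * X ^ 2 + C 1 * X + C (-z.re))) :=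
      isTP2_toeplitz_quadratic le_rfl zero_le_one (by linarith) (by norm_num)
    simpa [sub_eq_add_neg] using hTP
  · have hTP : IsTP2 (toeplitz (C 1 * X ^ 2 + C (-(2 * z.re)) * X + C (‖z‖ ^ 2))) :=
      isTP2_toeplitz_quadratic zero_le_one hre (sq_nonneg _)
        (by rw [one_mul]; exact pow_le_pow_left₀ (norm_nonneg z) hnorm 2)
    simpa [sub_eq_add_neg] using hTP

lemma isTP2_toeplitz_of_monic_of_roots_mem_closedWedge {p : ℝ[X]} (hmonic : p.Monic)
    (hroots : ∀ z : ℂ, aeval z p = 0 → z ∈ closedWedge) : IsTP2 (toeplitz p) := by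
  rw [← leadingCoeff_mul_prod_normalizedFactors p, hmonic.leadingCoeff, C_1, one_mul]
  refine Multiset.prod_induction (fun q => IsTP2 (toeplitz q)) _ (fun _ _ => IsTP2.toeplitz_mul)
    ?_ fun q hq => ?_
  · have hTP : IsTP2 (toeplitz (C 0 * X ^ 2 + C 0 * X + C (1 : ℝ))) :=
      isTP2_toeplitz_quadratic le_rfl le_rfl zero_le_one (by norm_num)
    simpa using hTP
  · obtain ⟨hirr, hqmonic, hdvd⟩ := (Polynomial.mem_normalizedFactors_iff hmonic.ne_zero).1 hq
    exact isTP2_toeplitz_of_irreducible_of_roots_mem_closedWedge hirr hqmonic fun z hz =>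
      hroots z (aeval_eq_zero_of_dvd_aeval_eq_zero hdvd hz)

lemma signChanges_const_mul (m : ℕ) (c : ℕ → ℝ) {a : ℝ} (ha : a ≠ 0) :
    signChanges m (fun i => a * c i) = signChanges m c := by
  have hneg (x y : ℝ) : a * x * (a * y) < 0 ↔ x * y < 0 := by
    rw [mul_mul_mul_comm, ← neg_pos, ← mul_neg, mul_pos_iff_of_pos_left (mul_self_pos.2 ha),
      neg_pos]
  simp only [signChanges, hneg, mul_eq_zero, ha, false_or]

lemma signChanges_eq_one_of_nonpos_after_neg {m : ℕ} {c : ℕ → ℝ}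
    (hpos : ∃ i ≤ m, 0 < c i) (hneg : ∃ i ≤ m, c i < 0)
    (hle : ∀ i j, i < j → j ≤ m → c i < 0 → c j ≤ 0) : signChanges m c = 1 := by
  obtain ⟨p, ⟨hpm, hp⟩, hp_last⟩ : ∃ p, IsGreatest {i | i ≤ m ∧ 0 < c i} p :=
    ⟨_, Nat.sSup_mem hpos ⟨m, fun _ h => h.1⟩, fun _ h => le_csSup ⟨m, fun _ h => h.1⟩ h⟩
  obtain ⟨q, ⟨hqm, hq⟩, hq_first⟩ : ∃ q, IsLeast {i | i ≤ m ∧ c i < 0} q :=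
    ⟨_, Nat.sInf_mem hneg, fun _ h => Nat.sInf_le h⟩
  have hpq : p < q := by
    by_contra! hqp
    rcases hqp.lt_or_eq with hlt | rfl
    · exact (hle q p hlt hpm hq).not_gt hp
    · exact hp.not_gt hq
  refine Set.ncard_eq_one.2 ⟨(p, q), Set.eq_singleton_iff_unique_mem.2
    ⟨⟨hpq, hqm, mul_neg_of_pos_of_neg hp hq, fun l hpl hlq => ?_⟩, ?_⟩⟩
  · exact le_antisymm (not_lt.1 fun h => (hp_last ⟨hlq.le.trans hqm, h⟩).not_gt hpl)
      (not_lt.1 fun h => (hq_first ⟨hlq.le.trans hqm, h⟩).not_gt hlq)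
  · rintro ⟨i, j⟩ ⟨hij, hjm, hmul, hzero⟩
    dsimp only at hij hjm hmul hzero
    rcases mul_neg_iff.1 hmul with ⟨hi, hj⟩ | ⟨hi, hj⟩
    · have hip : i ≤ p := hp_last ⟨hij.le.trans hjm, hi⟩
      have hqj : q ≤ j := hq_first ⟨hjm, hj⟩
      have hpi : p ≤ i := not_lt.1 fun h => hp.ne' (hzero p h (hpq.trans_le hqj))
      have hjq : j ≤ q := not_lt.1 fun h => hq.ne (hzero q (hip.trans_lt hpq) h)
      rw [hip.antisymm hpi, hjq.antisymm hqj]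
    · exact absurd hj (hle i j hij hjm hi).not_gt

lemma coeff_X_sub_C_mul_eq_toeplitz_sub {R : Type*} [CommRing R] (g : R[X]) (r : R) (k : ℕ) :
    ((X - C r) * g).coeff k = toeplitz g k 1 - r * g.coeff k := by
  simp [toeplitz, sub_mul]

lemma IsTP2.coeff_X_sub_C_mul_nonpos {R : Type*} [CommRing R] [LinearOrder R]
    [IsStrictOrderedRing R] {g : R[X]} (hg : IsTP2 (toeplitz g)) {r : R} (hr : 0 < r) {k l : ℕ}
    (hkl : k < l) (hl : ((X - C r) * g).coeff l < 0) : ((X - C r) * g).coeff k ≤ 0 := by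
  rw [coeff_X_sub_C_mul_eq_toeplitz_sub, sub_neg] at hl
  rw [coeff_X_sub_C_mul_eq_toeplitz_sub, sub_nonpos]
  have hgl : 0 < g.coeff l := pos_of_mul_pos_right ((hg.nonneg l 1).trans_lt hl) hr.le
  have hgk : 0 ≤ g.coeff k := hg.coeff_nonneg k
  refine le_of_mul_le_mul_right ?_ hgl
  calc toeplitz g k 1 * g.coeff l
      ≤ g.coeff k * toeplitz g l 1 := by
        simpa only [toeplitz_zero_right] using hg.minor hkl zero_lt_one
    _ ≤ g.coeff k * (r * g.coeff l) := by gcongr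
    _ = r * g.coeff k * g.coeff l := by ring

lemma signChanges_coeff_X_sub_C_mul {g : ℝ[X]} (hg0 : g ≠ 0) (hg : IsTP2 (toeplitz g)) {r : ℝ}
    (hr : 0 < r) : signChanges (g.natDegree + 1)
      (fun i => ((X - C r) * g).coeff (g.natDegree + 1 - i)) = 1 := by
  refine signChanges_eq_one_of_nonpos_after_neg ⟨0, Nat.zero_le _, ?_⟩
    ⟨g.natDegree + 1 - g.natTrailingDegree, Nat.sub_le _ _, ?_⟩ fun i j hij hj hi =>
      hg.coeff_X_sub_C_mul_nonpos hr (by omega) hi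
  · have hlead : 0 < g.leadingCoeff := (hg.coeff_nonneg _).lt_of_ne' (leadingCoeff_ne_zero.2 hg0)
    rw [Nat.sub_zero, Polynomial.coeff_X_sub_C_mul, coeff_natDegree_succ_eq_zero]
    simpa using hlead
  · have htrail : 0 < g.trailingCoeff :=
      (hg.coeff_nonneg _).lt_of_ne' (trailingCoeff_nonzero_iff_nonzero.2 hg0)
    have hbelow : toeplitz g g.natTrailingDegree 1 = 0 := by
      rw [toeplitz_apply, ite_eq_right_iff]
      exact fun h => coeff_eq_zero_of_lt_natTrailingDegree (Nat.sub_lt h one_pos)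
    rw [Nat.sub_sub_self (g.natTrailingDegree_le_natDegree.trans (Nat.le_succ _)),
      coeff_X_sub_C_mul_eq_toeplitz_sub, hbelow, zero_sub, neg_lt_zero]
    exact mul_pos hr htrail

lemma signChanges_coeff_X_sub_C_mul_of_roots_mem_closedWedge {g : ℝ[X]} (hg0 : g ≠ 0)
    {r : ℝ} (hr : 0 < r) (hroots : ∀ z : ℂ, aeval z g = 0 → z ∈ closedWedge) :
    signChanges (g.natDegree + 1)
      (fun i => ((X - C r) * g).coeff (g.natDegree + 1 - i)) = 1 := by
  obtain ⟨a, h, ha, hmonic, rfl⟩ : ∃ (a : ℝ) (h : ℝ[X]), a ≠ 0 ∧ h.Monic ∧ C a * h = g := by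
    refine ⟨_, _, leadingCoeff_ne_zero.2 hg0, monic_mul_leadingCoeff_inv hg0, ?_⟩
    rw [mul_left_comm, ← C_mul, mul_inv_cancel₀ (leadingCoeff_ne_zero.2 hg0), C_1, mul_one]
  have hTP : IsTP2 (toeplitz h) :=
    isTP2_toeplitz_of_monic_of_roots_mem_closedWedge hmonic fun z hz =>
      hroots z (by rw [map_mul, hz, mul_zero])
  simp only [mul_left_comm _ (C a), coeff_C_mul, signChanges_const_mul _ _ ha, natDegree_C_mul ha]
  exact signChanges_coeff_X_sub_C_mul hmonic.ne_zero hTP hr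

lemma exists_eq_X_sub_C_mul_of_rootMultiplicity_eq_one {R : Type*} [CommRing R] {f : R[X]} {r : R}
    (h : f.rootMultiplicity r = 1) : ∃ g, f = (X - C r) * g ∧ ¬ g.IsRoot r := by
  have hf : f ≠ 0 := by
    rintro rfl
    simp at h
  obtain ⟨g, hfg, hndvd⟩ := exists_eq_pow_rootMultiplicity_mul_and_not_dvd f hf r
  exact ⟨g, by rwa [h, pow_one] at hfg, mt dvd_iff_isRoot.2 hndvd⟩

/-- **Obreschkoff's theorem** (Theorem 1.2).  If a real polynomial `f` of degree `n` has a
simple positive root `r` and all of its other roots lie in the wedge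
`S_{√3} = {-α + iβ : α > 0, |β| ≤ √3·α}`, then the coefficient sequence
`a₀, a₁, …, aₙ` of `f` has precisely one sign change.  (Here `aᵢ` is the coefficient of
`x^{n-i}` in `f`.) -/
theorem obreschkoff_one_sign_change
    (n : ℕ) (f : Polynomial ℝ) (r : ℝ)
    (hf : f ≠ 0) (hdeg : f.natDegree = n)
    (hr : 0 < r)
    (hsimple : (f.map (algebraMap ℝ ℂ)).roots.count (r : ℂ) = 1)
    (hwedge : ∀ z ∈ (f.map (algebraMap ℝ ℂ)).roots, z ≠ (r : ℂ) →
      z.re < 0 ∧ |z.im| ≤ Real.sqrt 3 * (-z.re)) :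
    signChanges n (fun i => f.coeff (n - i)) = 1 := by
  have hmult : f.rootMultiplicity r = 1 := by
    rw [eq_rootMultiplicity_map (algebraMap ℝ ℂ).injective, ← count_roots]
    exact hsimple
  obtain ⟨g, rfl, hgr⟩ := exists_eq_X_sub_C_mul_of_rootMultiplicity_eq_one hmult
  have hg : g ≠ 0 := right_ne_zero_of_mul hf
  have hroots (z : ℂ) (hz : aeval z g = 0) : z ∈ closedWedge := by
    refine (hwedge z ?_ ?_).2
    · rw [mem_roots_map hf, ← aeval_def, map_mul, hz, mul_zero]
    · rintro rfl
      rw [← Complex.coe_algebraMap, aeval_algebraMap_apply, map_eq_zero] at hz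
      exact hgr hz
  obtain rfl : g.natDegree + 1 = n := by
    rw [← hdeg, natDegree_mul (X_sub_C_ne_zero r) hg, natDegree_X_sub_C, add_comm]
  exact signChanges_coeff_X_sub_C_mul_of_roots_mem_closedWedge hg hr hroots
end

section
/- Let ρ ≥ 0 and λ_2, λ_3, ..., λ_n ≤ 0 be real numbers. Then there exists an n×n entrywise nonnegative real matrix whose characteristic polynomial is (x - ρ)·∏_{i=2}^n (x - λ_i) (equivalently, whose spectrum is (ρ, λ_2, ..., λ_n)) if and only if ρ + λ_2 + λ_3 + ... + λ_n ≥ 0. -/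
open Polynomial

/-!
A nonnegative matrix has nonnegative trace, and the trace is minus the second leading coefficient of
the characteristic polynomial; this gives necessity.

For sufficiency, let `d` list the nonpositive `λᵢ` and look for a matrix with all row sums equal to
`ρ`, so that the all-ones vector is an eigenvector for `ρ`, inducing `diagonal d` on the quotient by
this vector. Such a matrix is `diagonal (0, d)` plus a matrix with all rows equal to
`(ρ + ∑ i, d i, -d)`, its first column then corrected to fix the row sums. The diagonal entries off
the corner cancel, and the remaining entries are `ρ + ∑ i, d i`, `ρ + ∑ j, d j - d i` and `-d j`,
so all of them are nonnegative.
-/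

section CommRing

open Matrix

variable {R m n : Type*} [CommRing R] [Fintype m] [DecidableEq m] [Fintype n]

theorem trace_eq_of_charpoly_eq [DecidableEq n] {A : Matrix m m R} {B : Matrix n n R}
    (h : A.charpoly = B.charpoly) : A.trace = B.trace := by
  rw [trace_eq_neg_charpoly_nextCoeff, h, ← trace_eq_neg_charpoly_nextCoeff]

theorem trace_eq_sum_of_charpoly_eq_prod {A : Matrix m m R} {l : n → R}
    (h : A.charpoly = ∏ i, (X - C (l i))) : A.trace = ∑ i, l i := by
  classical
  rw [← trace_diagonal, trace_eq_of_charpoly_eq (h.trans (charpoly_diagonal l).symm)]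

variable [DecidableEq n]

-- The hypothesis says that the graph of `K`, the range of `[1; K]`, is invariant under the block
-- matrix; the two factors come from the restriction to the graph and from the quotient by it.
theorem charpoly_fromBlocks_of_invariant_graph {A : Matrix m m R} {B : Matrix m n R}
    {C : Matrix n m R} {D : Matrix n n R} {K : Matrix n m R}
    (h : C + D * K = K * (A + B * K)) :
    (fromBlocks A B C D).charpoly = (A + B * K).charpoly * (D - K * B).charpoly := by
  let P : Matrix (m ⊕ n) (m ⊕ n) R := fromBlocks 1 0 K 1
  let Q : Matrix (m ⊕ n) (m ⊕ n) R := fromBlocks 1 0 (-K) 1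
  have hPQ : P * Q = 1 := by simp [P, Q, fromBlocks_multiply]
  have hconj : Q * (fromBlocks A B C D * P) = fromBlocks (A + B * K) B 0 (D - K * B) := by
    simp [P, Q, fromBlocks_multiply, h, sub_eq_neg_add]
  rw [← charpoly_fromBlocks_zero₂₁, ← hconj, charpoly_mul_comm, mul_assoc, hPQ, mul_one]

/-- A matrix with spectrum `ρ, d` and all row sums equal to `ρ`, used to realize Suleĭmanova's
spectra. The index `Sum.inl ()` belongs to `ρ`, and `Sum.inr i` to `d i`. -/
def suleimanovaMatrix (ρ : R) (d : n → R) : Matrix (Unit ⊕ n) (Unit ⊕ n) R :=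
  fromBlocks (diagonal fun _ => ρ + ∑ i, d i) (replicateRow Unit (-d))
    (replicateCol Unit fun i => ρ + ∑ j, d j - d i) (diagonal d - replicateRow n d)

theorem charpoly_suleimanovaMatrix (ρ : R) (d : n → R) :
    (suleimanovaMatrix ρ d).charpoly = (X - C ρ) * ∏ i, (X - C (d i)) := by
  let ones : Matrix n Unit R := replicateCol Unit 1
  have hcorner : diagonal (fun _ => ρ + ∑ i, d i) + replicateRow Unit (-d) * ones =
      diagonal fun _ => ρ := by
    ext
    simp [ones, mul_apply]
  have hrow : replicateCol Unit (fun i => ρ + ∑ j, d j - d i) +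
      (diagonal d - replicateRow n d) * ones =
      ones * (diagonal (fun _ => ρ + ∑ i, d i) + replicateRow Unit (-d) * ones) := by
    rw [hcorner]
    ext
    simp [ones, mul_apply, diagonal_apply]
  have hquot : diagonal d - replicateRow n d - ones * replicateRow Unit (-d) = diagonal d := by
    ext
    simp [ones, mul_apply]
  rw [suleimanovaMatrix, charpoly_fromBlocks_of_invariant_graph hrow, hcorner, hquot,
    charpoly_diagonal, charpoly_diagonal, Fintype.prod_unique]

end CommRing

section Ordered

open Matrix

variable {R n : Type*} [CommRing R] [PartialOrder R] [IsOrderedAddMonoid R] [Fintype n]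
  [DecidableEq n]

theorem suleimanovaMatrix_nonneg {ρ : R} {d : n → R} (hd : ∀ i, d i ≤ 0)
    (hsum : 0 ≤ ρ + ∑ i, d i) (i j : Unit ⊕ n) : 0 ≤ suleimanovaMatrix ρ d i j := by
  rcases i with _ | i <;> rcases j with _ | j
  · simpa [suleimanovaMatrix] using hsum
  · simpa [suleimanovaMatrix] using hd j
  · simpa [suleimanovaMatrix] using (hd i).trans hsum
  · obtain rfl | hij := eq_or_ne i j
    · simp [suleimanovaMatrix]
    · simpa [suleimanovaMatrix, hij] using hd j

theorem exists_nonneg_charpoly_eq_prod {l : n → R} {k : n} (hl : ∀ i ≠ k, l i ≤ 0)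
    (hsum : 0 ≤ ∑ i, l i) :
    ∃ A : Matrix n n R, (∀ i j, 0 ≤ A i j) ∧ A.charpoly = ∏ i, (X - C (l i)) := by
  let d : {i // i ≠ k} → R := fun i => l i
  let e : Unit ⊕ {i // i ≠ k} ≃ n := (Equiv.sumComm _ _).trans
    ((Equiv.optionEquivSumPUnit _).symm.trans (Equiv.optionSubtypeNe k))
  rw [Fintype.sum_eq_add_sum_subtype_ne l k] at hsum
  refine ⟨reindex e e (suleimanovaMatrix (l k) d), fun i j => ?_, ?_⟩
  · exact suleimanovaMatrix_nonneg (d := d) (fun i => hl i i.2) hsum (e.symm i) (e.symm j)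
  · rw [charpoly_reindex, charpoly_suleimanovaMatrix, Fintype.prod_eq_mul_prod_subtype_ne _ k]

theorem suleimanova_general (l : n → R) (k : n) (hl : ∀ i ≠ k, l i ≤ 0) :
    (∃ A : Matrix n n R, (∀ i j, 0 ≤ A i j) ∧ A.charpoly = ∏ i, (X - C (l i))) ↔
      0 ≤ ∑ i, l i := by
  refine ⟨?_, exists_nonneg_charpoly_eq_prod hl⟩
  rintro ⟨A, hA, hchar⟩
  rw [← trace_eq_sum_of_charpoly_eq_prod hchar]
  exact Finset.sum_nonneg fun i _ => hA i i

end Ordered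

@[to_additive]
theorem prod_Icc_eq_prod_fin {M : Type*} [CommMonoid M] (f : ℕ → M) (a m : ℕ) :
    ∏ i ∈ Finset.Icc (a + 1) (m + a), f i = ∏ i : Fin m, f (i + (a + 1)) := by
  rw [← Finset.Ico_add_one_right_eq_Icc, add_assoc, Finset.prod_Ico_eq_prod_range,
    Nat.add_sub_cancel, Finset.prod_range]
  simp only [add_comm]

/-- **Suleĭmanova's theorem** (Theorem 1.3).  Let `ρ ≥ 0` and `λ₂, …, λₙ ≤ 0` be real
numbers.  Then `(ρ, λ₂, …, λₙ)` is the spectrum of an `n × n` entrywise nonnegative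
matrix (i.e. there is a nonnegative matrix with characteristic polynomial
`(x - ρ)·∏_{i=2}^n (x - λᵢ)`) if and only if `ρ + λ₂ + ⋯ + λₙ ≥ 0`. -/
theorem suleimanova
    (n : ℕ) (hn : 1 ≤ n) (ρ : ℝ) (hρ : 0 ≤ ρ) (lam : ℕ → ℝ)
    (hlam : ∀ i ∈ Finset.Icc 2 n, lam i ≤ 0) :
    (∃ A : Matrix (Fin n) (Fin n) ℝ, (∀ i j, 0 ≤ A i j) ∧
      A.charpoly = (Polynomial.X - Polynomial.C ρ) *
        ∏ i ∈ Finset.Icc 2 n, (Polynomial.X - Polynomial.C (lam i))) ↔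
    0 ≤ ρ + ∑ i ∈ Finset.Icc 2 n, lam i := by
  obtain ⟨m, rfl⟩ := Nat.exists_eq_add_of_le' hn
  have key := suleimanova_general (Fin.cons ρ fun i : Fin m => lam (i + 2)) 0 fun i hi => by
    obtain ⟨j, rfl⟩ := Fin.exists_succ_eq.2 hi
    exact hlam _ (Finset.mem_Icc.2 ⟨by simp, by lia⟩)
  rw [prod_Icc_eq_prod_fin, sum_Icc_eq_sum_fin]
  simpa [Fin.prod_univ_succ, Fin.sum_univ_succ] using key
end
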